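/- arXiv:2505.04920 — 10 statements merged into one kernel-verified Lean document; each statement's English description precedes it below -/
import Mathlib

section
/- For every integer n ≥ 1, the 3-Sudoku number of the path P_n on n vertices equals ⌈(n+1)/2⌉, i.e. sn(P_n, 3) = ⌈(n+1)/2⌉. -/
open SimpleGraph

/-- The `k`-Sudoku number `sn(G,k)`: the least cardinality of a set `S` of vertices of `G`
admitting a partial proper `k`-coloring that extends uniquely to a proper `k`-coloring of `G`. -/
noncomputable def sudokuNumber {V : Type*} [Fintype V] (G : SimpleGraph V) (k : ℕ) : ℕ :=
  sInf {m | ∃ S : Finset V, S.card = m ∧ ∃ C0 : V → Fin k,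
    ∃! C : G.Coloring (Fin k), ∀ v ∈ S, C v = C0 v}

/-!
Lower bound. Let `C` be the only 3-coloring of the path agreeing with the clues on `S`. A vertex
outside `S` cannot be recolored on its own, so both other colors occur on its neighbors
(`exists_adj_of_unique`); in particular it has two neighbors, so the ends of the path lie in `S`.
If two consecutive vertices `i`, `i + 1` were both outside `S`, the colors along
`i - 1, i, i + 1, i + 2` would have to be `a, b, c, a` with `a, b, c` distinct, and exchanging `b`
and `c` would give a second extension (`succ_mem_of_unique`). Hence `i ↦ i + 1` injects the
complement of `S` into `S` and misses the first vertex, so `n - |S| + 1 ≤ |S|`.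

Upper bound. Color vertex `i` by `i mod 3` and give the even vertices and the last vertex as clues.
Every remaining vertex has two neighbors with distinct prescribed colors, so its color is forced.
-/

/-- If `C` is the only coloring with its restriction to `S`, a vertex outside `S` sees every color
other than its own: otherwise it could be recolored. -/
theorem exists_adj_of_unique {V : Type*} {k : ℕ} {G : SimpleGraph V} {S : Finset V}
    (C : G.Coloring (Fin k)) (h : ∀ D : G.Coloring (Fin k), (∀ v ∈ S, D v = C v) → D = C)
    {i : V} (hi : i ∉ S) {x : Fin k} (hx : x ≠ C i) : ∃ w, G.Adj i w ∧ C w = x := by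
  classical
  by_contra! hn
  let D : G.Coloring (Fin k) := Coloring.mk (fun v => if v = i then x else C v) (by
    intro u v huv
    have hC := C.valid huv
    have hne := huv.ne
    by_cases h1 : u = i
    · subst h1
      simpa [hne.symm] using (hn v huv).symm
    · by_cases h2 : v = i
      · subst h2
        simpa [hne] using hn u huv.symm
      · simpa [h1, h2] using hC)
  have hD : D = C := h D fun v hv => by
    have : v ≠ i := fun e => hi (e ▸ hv)
    change (if v = i then x else C v) = C v
    simp [this]
  apply hx
  rw [← hD]
  change x = if i = i then x else C i
  simp

/-- A vertex of the path without a clue is not the first one, and it is followed by a vertex with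
a clue. -/
theorem succ_mem_of_unique {n : ℕ} {S : Finset (Fin n)}
    (C : (pathGraph n).Coloring (Fin 3))
    (h : ∀ D : (pathGraph n).Coloring (Fin 3), (∀ v ∈ S, D v = C v) → D = C)
    {i : Fin n} (hi : i ∉ S) : 0 < i.val ∧ ∃ hlt : i.val + 1 < n, (⟨i + 1, hlt⟩ : Fin n) ∈ S := by
  -- A vertex outside `S` has neighbors of two different colors, hence on both sides.
  have key : ∀ j : Fin n, j ∉ S → ∃ p q : Fin n, p.val + 1 = j ∧ j.val + 1 = q ∧ C p ≠ C q := by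
    intro j hj
    obtain ⟨x, y, hx, hy, hxy⟩ : ∃ x y : Fin 3, x ≠ C j ∧ y ≠ C j ∧ x ≠ y := by
      generalize C j = c
      revert c
      decide
    obtain ⟨w, hw, rfl⟩ := exists_adj_of_unique C h hj hx
    obtain ⟨z, hz, rfl⟩ := exists_adj_of_unique C h hj hy
    rw [pathGraph_adj] at hw hz
    have hne : w.val ≠ z.val := fun e => hxy (congrArg C (Fin.ext e))
    rcases hw with hw | hw <;> rcases hz with hz | hz
    · omega
    · exact ⟨z, w, hz, hw, hxy.symm⟩
    · exact ⟨w, z, hw, hz, hxy⟩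
    · omega
  obtain ⟨p, q, hp, hq, hpq⟩ := key i hi
  refine ⟨by omega, by omega, ?_⟩
  have hq' : (⟨i + 1, by omega⟩ : Fin n) = q := Fin.ext hq
  rw [hq']
  by_contra hqS
  obtain ⟨p', r, hp', hr, hir⟩ := key q hqS
  obtain rfl : p' = i := Fin.ext (by omega)
  have adj : ∀ u v : Fin n, u.val + 1 = v → C u ≠ C v :=
    fun u v huv => C.valid (pathGraph_adj.2 (Or.inl huv))
  -- The colors on `p, i, q, r` are `a, b, c, a`, so exchanging those of `i` and `q` stays proper.
  have step : ∀ u v : Fin n, u.val + 1 = v →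
      C (Equiv.swap p' q u) ≠ C (Equiv.swap p' q v) := by
    intro u v huv
    by_cases h1 : u = p'
    · subst h1
      obtain rfl : v = q := Fin.ext (by omega)
      simpa using (adj _ _ huv).symm
    by_cases h2 : v = p'
    · subst h2
      obtain rfl : u = p := Fin.ext (by omega)
      rw [Equiv.swap_apply_left, Equiv.swap_apply_of_ne_of_ne h1 (by rintro rfl; omega)]
      exact hpq
    by_cases h3 : u = q
    · subst h3
      obtain rfl : v = r := Fin.ext (by omega)
      rw [Equiv.swap_apply_right, Equiv.swap_apply_of_ne_of_ne h2 (by rintro rfl; omega)]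
      exact hir
    have h4 : v ≠ q := by
      rintro rfl
      exact h1 (Fin.ext (by omega))
    rw [Equiv.swap_apply_of_ne_of_ne h1 h3, Equiv.swap_apply_of_ne_of_ne h2 h4]
    exact adj u v huv
  let D : (pathGraph n).Coloring (Fin 3) := Coloring.mk (fun v => C (Equiv.swap p' q v)) (by
    intro u v huv
    rcases pathGraph_adj.1 huv with huv | huv
    · exact step u v huv
    · exact (step v u huv).symm)
  have hD : D = C := h D fun v hv => by
    change C (Equiv.swap p' q v) = C v
    have h1 : v ≠ p' := fun e => hi (e ▸ hv)
    have h2 : v ≠ q := fun e => hqS (e ▸ hv)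
    rw [Equiv.swap_apply_of_ne_of_ne h1 h2]
  have hDi : D p' = C q := congrArg C (Equiv.swap_apply_left p' q)
  rw [hD] at hDi
  exact adj _ _ hq hDi

theorem card_lower_bound {n : ℕ} (hn : 1 ≤ n) {S : Finset (Fin n)}
    (C : (pathGraph n).Coloring (Fin 3))
    (h : ∀ D : (pathGraph n).Coloring (Fin 3), (∀ v ∈ S, D v = C v) → D = C) :
    (n + 2) / 2 ≤ S.card := by
  have hz : (⟨0, hn⟩ : Fin n) ∈ S := by
    by_contra h0
    exact absurd (succ_mem_of_unique C h h0).1 (lt_irrefl 0)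
  have hle : Sᶜ.card ≤ (S.erase ⟨0, hn⟩).card := by
    -- The value `0` taken when `i + 1 = n` is irrelevant, since such an `i` lies in `S`.
    refine Finset.card_le_card_of_injOn
      (fun i => if hlt : i.val + 1 < n then ⟨i + 1, hlt⟩ else ⟨0, hn⟩) ?_ ?_
    · intro i hi
      obtain ⟨_, hlt, hmem⟩ := succ_mem_of_unique C h (Finset.mem_compl.1 hi)
      simp [hlt, hmem]
    · intro i hi j hj hij
      obtain ⟨_, hlt, _⟩ := succ_mem_of_unique C h (Finset.mem_compl.1 hi)
      obtain ⟨_, hlt', _⟩ := succ_mem_of_unique C h (Finset.mem_compl.1 hj)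
      simp only [hlt, hlt', dif_pos, Fin.mk.injEq] at hij
      exact Fin.ext (by omega)
  rw [Finset.card_compl, Fintype.card_fin, Finset.card_erase_of_mem hz] at hle
  have : 0 < S.card := Finset.card_pos.2 ⟨_, hz⟩
  omega

/-- The coloring of the path sending vertex `i` to `i mod 3`. -/
def modThreeColoring (n : ℕ) : (pathGraph n).Coloring (Fin 3) :=
  Coloring.mk (fun i => ⟨i.val % 3, Nat.mod_lt _ (by omega)⟩) (by
    intro u v huv e
    rw [pathGraph_adj] at huv
    have := congrArg Fin.val e
    dsimp only at this
    omega)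

theorem exists_sudoku {n : ℕ} (hn : 1 ≤ n) :
    ∃ S : Finset (Fin n), S.card = (n + 2) / 2 ∧ ∃ C0 : Fin n → Fin 3,
      ∃! C : (pathGraph n).Coloring (Fin 3), ∀ v ∈ S, C v = C0 v := by
  classical
  -- `j ↦ min (2 * j) (n - 1)` enumerates the even vertices and the last vertex without repetition.
  let f : Fin ((n + 2) / 2) → Fin n := fun j => ⟨min (2 * j) (n - 1), by omega⟩
  have hf : Function.Injective f := by
    intro a b hab
    have := congrArg Fin.val hab
    simp only [f] at this
    exact Fin.ext (by omega)
  refine ⟨Finset.univ.image f, by simp [Finset.card_image_of_injective _ hf],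
    modThreeColoring n, modThreeColoring n, fun _ _ => rfl, ?_⟩
  intro D hD
  have hval : ∀ v : Fin n, (v.val % 2 = 0 ∨ v.val + 1 = n) → (D v).val = v.val % 3 := by
    intro v hv
    have hmem : v ∈ Finset.univ.image f := by
      refine Finset.mem_image.2 ⟨⟨(v.val + 1) / 2, by omega⟩, Finset.mem_univ _, ?_⟩
      exact Fin.ext (by simp only [f]; omega)
    exact congrArg Fin.val (hD v hmem)
  have hadj : ∀ u v : Fin n, u.val + 1 = v → (D u).val ≠ (D v).val :=
    fun u v huv e => D.valid (pathGraph_adj.2 (Or.inl huv)) (Fin.ext e)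
  refine DFunLike.ext _ _ fun v => Fin.ext ?_
  change (D v).val = v.val % 3
  by_cases hv : v.val % 2 = 0 ∨ v.val + 1 = n
  · exact hval v hv
  · -- An interior odd vertex avoids the colors `v - 1` and `v + 1` modulo `3`.
    have h1 := hval ⟨v - 1, by omega⟩ (Or.inl (by dsimp only; omega))
    have h2 := hval ⟨v + 1, by omega⟩ (Or.inl (by dsimp only; omega))
    have h3 := hadj ⟨v - 1, by omega⟩ v (by dsimp only; omega)
    have h4 := hadj v ⟨v + 1, by omega⟩ rfl
    have h5 := (D v).isLt
    dsimp only at h1 h2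
    omega

/-- For every integer `n ≥ 1`, `sn(P_n, 3) = ⌈(n+1)/2⌉`. -/
theorem sudokuNumber_pathGraph_three (n : ℕ) (hn : 1 ≤ n) :
    sudokuNumber (pathGraph n) 3 = (n + 2) / 2 := by
  refine IsLeast.csInf_eq ⟨exists_sudoku hn, ?_⟩
  rintro m ⟨S, rfl, C0, C, hC, hu⟩
  exact card_lower_bound hn C fun D hD => hu D fun v hv => (hD v hv).trans (hC v hv)
end

section
/- For every integer n ≥ 2, the 3-Sudoku number of the even cycle C_{2n} on 2n vertices equals n, i.e. sn(C_{2n}, 3) = n. -/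
/-!
Lower bound: if a proper 3-coloring `C` of a cycle is determined by its restriction to `S`, then no
two adjacent vertices `u`, `u + 1` lie outside `S`. Indeed, a vertex outside `S` has two neighbours
of different colors, since otherwise it could be recolored alone; so if `u` and `u + 1` both lie
outside `S`, their outer neighbours `u - 1` and `u + 2` both carry the third color, and exchanging
the colors of `u` and `u + 1` gives another proper coloring (`succ_mem_of_unique`). Hence
`v ↦ v + 1` injects the complement of `S` into `S`, and `2 * n ≤ 2 * |S|`.

Upper bound: color the `n` vertices of even index so that cyclically consecutive ones differ, which
is possible with three colors. Each vertex of odd index then sees two distinct colors, and the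
third one is forced on it.
-/

open SimpleGraph

theorem cycleGraph_adj_iff_succ {m : ℕ} (u v : Fin (m + 4)) :
    (cycleGraph (m + 4)).Adj u v ↔ u = v + 1 ∨ v = u + 1 := by
  rw [cycleGraph_adj, sub_eq_iff_eq_add', sub_eq_iff_eq_add']

/-- Otherwise `u` could be given the third color, keeping all the other colors. -/
theorem ne_of_unique {m : ℕ} {S : Finset (Fin (m + 4))}
    {C : (cycleGraph (m + 4)).Coloring (Fin 3)}
    (hC : ∀ D : (cycleGraph (m + 4)).Coloring (Fin 3), (∀ v ∈ S, D v = C v) → D = C)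
    {a u b : Fin (m + 4)} (hau : u = a + 1) (hub : b = u + 1) (hu : u ∉ S) : C a ≠ C b := by
  intro hab
  obtain ⟨w, hw1, hw2⟩ : ∃ w : Fin 3, w ≠ C u ∧ w ≠ C a := by
    generalize C u = x
    generalize C a = y
    revert x y
    decide
  have hproper : ∀ x y, (cycleGraph (m + 4)).Adj x y →
      Function.update C u w x ≠ Function.update C u w y := by
    intro x y hxy
    have hne := hxy.ne
    have hCxy := C.valid hxy
    rw [cycleGraph_adj_iff_succ] at hxy
    have inj : ∀ p q : Fin (m + 4), p + 1 = q + 1 → p = q := fun p q h => add_right_cancel h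
    simp only [Function.update_apply]
    grind
  have h := hC (Coloring.mk (Function.update C u w) (fun {x y} => hproper x y)) (by
    intro v hv
    have : v ≠ u := by rintro rfl; exact hu hv
    exact Function.update_of_ne this _ _)
  have h2 : Function.update C u w u = C u := DFunLike.congr_fun h u
  rw [Function.update_self] at h2
  exact hw1 h2

/-- Otherwise the colors of `u` and `u + 1` could be exchanged, because both outer neighbours
carry the third color. -/
theorem succ_mem_of_unique_s1 {m : ℕ} {S : Finset (Fin (m + 4))}
    {C : (cycleGraph (m + 4)).Coloring (Fin 3)}
    (hC : ∀ D : (cycleGraph (m + 4)).Coloring (Fin 3), (∀ v ∈ S, D v = C v) → D = C)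
    {u : Fin (m + 4)} (hu : u ∉ S) : u + 1 ∈ S := by
  by_contra hv
  have h1 : C (u - 1) ≠ C (u + 1) := ne_of_unique hC (sub_add_cancel u 1).symm rfl hu
  have h2 : C u ≠ C (u + 1 + 1) := ne_of_unique hC rfl rfl hv
  have hproper : ∀ x y, (cycleGraph (m + 4)).Adj x y →
      C (Equiv.swap u (u + 1) x) ≠ C (Equiv.swap u (u + 1) y) := by
    intro x y hxy
    have hne := hxy.ne
    have hCxy := C.valid hxy
    rw [cycleGraph_adj_iff_succ] at hxy
    have inj : ∀ p q : Fin (m + 4), p + 1 = q + 1 → p = q := fun p q h => add_right_cancel h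
    have hs : u - 1 + 1 = u := sub_add_cancel u 1
    simp only [Equiv.swap_apply_def]
    grind
  have h := hC (Coloring.mk (fun x => C (Equiv.swap u (u + 1) x)) (fun {x y} => hproper x y)) (by
    intro w hw
    have hwu : w ≠ u := by rintro rfl; exact hu hw
    have hwv : w ≠ u + 1 := by rintro rfl; exact hv hw
    change C (Equiv.swap u (u + 1) w) = C w
    rw [Equiv.swap_apply_of_ne_of_ne hwu hwv])
  have h3 : C (Equiv.swap u (u + 1) u) = C u := DFunLike.congr_fun h u
  rw [Equiv.swap_apply_left] at h3
  exact C.valid ((cycleGraph_adj_iff_succ u (u + 1)).2 (Or.inr rfl)) h3.symm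

theorem card_le_of_unique {m : ℕ} {S : Finset (Fin (m + 4))}
    {C : (cycleGraph (m + 4)).Coloring (Fin 3)}
    (hC : ∀ D : (cycleGraph (m + 4)).Coloring (Fin 3), (∀ v ∈ S, D v = C v) → D = C) :
    m + 4 ≤ 2 * S.card := by
  have h : Sᶜ.card ≤ S.card := Finset.card_le_card_of_injOn (· + 1)
    (fun v hv => succ_mem_of_unique_s1 hC (by simpa using hv))
    (fun p _ q _ h => add_right_cancel h)
  rw [Finset.card_compl, Fintype.card_fin] at h
  omega

/-- A proper 3-coloring of `C_{2n}`, as a function of the index. The vertices `0, 2, ..., 2n - 2`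
get the colors `0, 1, 0, 1, ...`, except that the last one gets `2`; a vertex of odd index gets
the color missing from its two neighbours. -/
def evenCycleColor (n v : ℕ) : ℕ :=
  if v % 2 = 0 then (if v = 2 * n - 2 then 2 else v / 2 % 2)
  else if v = 2 * n - 1 then 1 else if v = 2 * n - 3 then (n - 1) % 2 else 2

theorem evenCycleColor_lt (n v : ℕ) : evenCycleColor n v < 3 := by
  unfold evenCycleColor
  split_ifs <;> omega

theorem val_succ_cases {m : ℕ} (v : Fin (m + 4)) :
    (v.val = m + 3 ∧ (v + 1).val = 0) ∨ (v.val < m + 3 ∧ (v + 1).val = v.val + 1) := by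
  have := v.isLt
  rw [Fin.val_add_one]
  split_ifs with h
  · left; simp [h]
  · right
    have : v.val ≠ m + 3 := fun h' => h (Fin.ext h')
    omega

theorem evenCycleColor_succ_ne {n m : ℕ} (h : 2 * n = m + 4) (v : Fin (m + 4)) :
    evenCycleColor n v.val ≠ evenCycleColor n (v + 1).val := by
  have := v.isLt
  unfold evenCycleColor
  rcases val_succ_cases v with ⟨h1, h2⟩ | ⟨h1, h2⟩ <;> rw [h2] <;> split_ifs <;> omega

/-- The two neighbours `v` and `v + 2` of an odd-indexed vertex have different colors, so the
color of that vertex is forced. -/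
theorem evenCycleColor_succ_succ_ne {n m : ℕ} (h : 2 * n = m + 4) (v : Fin (m + 4))
    (hv : v.val % 2 = 0) :
    evenCycleColor n v.val ≠ evenCycleColor n (v + 1 + 1).val := by
  have := v.isLt
  unfold evenCycleColor
  rcases val_succ_cases v with ⟨h1, h2⟩ | ⟨h1, h2⟩ <;>
  rcases val_succ_cases (v + 1) with ⟨h3, h4⟩ | ⟨h3, h4⟩ <;> rw [h4] <;> split_ifs <;> omega

theorem exists_sudoku_set {n m : ℕ} (h : 2 * n = m + 4) :
    ∃ S : Finset (Fin (m + 4)), S.card = n ∧ ∃ C0 : Fin (m + 4) → Fin 3,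
      ∃! C : (cycleGraph (m + 4)).Coloring (Fin 3), ∀ v ∈ S, C v = C0 v := by
  let f : Fin (m + 4) → Fin 3 := fun v => ⟨evenCycleColor n v.val, evenCycleColor_lt n v.val⟩
  have hf : ∀ v, f v ≠ f (v + 1) := fun v hv =>
    evenCycleColor_succ_ne h v (congrArg Fin.val hv)
  let g : Fin n → Fin (m + 4) := fun i => ⟨2 * i.val, by have := i.isLt; omega⟩
  have hg : Function.Injective g := by
    intro i j hij
    have : 2 * i.val = 2 * j.val := congrArg Fin.val hij
    exact Fin.ext (by omega)
  refine ⟨Finset.univ.image g, by rw [Finset.card_image_of_injective _ hg]; simp, f,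
    Coloring.mk f ?_, ?_, ?_⟩
  · intro x y hxy
    rcases (cycleGraph_adj_iff_succ x y).1 hxy with rfl | rfl
    · exact (hf _).symm
    · exact hf _
  · intro v _
    rfl
  · intro D hD
    have heven : ∀ v : Fin (m + 4), v.val % 2 = 0 → D v = f v := by
      intro v hv
      refine hD v (Finset.mem_image.2 ⟨⟨v.val / 2, by have := v.isLt; omega⟩,
        Finset.mem_univ _, Fin.ext ?_⟩)
      change 2 * (v.val / 2) = v.val
      omega
    have hsucc : ∀ v, D v ≠ D (v + 1) := fun v =>
      D.valid ((cycleGraph_adj_iff_succ v (v + 1)).2 (Or.inr rfl))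
    refine DFunLike.ext _ _ fun v => ?_
    change D v = f v
    by_cases hv : v.val % 2 = 0
    · exact heven v hv
    · obtain ⟨u, rfl⟩ : ∃ u, v = u + 1 := ⟨v - 1, (sub_add_cancel v 1).symm⟩
      have e0 : u.val % 2 = 0 := by
        rcases val_succ_cases u with ⟨_, _⟩ | ⟨_, _⟩ <;> omega
      have e2 : (u + 1 + 1).val % 2 = 0 := by
        rcases val_succ_cases (u + 1) with ⟨_, _⟩ | ⟨_, _⟩ <;> omega
      have hne : f u ≠ f (u + 1 + 1) := fun h' =>
        evenCycleColor_succ_succ_ne h u e0 (congrArg Fin.val h')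
      have d1 := hsucc u
      have d2 := hsucc (u + 1)
      rw [heven u e0] at d1
      rw [heven _ e2] at d2
      have f1 := hf u
      have f2 := hf (u + 1)
      have third : ∀ a b x y : Fin 3, a ≠ b → a ≠ x → x ≠ b → a ≠ y → y ≠ b → x = y := by
        decide
      exact third _ _ _ _ hne d1 d2 f1 f2

/-- For every integer `n ≥ 2`, `sn(C_{2n}, 3) = n`. -/
theorem sudokuNumber_cycleGraph_even_three (n : ℕ) (hn : 2 ≤ n) :
    sudokuNumber (cycleGraph (2 * n)) 3 = n := by
  obtain ⟨m, h⟩ : ∃ m, 2 * n = m + 4 := ⟨2 * n - 4, by omega⟩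
  rw [h]
  refine le_antisymm (Nat.sInf_le (exists_sudoku_set h)) (le_csInf ⟨n, exists_sudoku_set h⟩ ?_)
  rintro _ ⟨S, rfl, C0, C, hC, huniq⟩
  have := card_le_of_unique (S := S) (C := C) fun D hD =>
    huniq D fun v hv => (hD v hv).trans (hC v hv)
  omega
end

section
/- For every integer n ≥ 2, the 3-Sudoku number of the star K_{1,n} equals n, i.e. sn(K_{1,n}, 3) = n. -/
/-! A partial coloring with a unique extension must color every leaf: an uncolored leaf has the
center as its only neighbor, so with three colors it can always be recolored. Hence at least `n`
vertices are given. Conversely, giving all leaves and using two distinct colors on them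
(possible as `n ≥ 2`) forces the color of the center. -/

open SimpleGraph

/-- The coloring of the star with center colored `a` and leaves colored by `f`. -/
def starColoring {n : ℕ} (a : Fin 3) (f : Fin n → Fin 3) (h : ∀ j, f j ≠ a) :
    (completeBipartiteGraph (Fin 1) (Fin n)).Coloring (Fin 3) :=
  SimpleGraph.Coloring.mk (Sum.elim (fun _ => a) f) (by
    rintro (i | i) (j | j) hij
    · simp at hij
    · simpa using (h j).symm
    · simpa using h i
    · simp at hij)

lemma center_ne_leaf {n : ℕ} (C : (completeBipartiteGraph (Fin 1) (Fin n)).Coloring (Fin 3))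
    (j : Fin n) : C (Sum.inr j) ≠ C (Sum.inl 0) :=
  C.valid (by simp)

lemma leaf_mem_of_unique {n : ℕ} {S : Finset (Fin 1 ⊕ Fin n)} {C0 : Fin 1 ⊕ Fin n → Fin 3}
    (h : ∃! C : (completeBipartiteGraph (Fin 1) (Fin n)).Coloring (Fin 3), ∀ v ∈ S, C v = C0 v)
    (j : Fin n) : Sum.inr j ∈ S := by
  by_contra hj
  obtain ⟨C, hC, hu⟩ := h
  -- Recolor the leaf `j` with the third color.
  obtain ⟨c, hc1, hc2⟩ : ∃ c : Fin 3, c ≠ C (Sum.inl 0) ∧ c ≠ C (Sum.inr j) := by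
    generalize C (Sum.inl 0) = a
    generalize C (Sum.inr j) = b
    revert a b
    decide
  have hD : ∀ i, Function.update (fun i => C (Sum.inr i)) j c i ≠ C (Sum.inl 0) := by
    intro i
    by_cases hi : i = j
    · subst hi; simpa using hc1
    · simpa [hi] using center_ne_leaf C i
  have key := hu (starColoring _ _ hD) (by
    rintro (i | i) hv
    · rw [← hC _ hv, Subsingleton.elim i 0]
      rfl
    · have hi : i ≠ j := by rintro rfl; exact hj hv
      rw [← hC _ hv]
      exact Function.update_of_ne hi c (fun i => C (Sum.inr i)))
  apply hc2
  rw [← key]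
  exact (Function.update_self j c (fun i => C (Sum.inr i))).symm

/-- For every integer `n ≥ 2`, `sn(K_{1,n}, 3) = n`. -/
theorem sudokuNumber_star_three (n : ℕ) (hn : 2 ≤ n) :
    sudokuNumber (completeBipartiteGraph (Fin 1) (Fin n)) 3 = n := by
  refine IsLeast.csInf_eq ⟨?_, ?_⟩
  · -- The first leaf gets color `1`, all others color `2`.
    let f : Fin n → Fin 3 := fun j => if j.val = 0 then 1 else 2
    have hf : ∀ j, f j ≠ 0 := by intro j; dsimp only [f]; split_ifs <;> decide
    refine ⟨Finset.univ.map Function.Embedding.inr, by simp, Sum.elim (fun _ => 0) f,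
      starColoring 0 f hf, ?_, ?_⟩
    · intro v _
      rfl
    · intro C hC
      have hleaf : ∀ j, C (Sum.inr j) = f j := fun j => hC _ (by simp)
      have h1 : (1 : Fin 3) ≠ C (Sum.inl 0) := by
        simpa [hleaf, f] using center_ne_leaf C ⟨0, by omega⟩
      have h2 : (2 : Fin 3) ≠ C (Sum.inl 0) := by
        simpa [hleaf, f] using center_ne_leaf C ⟨1, by omega⟩
      have h0 : C (Sum.inl 0) = 0 := by
        revert h1 h2
        generalize C (Sum.inl 0) = a
        revert a
        decide
      refine DFunLike.ext _ _ ?_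
      rintro (i | i)
      · rw [Subsingleton.elim i 0]
        exact h0
      · exact hleaf i
  · rintro m ⟨S, rfl, C0, h⟩
    have hsub : Finset.univ.map (Function.Embedding.inr : Fin n ↪ Fin 1 ⊕ Fin n) ⊆ S := by
      intro v hv
      obtain ⟨j, -, rfl⟩ := Finset.mem_map.1 hv
      exact leaf_mem_of_unique h j
    simpa using Finset.card_le_card hsub
end

section
/- For all integers m, n ≥ 1 with (m,n) ≠ (1,1), the 3-Sudoku number of the bistar B_{m,n} equals m + n, i.e. sn(B_{m,n}, 3) = m + n; moreover sn(B_{1,1}, 3) = 3. -/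
/-!
With three colors, a leaf outside `S` can always be recolored: only its center constrains it, so
besides its current color a second one is available. Hence a Sudoku set contains every leaf, and
`sn(B_{m,n}, 3) ≥ m + n` (`leaf_mem`, `le_card`).

Conversely, precolor exactly the leaves. If one center has at least two leaves, color these leaves
with exactly two colors, which forces the color of that center; giving all the leaves at the other
center one of those two colors leaves that center only the remaining one (`leaves_sudoku`).

For `m = n = 1` the bistar is a path on four vertices, and every coloring of its two ends that
extends at all extends in at least two ways; so a third vertex is needed, and three suffice.
-/

open SimpleGraph

/-- The bistar `B_{m,n}`: two adjacent centers, one with `m` pendant leaves and one with `n`. -/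
def bistar (m n : ℕ) : SimpleGraph (Option (Fin m) ⊕ Option (Fin n)) :=
  SimpleGraph.fromRel (fun a b =>
    (a = Sum.inl none ∧ b = Sum.inr none) ∨
    (∃ i, a = Sum.inl none ∧ b = Sum.inl (some i)) ∨
    (∃ j, a = Sum.inr none ∧ b = Sum.inr (some j)))

/-- A proper 3-coloring of the bistar, from the colors `u`, `v` of the centers and the colors
`f`, `g` of the leaves. -/
def bistarColoring {m n : ℕ} (u v : Fin 3) (f : Fin m → Fin 3) (g : Fin n → Fin 3)
    (huv : u ≠ v) (hf : ∀ i, u ≠ f i) (hg : ∀ j, v ≠ g j) : (bistar m n).Coloring (Fin 3) :=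
  SimpleGraph.Coloring.mk (Sum.elim (fun o => o.elim u f) (fun o => o.elim v g)) (by
    rintro a b hab
    rw [bistar, SimpleGraph.fromRel_adj] at hab
    rcases hab.2 with (⟨rfl, rfl⟩ | ⟨i, rfl, rfl⟩ | ⟨i, rfl, rfl⟩) |
      (⟨rfl, rfl⟩ | ⟨i, rfl, rfl⟩ | ⟨i, rfl, rfl⟩)
    · exact huv
    · exact hf i
    · exact hg i
    · exact huv.symm
    · exact (hf i).symm
    · exact (hg i).symm)

lemma coloring_center {m n : ℕ} (C : (bistar m n).Coloring (Fin 3)) :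
    C (Sum.inl none) ≠ C (Sum.inr none) :=
  C.valid (by simp [bistar])

lemma coloring_left {m n : ℕ} (C : (bistar m n).Coloring (Fin 3)) (i : Fin m) :
    C (Sum.inl none) ≠ C (Sum.inl (some i)) :=
  C.valid (by simp [bistar])

lemma coloring_right {m n : ℕ} (C : (bistar m n).Coloring (Fin 3)) (j : Fin n) :
    C (Sum.inr none) ≠ C (Sum.inr (some j)) :=
  C.valid (by simp [bistar])

/-- The inclusion of the leaves into the vertices of the bistar. -/
def leafEmb (m n : ℕ) : Fin m ⊕ Fin n ↪ Option (Fin m) ⊕ Option (Fin n) :=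
  Function.Embedding.sumMap Function.Embedding.some Function.Embedding.some

/-- A Sudoku set contains every leaf, since a leaf outside it could be recolored. -/
lemma leaf_mem {m n : ℕ} {S : Finset (Option (Fin m) ⊕ Option (Fin n))}
    {C0 : Option (Fin m) ⊕ Option (Fin n) → Fin 3}
    (h : ∃! C : (bistar m n).Coloring (Fin 3), ∀ v ∈ S, C v = C0 v) (x : Fin m ⊕ Fin n) :
    leafEmb m n x ∈ S := by
  obtain ⟨C, hC, huniq⟩ := h
  have key : ∀ a b : Fin 3, ∃ c, a ≠ c ∧ c ≠ b := by decide
  by_contra hx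
  rcases x with i | j
  · obtain ⟨c, hc1, hc2⟩ := key (C (Sum.inl none)) (C (Sum.inl (some i)))
    have := huniq (bistarColoring (C (Sum.inl none)) (C (Sum.inr none))
      (Function.update (fun i => C (Sum.inl (some i))) i c) (fun j => C (Sum.inr (some j)))
      (coloring_center C)
      (fun k => by
        by_cases hk : k = i
        · subst hk; simpa using hc1
        · simpa [hk] using coloring_left C k)
      (coloring_right C))
      (by
        rintro ((_ | k) | (_ | k)) hv
        · exact hC _ hv
        · have hk : k ≠ i := by rintro rfl; exact hx hv
          exact (Function.update_of_ne (β := fun _ => Fin 3) hk c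
            (fun i => C (Sum.inl (some i)))).trans (hC _ hv)
        · exact hC _ hv
        · exact hC _ hv)
    apply hc2
    rw [← this]
    exact (Function.update_self (β := fun _ => Fin 3) i c
      (fun i => C (Sum.inl (some i)))).symm
  · obtain ⟨c, hc1, hc2⟩ := key (C (Sum.inr none)) (C (Sum.inr (some j)))
    have := huniq (bistarColoring (C (Sum.inl none)) (C (Sum.inr none))
      (fun i => C (Sum.inl (some i))) (Function.update (fun j => C (Sum.inr (some j))) j c)
      (coloring_center C) (coloring_left C)
      (fun k => by
        by_cases hk : k = j
        · subst hk; simpa using hc1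
        · simpa [hk] using coloring_right C k))
      (by
        rintro ((_ | k) | (_ | k)) hv
        · exact hC _ hv
        · exact hC _ hv
        · exact hC _ hv
        · have hk : k ≠ j := by rintro rfl; exact hx hv
          exact (Function.update_of_ne (β := fun _ => Fin 3) hk c
            (fun j => C (Sum.inr (some j)))).trans (hC _ hv))
    apply hc2
    rw [← this]
    exact (Function.update_self (β := fun _ => Fin 3) j c
      (fun j => C (Sum.inr (some j)))).symm

lemma leaves_card (m n : ℕ) : (Finset.univ.map (leafEmb m n)).card = m + n := by simp

lemma leaves_subset {m n : ℕ} {S : Finset (Option (Fin m) ⊕ Option (Fin n))}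
    {C0 : Option (Fin m) ⊕ Option (Fin n) → Fin 3}
    (h : ∃! C : (bistar m n).Coloring (Fin 3), ∀ v ∈ S, C v = C0 v) :
    Finset.univ.map (leafEmb m n) ⊆ S := by
  intro v hv
  obtain ⟨x, -, rfl⟩ := Finset.mem_map.1 hv
  exact leaf_mem h x

lemma le_card {m n : ℕ} {S : Finset (Option (Fin m) ⊕ Option (Fin n))}
    {C0 : Option (Fin m) ⊕ Option (Fin n) → Fin 3}
    (h : ∃! C : (bistar m n).Coloring (Fin 3), ∀ v ∈ S, C v = C0 v) : m + n ≤ S.card := by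
  rw [← leaves_card m n]
  exact Finset.card_le_card (leaves_subset h)

lemma coloring_ext {m n : ℕ} {C D : (bistar m n).Coloring (Fin 3)}
    (hu : C (Sum.inl none) = D (Sum.inl none)) (hv : C (Sum.inr none) = D (Sum.inr none))
    (hf : ∀ i, C (Sum.inl (some i)) = D (Sum.inl (some i)))
    (hg : ∀ j, C (Sum.inr (some j)) = D (Sum.inr (some j))) : C = D := by
  apply DFunLike.ext
  rintro ((_ | k) | (_ | k))
  exacts [hu, hf k, hv, hg k]

/-- If leaf colors `f`, `g` leave exactly one choice `(u, v)` for the colors of the centers, then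
the leaves form a Sudoku set. -/
lemma leaves_sudoku {m n : ℕ} (u v : Fin 3) (f : Fin m → Fin 3) (g : Fin n → Fin 3)
    (huv : u ≠ v) (hf : ∀ i, u ≠ f i) (hg : ∀ j, v ≠ g j)
    (hforce : ∀ a b, a ≠ b → (∀ i, a ≠ f i) → (∀ j, b ≠ g j) → a = u ∧ b = v) :
    ∃ S : Finset (Option (Fin m) ⊕ Option (Fin n)), S.card = m + n ∧
      ∃ C0 : Option (Fin m) ⊕ Option (Fin n) → Fin 3,
        ∃! C : (bistar m n).Coloring (Fin 3), ∀ v ∈ S, C v = C0 v := by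
  refine ⟨Finset.univ.map (leafEmb m n), leaves_card m n, bistarColoring u v f g huv hf hg,
    bistarColoring u v f g huv hf hg, fun _ _ => rfl, fun D hD => ?_⟩
  have hDf : ∀ i, D (Sum.inl (some i)) = f i := fun i =>
    hD (leafEmb m n (Sum.inl i)) (Finset.mem_map_of_mem _ (Finset.mem_univ _))
  have hDg : ∀ j, D (Sum.inr (some j)) = g j := fun j =>
    hD (leafEmb m n (Sum.inr j)) (Finset.mem_map_of_mem _ (Finset.mem_univ _))
  obtain ⟨h1, h2⟩ := hforce _ _ (coloring_center D)
    (fun i => hDf i ▸ coloring_left D i) (fun j => hDg j ▸ coloring_right D j)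
  exact coloring_ext h1 h2 hDf hDg

lemma sudokuNumber_eq {V : Type*} [Fintype V] {G : SimpleGraph V} {k N : ℕ}
    (hmem : ∃ S : Finset V, S.card = N ∧ ∃ C0 : V → Fin k,
      ∃! C : G.Coloring (Fin k), ∀ v ∈ S, C v = C0 v)
    (hle : ∀ (S : Finset V) (C0 : V → Fin k),
      (∃! C : G.Coloring (Fin k), ∀ v ∈ S, C v = C0 v) → N ≤ S.card) :
    sudokuNumber G k = N := by
  apply le_antisymm
  · exact Nat.sInf_le hmem
  · refine le_csInf ⟨N, hmem⟩ ?_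
    rintro _ ⟨S, rfl, C0, h⟩
    exact hle S C0 h

/-- In `B_{1,1}` the two leaves alone never determine the coloring: given a proper coloring, the
pair of center colors can be replaced by another one. -/
lemma three_le_card {S : Finset (Option (Fin 1) ⊕ Option (Fin 1))}
    {C0 : Option (Fin 1) ⊕ Option (Fin 1) → Fin 3}
    (h : ∃! C : (bistar 1 1).Coloring (Fin 3), ∀ v ∈ S, C v = C0 v) : 3 ≤ S.card := by
  by_contra hlt
  have hS : Finset.univ.map (leafEmb 1 1) = S :=
    Finset.eq_of_subset_of_card_le (leaves_subset h) (by rw [leaves_card]; omega)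
  obtain ⟨C, hC, huniq⟩ := h
  have key : ∀ a b u v : Fin 3, ∃ u' v' : Fin 3,
      u' ≠ v' ∧ u' ≠ a ∧ v' ≠ b ∧ ¬ (u' = u ∧ v' = v) := by decide
  obtain ⟨u', v', huv, hu, hv, hne⟩ := key (C (Sum.inl (some 0))) (C (Sum.inr (some 0)))
    (C (Sum.inl none)) (C (Sum.inr none))
  have := huniq (bistarColoring u' v' (fun i => C (Sum.inl (some i)))
    (fun j => C (Sum.inr (some j))) huv
    (fun i => by rw [Subsingleton.elim i 0]; exact hu)
    (fun j => by rw [Subsingleton.elim j 0]; exact hv))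
    (by
      intro w hw
      refine Eq.trans ?_ (hC w hw)
      rw [← hS] at hw
      obtain ⟨i | j, -, rfl⟩ := Finset.mem_map.1 hw <;> rfl)
  apply hne
  rw [← this]
  exact ⟨rfl, rfl⟩

/-- For all `m, n ≥ 1` with `(m,n) ≠ (1,1)`, `sn(B_{m,n}, 3) = m + n`;
moreover `sn(B_{1,1}, 3) = 3`. -/
theorem sudokuNumber_bistar_three :
    (∀ m n : ℕ, 1 ≤ m → 1 ≤ n → (m, n) ≠ (1, 1) →
      sudokuNumber (bistar m n) 3 = m + n) ∧
    sudokuNumber (bistar 1 1) 3 = 3 := by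
  constructor
  · intro m n hm hn hmn
    refine sudokuNumber_eq ?_ (fun S C0 h => le_card h)
    have key : ∀ a b : Fin 3, a ≠ b → a ≠ 0 → a ≠ 1 → b ≠ 0 → a = 2 ∧ b = 1 := by decide
    have h0 : ∀ p : Prop, [Decidable p] → (2 : Fin 3) ≠ if p then 0 else 1 := by
      intro p _
      split_ifs <;> decide
    rcases (by grind : 2 ≤ m ∨ 2 ≤ n) with h | h
    · refine leaves_sudoku 2 1 (fun i => if i.val = 0 then 0 else 1) (fun _ => 0) (by decide)
        (fun i => h0 _) (fun _ => by decide) (fun a b hab hf hg => ?_)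
      exact key a b hab (by simpa using hf ⟨0, by omega⟩) (by simpa using hf ⟨1, by omega⟩)
        (hg ⟨0, hn⟩)
    · refine leaves_sudoku 1 2 (fun _ => 0) (fun i => if i.val = 0 then 0 else 1) (by decide)
        (fun _ => by decide) (fun i => h0 _) (fun a b hab hf hg => ?_)
      exact (key b a hab.symm (by simpa using hg ⟨0, by omega⟩) (by simpa using hg ⟨1, by omega⟩)
        (hf ⟨0, hm⟩)).symm
  · refine sudokuNumber_eq ?_ (fun S C0 h => three_le_card h)
    -- Both leaves get color 0 and the left center color 1, so the right center must get color 2.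
    let C : (bistar 1 1).Coloring (Fin 3) := bistarColoring 1 2 (fun _ => 0) (fun _ => 0)
      (by decide) (fun _ => by decide) (fun _ => by decide)
    refine ⟨{Sum.inl none, Sum.inl (some 0), Sum.inr (some 0)}, by decide, C, C,
      fun _ _ => rfl, fun D hD => ?_⟩
    have h1 : D (Sum.inl none) = 1 := hD _ (by simp)
    have h2 : D (Sum.inl (some 0)) = 0 := hD _ (by simp)
    have h3 : D (Sum.inr (some 0)) = 0 := hD _ (by simp)
    have key : ∀ b : Fin 3, 1 ≠ b → b ≠ 0 → b = 2 := by decide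
    have h4 : D (Sum.inr none) = 2 :=
      key _ (h1 ▸ coloring_center D) (h3 ▸ coloring_right D 0)
    exact coloring_ext h1 h4 (fun i => by rw [Subsingleton.elim i 0]; exact h2)
      (fun j => by rw [Subsingleton.elim j 0]; exact h3)
end

section
/- Let G be a finite connected bipartite simple graph of order n and let l ≥ 2 be an integer. Then the 3-Sudoku number of the corona G ∘ lK₁ (the graph obtained from G by attaching l new pendant vertices to every vertex of G) equals l·n, i.e. sn(G ∘ lK₁, 3) = l·n. -/
open SimpleGraph

/-- The corona `G ∘ l K₁`: attach `l` new pendant vertices to each vertex of `G`. -/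
def corona {V : Type*} (G : SimpleGraph V) (l : ℕ) : SimpleGraph (V ⊕ V × Fin l) :=
  SimpleGraph.fromRel (fun a b =>
    (∃ u v, a = Sum.inl u ∧ b = Sum.inl v ∧ G.Adj u v) ∨
    (∃ v i, a = Sum.inl v ∧ b = Sum.inr (v, i)))

/-!
The set of all pendant vertices is the smallest set that works, for two independent reasons.
With three colors, a pendant vertex outside `S` sees only one color, so it can always be
recolored with the third one; hence a set `S` with a unique extension contains every pendant
vertex (`inr_mem_of_existsUnique`). Conversely, take a proper coloring of `G` with the colors `0`
and `1`: since each vertex has at least two pendant neighbors, these can be given both of the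
colors it does not use, which forces its color (`existsUnique_extension`).
-/

lemma corona_adj_inl_inl {V : Type*} {G : SimpleGraph V} {l : ℕ} {u v : V} :
    (corona G l).Adj (Sum.inl u) (Sum.inl v) ↔ G.Adj u v := by
  simp only [corona, SimpleGraph.fromRel_adj]
  constructor
  · rintro ⟨-, (⟨a, b, h1, h2, h⟩ | ⟨a, i, h1, h2⟩) | (⟨a, b, h1, h2, h⟩ | ⟨a, i, h1, h2⟩)⟩ <;>
      simp_all [G.adj_comm]
  · intro h
    exact ⟨by simpa using h.ne, Or.inl (Or.inl ⟨u, v, rfl, rfl, h⟩)⟩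

lemma corona_adj_inl_inr {V : Type*} {G : SimpleGraph V} {l : ℕ} {u : V} {p : V × Fin l} :
    (corona G l).Adj (Sum.inl u) (Sum.inr p) ↔ p.1 = u := by
  simp only [corona, SimpleGraph.fromRel_adj]
  constructor
  · rintro ⟨-, (⟨a, b, h1, h2, h⟩ | ⟨a, i, h1, h2⟩) | (⟨a, b, h1, h2, h⟩ | ⟨a, i, h1, h2⟩)⟩ <;>
      simp_all
  · rintro rfl
    exact ⟨by simp, Or.inl (Or.inr ⟨p.1, p.2, rfl, rfl⟩)⟩

lemma not_corona_adj_inr_inr {V : Type*} {G : SimpleGraph V} {l : ℕ} {p q : V × Fin l} :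
    ¬ (corona G l).Adj (Sum.inr p) (Sum.inr q) := by
  simp [corona, SimpleGraph.fromRel_adj]

/-- A proper coloring of the corona, assembled from colors `f` on the vertices of `G` and `g` on
the pendant vertices. -/
def coronaColoring {V : Type*} {G : SimpleGraph V} {l k : ℕ} (f : V → Fin k)
    (g : V × Fin l → Fin k) (hf : ∀ u v, G.Adj u v → f u ≠ f v) (hg : ∀ p, g p ≠ f p.1) :
    (corona G l).Coloring (Fin k) :=
  SimpleGraph.Coloring.mk (Sum.elim f g) (by
    rintro (u | p) (v | q) h
    · exact hf u v (corona_adj_inl_inl.1 h)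
    · have := corona_adj_inl_inr.1 h
      subst this
      exact (hg q).symm
    · have := corona_adj_inl_inr.1 h.symm
      subst this
      exact hg p
    · exact absurd h not_corona_adj_inr_inr)

lemma coronaColoring_inr {V : Type*} {G : SimpleGraph V} {l k : ℕ} (f : V → Fin k)
    (g : V × Fin l → Fin k) (hf : ∀ u v, G.Adj u v → f u ≠ f v) (hg : ∀ p, g p ≠ f p.1)
    (p : V × Fin l) : coronaColoring f g hf hg (Sum.inr p) = g p := rfl

lemma inr_mem_of_existsUnique {V : Type*} {G : SimpleGraph V} {l : ℕ}
    {S : Finset (V ⊕ V × Fin l)} {C0 : V ⊕ V × Fin l → Fin 3}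
    (h : ∃! C : (corona G l).Coloring (Fin 3), ∀ v ∈ S, C v = C0 v) (p : V × Fin l) :
    Sum.inr p ∈ S := by
  classical
  obtain ⟨C, hC, huniq⟩ := h
  by_contra hp
  obtain ⟨c, hc1, hc2⟩ : ∃ c : Fin 3, c ≠ C (Sum.inl p.1) ∧ c ≠ C (Sum.inr p) := by
    generalize C (Sum.inl p.1) = a
    generalize C (Sum.inr p) = b
    revert a b
    decide
  -- the coloring `C` with the color of the single vertex `p` changed to `c`
  let D : (corona G l).Coloring (Fin 3) :=
    coronaColoring (fun v => C (Sum.inl v))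
      (Function.update (fun q => C (Sum.inr q)) p c)
      (fun u v huv => C.valid (corona_adj_inl_inl.2 huv))
      (fun q => by
        by_cases hq : q = p
        · subst hq
          simpa using hc1
        · simpa [hq] using (C.valid (corona_adj_inl_inr.2 (rfl : q.1 = q.1))).symm)
  have hD : D = C := huniq D (by
    rintro (u | q) hv
    · exact hC _ hv
    · have hq : q ≠ p := by
        rintro rfl
        exact hp hv
      have : D (Sum.inr q) = C (Sum.inr q) :=
        (coronaColoring_inr _ _ _ _ q).trans (Function.update_of_ne hq _ _)
      rw [this]
      exact hC _ hv)
  have h1 : D (Sum.inr p) = c :=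
    (coronaColoring_inr _ _ _ _ p).trans (Function.update_self _ _ _)
  rw [hD] at h1
  exact hc2 h1.symm

/-- For bipartite `G` and `l ≥ 2`, some coloring of the pendant vertices extends uniquely. -/
lemma existsUnique_extension {V : Type*} [Fintype V] {G : SimpleGraph V} (hbip : G.Colorable 2)
    {l : ℕ} (hl : 2 ≤ l) :
    ∃ C0 : V ⊕ V × Fin l → Fin 3, ∃! C : (corona G l).Coloring (Fin 3),
      ∀ v ∈ (Finset.univ : Finset (V × Fin l)).map Function.Embedding.inr, C v = C0 v := by
  obtain ⟨b⟩ := hbip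
  let f : V → Fin 3 := fun v => (b v).castSucc
  -- one pendant vertex at `v` gets color `2`, the others the color in `{0, 1}` not used at `v`
  let g : V × Fin l → Fin 3 := fun p => if p.2.val = 0 then 2 else (1 - b p.1).castSucc
  have hf : ∀ u v, G.Adj u v → f u ≠ f v := fun u v huv h =>
    b.valid huv (Fin.castSucc_injective _ h)
  have hg : ∀ p, g p ≠ f p.1 := by
    intro p
    simp only [f, g]
    generalize b p.1 = a
    split_ifs
    · revert a; decide
    · revert a; decide
  refine ⟨Sum.elim f g, coronaColoring f g hf hg, fun v _ => rfl, ?_⟩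
  intro C hC
  have hr : ∀ p, C (Sum.inr p) = g p := fun p => hC _ (by simp)
  ext1 x
  rcases x with v | p
  · have h0 := C.valid (corona_adj_inl_inr.2 (rfl : ((v, ⟨0, by omega⟩) : V × Fin l).1 = v))
    have h1 := C.valid (corona_adj_inl_inr.2 (rfl : ((v, ⟨1, by omega⟩) : V × Fin l).1 = v))
    rw [hr] at h0 h1
    change C (Sum.inl v) = f v
    simp only [f, g] at h0 h1 ⊢
    generalize C (Sum.inl v) = x at *
    generalize b v = a at *
    simp only [if_true, one_ne_zero, if_false] at h0 h1
    revert x a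
    decide
  · exact hr p

/-- For a finite connected bipartite graph `G` of order `n` and `l ≥ 2`,
`sn(G ∘ lK₁, 3) = l·n`. -/
theorem sudokuNumber_corona_three {V : Type*} [Fintype V] (G : SimpleGraph V)
    (hconn : G.Connected) (hbip : G.Colorable 2) (n l : ℕ) (hn : Fintype.card V = n)
    (hl : 2 ≤ l) :
    sudokuNumber (corona G l) 3 = l * n := by
  subst hn
  have hcard : ((Finset.univ : Finset (V × Fin l)).map
      (Function.Embedding.inr : V × Fin l ↪ V ⊕ V × Fin l)).card = l * Fintype.card V := by
    simp [mul_comm]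
  refine IsLeast.csInf_eq ⟨⟨_, hcard, existsUnique_extension hbip hl⟩, ?_⟩
  rintro m ⟨S, rfl, C0, hC0⟩
  rw [← hcard]
  refine Finset.card_le_card fun x hx => ?_
  obtain ⟨p, -, rfl⟩ := Finset.mem_map.1 hx
  exact inr_mem_of_existsUnique hC0 p
end

section
/- Let G be a finite connected simple graph of order n with maximum degree Δ(G), and let k be an integer with k ≥ χ(G). Then sn(G,k) = n if and only if k ≥ Δ(G) + 2. -/
/-!
A coloring `C` is the unique extension of its restriction to `V \ {w}` exactly when `w` sees
every color other than `C w` on its neighbors; call such a `w` *stuck*.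

If `Δ + 2 ≤ k`, every vertex `v` has a color different from its own and absent from its
neighborhood (`exists_free_color`), so a set missing a vertex never determines a coloring, and
only `S = V` works.

If `k ≤ Δ + 1`, some `k`-coloring has a stuck vertex (`exists_stuck`), which gives a determining
set of size `n - 1`. To see this, let `v` have degree `Δ` and take a `k`-coloring with as many
colors as possible on the closed neighborhood `N[v]`. If no vertex is stuck, then `v` is not, so
some color `j` is missing from `N[v]`; each vertex of color `j` can be moved to a free color, all
simultaneously because a color class is independent. As `|N[v]| = Δ + 1 ≥ k`, two vertices of
`N[v]` share a color, and giving one of them the now unused color `j` puts one more color on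
`N[v]`, contradicting maximality.
-/

open SimpleGraph

/-- With `Δ + 2` colors every vertex can be recolored: its color and those of its neighbors
are at most `Δ + 1` many. -/
lemma exists_free_color {V : Type*} [Fintype V] (G : SimpleGraph V) [DecidableRel G.Adj] {k : ℕ}
    (hk : G.maxDegree + 2 ≤ k) (C : V → Fin k) (v : V) :
    ∃ c, c ≠ C v ∧ ∀ u, G.Adj v u → C u ≠ c := by
  classical
  have hcard : (insert (C v) ((G.neighborFinset v).image C)).card
      < (Finset.univ : Finset (Fin k)).card := by
    have h1 := Finset.card_insert_le (C v) ((G.neighborFinset v).image C)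
    have h2 : ((G.neighborFinset v).image C).card ≤ G.degree v := Finset.card_image_le
    have h3 := G.degree_le_maxDegree v
    rw [Finset.card_univ, Fintype.card_fin]
    omega
  obtain ⟨c, -, hc⟩ := Finset.exists_mem_notMem_of_card_lt_card hcard
  simp only [Finset.mem_insert, Finset.mem_image, mem_neighborFinset, not_or, not_exists,
    not_and] at hc
  exact ⟨c, hc.1, hc.2⟩

/-- If `k ≤ Δ + 1` and `G` is `k`-colorable, then some `k`-coloring has a vertex that sees every
color other than its own. -/
lemma exists_stuck {V : Type*} [Fintype V] [Nonempty V] (G : SimpleGraph V) [DecidableRel G.Adj]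
    {k : ℕ} (hk : k ≤ G.maxDegree + 1) (hcol : G.Colorable k) :
    ∃ C : G.Coloring (Fin k), ∃ w, ∀ c, c ≠ C w → ∃ u, G.Adj w u ∧ C u = c := by
  classical
  by_contra! hno
  obtain ⟨v, hv⟩ := G.exists_maximal_degree_vertex
  set N : Finset V := insert v (G.neighborFinset v) with hN
  have hNcard : N.card = G.maxDegree + 1 := by
    rw [hN, Finset.card_insert_of_notMem (by simp), card_neighborFinset_eq_degree, hv]
  have : Nonempty (G.Coloring (Fin k)) := hcol
  have : Finite (G.Coloring (Fin k)) := DFunLike.finite _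
  obtain ⟨C, hC⟩ := Finite.exists_max fun C : G.Coloring (Fin k) => (N.image C).card
  choose g hg hgadj using hno C
  -- `j` is a color missing from `N[v]`.
  obtain ⟨j, hj⟩ : ∃ j, j ∉ N.image C := by
    refine ⟨g v, ?_⟩
    simp only [hN, Finset.mem_image, Finset.mem_insert, mem_neighborFinset, not_exists, not_and]
    rintro x (rfl | hx)
    · exact (hg x).symm
    · exact hgadj v x hx
  have hlt : (N.image C).card < N.card := by
    have := Finset.card_lt_card (Finset.ssubset_univ_iff.2
      fun h : N.image C = Finset.univ => hj (h ▸ Finset.mem_univ j))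
    rw [Finset.card_univ, Fintype.card_fin] at this
    omega
  obtain ⟨a, ha, b, hb, hab, hCab⟩ := Finset.exists_ne_map_eq_of_card_lt_of_maps_to hlt
    fun x hx => Finset.mem_image_of_mem C hx
  have hproper : ∀ {u w : V}, G.Adj u w →
      (if u = a then j else if C u = j then g u else C u) ≠
        (if w = a then j else if C w = j then g w else C w) := by
    intro u w huw
    have h1 := C.valid huw
    have h2 := hgadj u w huw
    have h3 := hgadj w u huw.symm
    have h4 := hg u
    have h5 := hg w
    have h6 := huw.ne
    split_ifs <;> grind
  let Cnew : G.Coloring (Fin k) := Coloring.mk _ hproper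
  have hCnew : ∀ u, Cnew u = if u = a then j else if C u = j then g u else C u := fun _ => rfl
  have hsub : insert j (N.image C) ⊆ N.image Cnew := by
    -- Vertices of `N[v]` other than `a` keep their color, and `b` still carries the color of `a`.
    have hkeep : ∀ x ∈ N, x ≠ a → C x ∈ N.image Cnew := by
      intro x hx hxa
      have hxj : C x ≠ j := fun h => hj (h ▸ Finset.mem_image_of_mem C hx)
      refine Finset.mem_image.2 ⟨x, hx, ?_⟩
      rw [hCnew, if_neg hxa, if_neg hxj]
    intro c hc
    rcases Finset.mem_insert.1 hc with rfl | hc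
    · exact Finset.mem_image.2 ⟨a, ha, by rw [hCnew, if_pos rfl]⟩
    · obtain ⟨x, hx, rfl⟩ := Finset.mem_image.1 hc
      by_cases hxa : x = a
      · rw [hxa, hCab]
        exact hkeep b hb hab.symm
      · exact hkeep x hx hxa
  have h1 := Finset.card_le_card hsub
  rw [Finset.card_insert_of_notMem hj] at h1
  have h2 := hC Cnew
  omega

/-- For a finite connected graph `G` of order `n` and `k ≥ χ(G)`:
`sn(G,k) = n` iff `k ≥ Δ(G) + 2`. -/
theorem sudokuNumber_eq_card_iff {V : Type*} [Fintype V] (G : SimpleGraph V)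
    [DecidableRel G.Adj] (hconn : G.Connected) (k : ℕ)
    (hk : G.chromaticNumber ≤ (k : ℕ∞)) :
    sudokuNumber G k = Fintype.card V ↔ G.maxDegree + 2 ≤ k := by
  classical
  have hne : Nonempty V := hconn.nonempty
  have hcol : G.Colorable k := chromaticNumber_le_iff_colorable.1 hk
  constructor
  · intro h
    by_contra hlt
    obtain ⟨C, w, hw⟩ := exists_stuck G (k := k) (by omega) hcol
    have hle : sudokuNumber G k ≤ (Finset.univ.erase w).card := by
      refine Nat.sInf_le ⟨Finset.univ.erase w, rfl, C, C, fun _ _ => rfl, ?_⟩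
      intro D hD
      have hD' : ∀ u, u ≠ w → D u = C u := fun u hu => hD u (by simp [hu])
      refine DFunLike.ext _ _ fun u => ?_
      by_cases hu : u = w
      · subst hu
        by_contra hDu
        obtain ⟨x, hx, hxc⟩ := hw (D u) hDu
        exact D.valid hx (by rw [hD' x hx.ne', hxc])
      · exact hD' u hu
    rw [Finset.card_erase_of_mem (Finset.mem_univ w), Finset.card_univ, h] at hle
    have := Fintype.card_pos (α := V)
    omega
  · intro hΔ
    have key : ∀ S : Finset V, (∃ C0 : V → Fin k,
        ∃! C : G.Coloring (Fin k), ∀ v ∈ S, C v = C0 v) → S = Finset.univ := by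
      rintro S ⟨C0, C, hC, huniq⟩
      rw [Finset.eq_univ_iff_forall]
      by_contra! hS
      obtain ⟨v, hv⟩ := hS
      obtain ⟨c, hc, hfree⟩ := exists_free_color G hΔ C v
      have hproper : ∀ {u w : V}, G.Adj u w →
          (if u = v then c else C u) ≠ (if w = v then c else C w) := by
        intro u w huw
        have h1 := C.valid huw
        have h2 := huw.ne
        have h3 := huw.symm
        split_ifs <;> grind
      have heq := huniq (Coloring.mk _ hproper) fun u hu => by
        have huv : u ≠ v := fun h => hv (h ▸ hu)
        exact (if_neg huv).trans (hC u hu)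
      have hval : (if v = v then c else C v) = C v := DFunLike.congr_fun heq v
      rw [if_pos rfl] at hval
      exact hc hval
    obtain ⟨C⟩ := hcol
    -- The infimum is attained, since `S = V` with the restriction of any coloring qualifies.
    obtain ⟨S, hS, hex⟩ := Nat.sInf_mem (s := {m | ∃ S : Finset V, S.card = m ∧
        ∃ C0 : V → Fin k, ∃! C : G.Coloring (Fin k), ∀ v ∈ S, C v = C0 v})
      ⟨_, Finset.univ, rfl, C, C, fun _ _ => rfl,
        fun D hD => DFunLike.ext _ _ fun u => hD u (Finset.mem_univ u)⟩
    rw [key S hex, Finset.card_univ] at hS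
    exact hS.symm
end

section
/- Let G be a finite connected bipartite simple graph of order n(G) having exactly l pendant vertices (vertices of degree 1). Then l ≤ sn(G,3) ≤ n(G). -/
/-!
A pendant vertex `v` has a single neighbour, so its colour in a proper 3-coloring can be replaced
by the third colour, different from its own and its neighbour's. Hence a set that determines the
coloring uniquely contains every pendant vertex, which gives the lower bound. For the upper bound,
the whole vertex set with the values of any proper coloring determines that coloring.
-/

open SimpleGraph

/-- A proper 3-coloring can be changed at a pendant vertex `v` and nowhere else. -/
theorem exists_recolor_pendant {V : Type*} (G : SimpleGraph V) {v w : V}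
    (hw : ∀ u, G.Adj v u → u = w) (C : G.Coloring (Fin 3)) :
    ∃ C' : G.Coloring (Fin 3), C' v ≠ C v ∧ ∀ u, u ≠ v → C' u = C u := by
  classical
  have hthird : ∀ a b : Fin 3, ∃ c, c ≠ a ∧ c ≠ b := by decide
  obtain ⟨c, hcv, hcw⟩ := hthird (C v) (C w)
  refine ⟨Coloring.mk (Function.update C v c) ?_, ?_, ?_⟩
  · intro a b hab
    by_cases ha : a = v
    · subst ha
      rw [Function.update_self, Function.update_of_ne hab.ne', hw b hab]
      exact hcw
    · rw [Function.update_of_ne ha]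
      by_cases hb : b = v
      · subst hb
        rw [Function.update_self, hw a hab.symm]
        exact hcw.symm
      · rw [Function.update_of_ne hb]
        exact C.valid hab
  · change Function.update C v c v ≠ C v
    rwa [Function.update_self]
  · intro u hu
    exact Function.update_of_ne hu c C

/-- For a finite connected bipartite graph `G` with exactly `l` pendant vertices,
`l ≤ sn(G,3) ≤ n(G)`. -/
theorem sudokuNumber_three_bounds {V : Type*} [Fintype V] (G : SimpleGraph V)
    [DecidableRel G.Adj] (hconn : G.Connected) (hbip : G.Colorable 2) (l : ℕ)
    (hl : l = (Finset.univ.filter fun v => G.degree v = 1).card) :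
    l ≤ sudokuNumber G 3 ∧ sudokuNumber G 3 ≤ Fintype.card V := by
  have hmem : Fintype.card V ∈ {m | ∃ S : Finset V, S.card = m ∧ ∃ C0 : V → Fin 3,
      ∃! C : G.Coloring (Fin 3), ∀ v ∈ S, C v = C0 v} := by
    obtain ⟨C⟩ := hbip.mono (show 2 ≤ 3 by norm_num)
    exact ⟨Finset.univ, rfl, C, C, fun _ _ => rfl,
      fun D hD => RelHom.ext fun v => hD v (Finset.mem_univ v)⟩
  refine ⟨?_, Nat.sInf_le hmem⟩
  -- The infimum is attained since the set is nonempty, so the junk value `sInf ∅ = 0` is excluded.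
  obtain ⟨S, hS, C0, C, hC, huniq⟩ := Nat.sInf_mem ⟨_, hmem⟩
  unfold sudokuNumber
  rw [hl, ← hS]
  refine Finset.card_le_card fun v hv => ?_
  obtain ⟨w, -, hw⟩ := degree_eq_one_iff_existsUnique_adj.mp (Finset.mem_filter.mp hv).2
  by_contra hvS
  obtain ⟨C', hne, heq⟩ := exists_recolor_pendant G hw C
  refine hne (congrArg (fun D : G.Coloring (Fin 3) => D v) (huniq C' fun u hu => ?_))
  rw [heq u (fun h => hvS (h ▸ hu)), hC u hu]
end

section
/- Let G be a finite connected bipartite simple graph of order n(G). Then sn(G,3) = n(G) if and only if G is isomorphic to K₁ (the one-vertex graph) or to K₂ (a single edge). -/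
/-!
For a finite connected bipartite graph, both sides are equivalent to the condition that no vertex
has two distinct neighbours.

If `v` has distinct neighbours `a` and `b`, recolor a 2-coloring so that the side of `v` has
color `0`, the vertex `a` has color `1`, and the rest of the side opposite to `v` has color `2`.
Then `v` sees two colors, so the coloring is determined by its values off `v`, and
`sn(G,3) ≤ n(G) - 1` (`sudokuNumber_lt_card`). Conversely, if every vertex has at most one
neighbour, then a vertex left uncolored always has a second available color, so nothing smaller
than the whole vertex set works (`sudokuNumber_eq_card`). Finally, a connected graph in which every
vertex has at most one neighbour is complete on at most two vertices (`iso_of_unique_neighbor`).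
-/

open SimpleGraph

/-- A vertex with two distinct neighbours can be left uncolored, once a 3-coloring gives these
neighbours different colors. -/
theorem sudokuNumber_lt_card {V : Type*} [Fintype V] (G : SimpleGraph V)
    (hbip : G.Colorable 2) {v a b : V} (ha : G.Adj v a) (hb : G.Adj v b) (hab : a ≠ b) :
    sudokuNumber G 3 < Fintype.card V := by
  classical
  obtain ⟨c⟩ := hbip
  let C : G.Coloring (Fin 3) :=
    Coloring.mk (fun x => if c x = c v then 0 else if x = a then 1 else 2) (by
      intro x y hxy
      have hc := c.valid hxy
      have hx : c x = c v ∨ c y = c v := by omega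
      rcases hx with hx | hx
      · have hy : c y ≠ c v := fun h => hc (hx.trans h.symm)
        simp only [hx, hy, if_true, if_false]
        split_ifs <;> decide
      · have hy : c x ≠ c v := fun h => hc (h.trans hx.symm)
        simp only [hx, hy, if_true, if_false]
        split_ifs <;> decide)
  have hCa : C a = 1 := by
    change (if c a = c v then (0 : Fin 3) else if a = a then 1 else 2) = 1
    simp [(c.valid ha).symm]
  have hCb : C b = 2 := by
    change (if c b = c v then (0 : Fin 3) else if b = a then 1 else 2) = 2
    simp [(c.valid hb).symm, hab.symm]
  have hmem : (Finset.univ.erase v).card ∈ {m | ∃ S : Finset V, S.card = m ∧ ∃ C0 : V → Fin 3,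
      ∃! C : G.Coloring (Fin 3), ∀ v ∈ S, C v = C0 v} := by
    refine ⟨_, rfl, C, C, fun _ _ => rfl, fun D hD => ?_⟩
    have hD' : ∀ x, x ≠ v → D x = C x := fun x hx => hD x (by simp [hx])
    ext x : 1
    by_cases hx : x = v
    · subst hx
      have h1 := D.valid ha
      have h2 := D.valid hb
      have h3 := C.valid ha
      have h4 := C.valid hb
      rw [hD' a ha.ne', hCa] at h1
      rw [hD' b hb.ne', hCb] at h2
      rw [hCa] at h3
      rw [hCb] at h4
      omega
    · exact hD' x hx
  exact (Nat.sInf_le hmem).trans_lt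
    (Finset.card_lt_card (Finset.erase_ssubset (Finset.mem_univ v)))

/-- If no vertex sees two distinct neighbours, an uncolored vertex can always be recolored, so every
3-Sudoku coloring uses all vertices. -/
theorem sudokuNumber_eq_card {V : Type*} [Fintype V] (G : SimpleGraph V)
    (hbip : G.Colorable 2) (h : ∀ v a b, G.Adj v a → G.Adj v b → a = b) :
    sudokuNumber G 3 = Fintype.card V := by
  classical
  obtain ⟨C⟩ := hbip.mono (show 2 ≤ 3 by norm_num)
  refine le_antisymm (Nat.sInf_le ⟨Finset.univ, rfl, C, C, fun _ _ => rfl, fun D hD => ?_⟩)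
    (le_csInf ⟨_, Finset.univ, rfl, C, C, fun _ _ => rfl, fun D hD => ?_⟩ ?_)
  · ext x : 1
    exact hD x (Finset.mem_univ x)
  · ext x : 1
    exact hD x (Finset.mem_univ x)
  · rintro _ ⟨S, rfl, C0, C, hC, huniq⟩
    by_contra hlt
    have hS : ∃ v, v ∉ S := by
      by_contra! hall
      exact hlt (by rw [Finset.eq_univ_iff_forall.2 hall, Finset.card_univ])
    obtain ⟨v, hv⟩ := hS
    -- A color different from that of `v` and from that of its only possible neighbour.
    obtain ⟨d, hd, hdn⟩ : ∃ d, d ≠ C v ∧ ∀ w, G.Adj v w → d ≠ C w := by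
      have key : ∀ p q : Fin 3, ∃ d, d ≠ p ∧ d ≠ q := by decide
      by_cases hw : ∃ w, G.Adj v w
      · obtain ⟨w, hw⟩ := hw
        obtain ⟨d, h1, h2⟩ := key (C v) (C w)
        exact ⟨d, h1, fun u hu => h v w u hw hu ▸ h2⟩
      · obtain ⟨d, h1, -⟩ := key (C v) (C v)
        exact ⟨d, h1, fun u hu => (hw ⟨u, hu⟩).elim⟩
    let D : G.Coloring (Fin 3) := Coloring.mk (Function.update C v d) (by
      intro x y hxy
      by_cases hx : x = v
      · subst hx
        simpa [hxy.ne'] using hdn y hxy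
      · by_cases hy : y = v
        · subst hy
          simpa [hx] using (hdn x hxy.symm).symm
        · simpa [hx, hy] using C.valid hxy)
    have hDC : D = C := huniq D fun x hx => by
      have hxv : x ≠ v := fun e => hv (e ▸ hx)
      change Function.update C v d x = C0 x
      simpa [hxv] using hC x hx
    have hDv : D v = d := by
      change Function.update C v d v = d
      simp
    exact hd (hDv ▸ congrArg (fun E : G.Coloring (Fin 3) => E v) hDC)

/-- The connected graphs in which every vertex has at most one neighbour are `K₁` and `K₂`. -/
theorem iso_of_unique_neighbor {V : Type*} [Fintype V] (G : SimpleGraph V)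
    (hconn : G.Connected) (h : ∀ v a b, G.Adj v a → G.Adj v b → a = b) :
    Nonempty (G ≃g completeGraph (Fin 1)) ∨ Nonempty (G ≃g completeGraph (Fin 2)) := by
  have hwalk : ∀ {v w : V}, G.Walk v w → v = w ∨ G.Adj v w := by
    intro v w p
    induction p with
    | nil => exact Or.inl rfl
    | cons hadj _ ih =>
      rcases ih with rfl | ih
      · exact Or.inr hadj
      · exact Or.inl (h _ _ _ hadj.symm ih)
  have hadj : ∀ v w, v ≠ w → G.Adj v w := fun v w hne =>
    (hconn.preconnected v w).elim fun p => (hwalk p).resolve_left hne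
  have htop : G = completeGraph V := by
    ext v w
    exact ⟨fun e => e.ne, hadj v w⟩
  have hle : Fintype.card V ≤ 2 := by
    by_contra! hlt
    obtain ⟨a, b, c, hab, hac, hbc⟩ := Fintype.two_lt_card_iff.1 hlt
    exact hbc (h a b c (hadj a b hab) (hadj a c hac))
  have := hconn.nonempty
  have hpos : 0 < Fintype.card V := Fintype.card_pos
  have hcard : Fintype.card V = 1 ∨ Fintype.card V = 2 := by omega
  rw [htop]
  exact hcard.imp (fun e => ⟨Iso.completeGraph (Fintype.equivFinOfCardEq e)⟩)
    (fun e => ⟨Iso.completeGraph (Fintype.equivFinOfCardEq e)⟩)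

/-- For a finite connected bipartite graph `G`: `sn(G,3) = n(G)` iff `G` is `K₁` or `K₂`. -/
theorem sudokuNumber_three_eq_card_iff {V : Type*} [Fintype V] (G : SimpleGraph V)
    (hconn : G.Connected) (hbip : G.Colorable 2) :
    sudokuNumber G 3 = Fintype.card V ↔
      Nonempty (G ≃g completeGraph (Fin 1)) ∨ Nonempty (G ≃g completeGraph (Fin 2)) := by
  constructor
  · intro heq
    refine iso_of_unique_neighbor G hconn fun v a b ha hb => ?_
    by_contra hab
    exact (sudokuNumber_lt_card G hbip ha hb hab).ne heq
  · intro hiso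
    refine sudokuNumber_eq_card G hbip fun v a b ha hb => ?_
    rcases hiso with ⟨⟨f⟩⟩ | ⟨⟨f⟩⟩
    · exact f.injective (Subsingleton.elim _ _)
    · have h1 : f v ≠ f a := f.injective.ne ha.ne
      have h2 : f v ≠ f b := f.injective.ne hb.ne
      exact f.injective (by omega)
end

section
/- Let G be a finite connected bipartite simple graph of order n(G). Then sn(G,3) = n(G) − 1 if and only if G is isomorphic to a star K_{1,n} with n ≥ 2 or to the path P₄ on 4 vertices. -/
/-!
A vertex missing from a Sudoku set must see two different colors in the unique completion, since
otherwise it could be recolored; so every vertex of degree at most one lies in every Sudoku set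
(`exists_nbrs_of_not_mem`). Conversely, in any proper 3-coloring a vertex seeing two colors may be
erased, and then a second one as well, provided the two colors seen by the first do not come from
the second (`sudokuNumber_le_sub_one`, `sudokuNumber_le_sub_two`).

If `sn(G,3) = n - 1`, then no two vertices of degree at least two lie on the same side of the
bipartition: coloring their side with `2`, one can color the other side with `0` and `1` so
that neither neighborhood is monochromatic (`eq_of_same_side`). Hence at most one vertex on each
side is not a leaf. By connectedness `G` is a star or a double star, and in a double star with at
least five vertices both centers can be erased (`double_star_unique_leaf`), which leaves `P₄`.

For the other direction, a star has all its leaves in every Sudoku set. In `P₄`, a Sudoku set with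
fewer than three vertices contains no inner vertex, and every coloring of the ends that
extends to `P₄` extends in more than one way.
-/

open SimpleGraph

namespace SudokuThree

variable {V : Type*} {G : SimpleGraph V}

/-- `v` has degree at least two. -/
def TwoNbrs (G : SimpleGraph V) (v : V) : Prop := ∃ a b, a ≠ b ∧ G.Adj v a ∧ G.Adj v b

lemma third_color : ∀ a b x y : Fin 3, a ≠ b → x ≠ a → x ≠ b → y ≠ a → y ≠ b → x = y := by
  decide

/-- A vertex seeing two colors is determined by its neighbors. -/
lemma coloring_eq_at (C D : G.Coloring (Fin 3)) {u a b : V} (hua : G.Adj u a)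
    (hub : G.Adj u b) (hab : C a ≠ C b) (ha : D a = C a) (hb : D b = C b) : D u = C u :=
  third_color (C a) (C b) _ _ hab (ha ▸ D.valid hua) (hb ▸ D.valid hub) (C.valid hua) (C.valid hub)

/-- Two pairs of distinct vertices can be simultaneously split by a 2-coloring. -/
lemma exists_split {a b c d : V} (hab : a ≠ b) (hcd : c ≠ d) :
    ∃ f : V → Prop, ¬ (f a ↔ f b) ∧ ¬ (f c ↔ f d) := by
  classical
  by_cases h1 : c = a
  · exact ⟨fun x => x = a, by grind⟩
  by_cases h2 : d = a
  · exact ⟨fun x => x = a, by grind⟩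
  by_cases h3 : c = b
  · exact ⟨fun x => x = b, by grind⟩
  · exact ⟨fun x => x = a ∨ x = c, by grind⟩

/-- In a connected graph, a set containing a vertex and closed under adjacency is everything. -/
lemma forall_of_closed (hconn : G.Connected) {P : V → Prop} {v : V} (hv : P v)
    (hcl : ∀ x y, P x → G.Adj x y → P y) (x : V) : P x := by
  obtain ⟨p⟩ := hconn.preconnected v x
  induction p with
  | nil => exact hv
  | cons h _ ih => exact ih (hcl _ _ hv h)

lemma eq_of_not_twoNbrs {x a b : V} (h : ¬ TwoNbrs G x) (ha : G.Adj x a) (hb : G.Adj x b) :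
    a = b := by
  by_contra hab
  exact h ⟨a, b, hab, ha, hb⟩

variable [Fintype V]

/-- `C0` restricted to `S` extends to exactly one proper 3-coloring of `G`. -/
def IsSudoku (G : SimpleGraph V) (S : Finset V) (C0 : V → Fin 3) : Prop :=
  ∃! C : G.Coloring (Fin 3), ∀ v ∈ S, C v = C0 v

lemma sudokuNumber_le {S : Finset V} {C0 : V → Fin 3} (h : IsSudoku G S C0) :
    sudokuNumber G 3 ≤ S.card :=
  Nat.sInf_le ⟨S, rfl, C0, h⟩

lemma exists_sudoku (hbip : G.Colorable 2) :
    ∃ S : Finset V, S.card = sudokuNumber G 3 ∧ ∃ C0, IsSudoku G S C0 := by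
  obtain ⟨C⟩ : G.Colorable 3 := hbip.mono (by norm_num)
  exact Nat.sInf_mem (s := {m | ∃ S : Finset V, S.card = m ∧ ∃ C0 : V → Fin 3,
      ∃! C : G.Coloring (Fin 3), ∀ v ∈ S, C v = C0 v})
    ⟨_, Finset.univ, rfl, C, C, fun _ _ => rfl, fun D hD => by ext v; rw [hD v (by simp)]⟩

/-- A vertex of degree at most one lies in every Sudoku set: otherwise some color differs from that
of `v` and from those of all its neighbors, and recoloring `v` gives a second completion. -/
lemma exists_nbrs_of_not_mem {S : Finset V} {C0 : V → Fin 3} (h : IsSudoku G S C0) {v : V}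
    (hv : v ∉ S) : TwoNbrs G v := by
  classical
  obtain ⟨C, hC, huniq⟩ := h
  by_contra hno
  have hfree : ∃ k : Fin 3, k ≠ C v ∧ ∀ a, G.Adj v a → k ≠ C a := by
    have hk : ∀ x y : Fin 3, ∃ k, k ≠ x ∧ k ≠ y := by decide
    by_cases hn : ∃ a, G.Adj v a
    · obtain ⟨a, ha⟩ := hn
      obtain ⟨k, h1, h2⟩ := hk (C v) (C a)
      refine ⟨k, h1, fun b hb => ?_⟩
      have : a = b := by
        by_contra hab
        exact hno ⟨a, b, hab, ha, hb⟩
      rwa [← this]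
    · obtain ⟨k, h1, -⟩ := hk (C v) (C v)
      exact ⟨k, h1, fun a ha => (hn ⟨a, ha⟩).elim⟩
  obtain ⟨k, hkv, hka⟩ := hfree
  let D : G.Coloring (Fin 3) := Coloring.mk (Function.update C v k) (by
    intro x y hxy
    by_cases hx : x = v
    · subst hx
      have : y ≠ x := hxy.ne'
      simpa [Function.update_of_ne this] using hka y hxy
    · by_cases hy : y = v
      · subst hy
        simpa [Function.update_of_ne hx] using (hka x hxy.symm).symm
      · simpa [Function.update_of_ne hx, Function.update_of_ne hy] using C.valid hxy)
  have hDv : D v = k := by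
    change Function.update (⇑C) v k v = k
    simp
  have hD : D = C := huniq D (by
    intro s hs
    have hsv : s ≠ v := fun h => hv (h ▸ hs)
    rw [← hC s hs]
    exact Function.update_of_ne hsv k C)
  exact hkv (by rw [← hDv, hD])

lemma sudokuNumber_le_sub_one (C : G.Coloring (Fin 3)) {u a b : V}
    (hua : G.Adj u a) (hub : G.Adj u b) (hab : C a ≠ C b) :
    sudokuNumber G 3 ≤ Fintype.card V - 1 := by
  classical
  have key : IsSudoku G (Finset.univ.erase u) C := by
    refine ⟨C, fun _ _ => rfl, fun D hD => ?_⟩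
    have hD' : ∀ x, x ≠ u → D x = C x := fun x hx => hD x (by simp [hx])
    ext x
    by_cases hx : x = u
    · rw [hx, coloring_eq_at C D hua hub hab (hD' a hua.ne') (hD' b hub.ne')]
    · rw [hD' x hx]
  refine (sudokuNumber_le key).trans ?_
  rw [Finset.card_erase_of_mem (Finset.mem_univ _), Finset.card_univ]

/-- Here `u` is recovered first; its color may then be used to recover `v`. -/
lemma sudokuNumber_le_sub_two (C : G.Coloring (Fin 3)) {u v a b c d : V} (huv : u ≠ v)
    (hua : G.Adj u a) (hub : G.Adj u b) (hab : C a ≠ C b) (hav : a ≠ v) (hbv : b ≠ v)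
    (hvc : G.Adj v c) (hvd : G.Adj v d) (hcd : C c ≠ C d) :
    sudokuNumber G 3 ≤ Fintype.card V - 2 := by
  classical
  have key : IsSudoku G ((Finset.univ.erase u).erase v) C := by
    refine ⟨C, fun _ _ => rfl, fun D hD => ?_⟩
    have hD' : ∀ x, x ≠ u → x ≠ v → D x = C x := fun x hx hy => hD x (by simp [hx, hy])
    have hu : D u = C u :=
      coloring_eq_at C D hua hub hab (hD' a hua.ne' hav) (hD' b hub.ne' hbv)
    have hD'' : ∀ x, x ≠ v → D x = C x := by
      intro x hx
      by_cases h : x = u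
      · rw [h, hu]
      · exact hD' x h hx
    ext x
    by_cases hx : x = v
    · rw [hx, coloring_eq_at C D hvc hvd hcd (hD'' c hvc.ne') (hD'' d hvd.ne')]
    · rw [hD'' x hx]
  refine (sudokuNumber_le key).trans ?_
  rw [Finset.card_erase_of_mem (by simp [huv.symm]),
    Finset.card_erase_of_mem (Finset.mem_univ _), Finset.card_univ]
  omega

lemma eq_of_same_side (B : G.Coloring (Fin 2))
    (hsn : ¬ sudokuNumber G 3 ≤ Fintype.card V - 2) {u v : V}
    (hB : B u = B v) (hu : TwoNbrs G u) (hv : TwoNbrs G v) : u = v := by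
  classical
  by_contra huv
  obtain ⟨a, b, hab, hua, hub⟩ := hu
  obtain ⟨c, d, hcd, hvc, hvd⟩ := hv
  obtain ⟨f, hf1, hf2⟩ := exists_split hab hcd
  let C : G.Coloring (Fin 3) := Coloring.mk
    (fun x => if B x = B u then 2 else if f x then 1 else 0) (by
      intro x y hxy
      have h := B.valid hxy
      have h2 : ∀ i j k : Fin 2, i ≠ j → i ≠ k → j ≠ k → False := by decide
      by_cases hx : B x = B u
      · have hy : B y ≠ B u := fun hy => h (hx.trans hy.symm)
        simp only [hx, hy, if_true, if_false]
        split_ifs <;> decide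
      · by_cases hy : B y = B u
        · simp only [hx, hy, if_true, if_false]
          split_ifs <;> decide
        · exact (h2 _ _ _ h hx hy).elim)
  have hCd : ∀ x, C x = if B x = B u then 2 else if f x then 1 else 0 := fun _ => rfl
  have hCn : ∀ x, B x ≠ B u → C x = if f x then 1 else 0 := fun x hx => by rw [hCd, if_neg hx]
  have hne : ∀ x y, B x ≠ B u → B y ≠ B u → ¬ (f x ↔ f y) → C x ≠ C y := by
    intro x y hx hy hf
    rw [hCn x hx, hCn y hy]
    by_cases h1 : f x <;> by_cases h2 : f y <;> simp_all
  have ha := (B.valid hua).symm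
  have hb := (B.valid hub).symm
  have hc : B c ≠ B u := hB ▸ (B.valid hvc).symm
  have hd : B d ≠ B u := hB ▸ (B.valid hvd).symm
  exact hsn (sudokuNumber_le_sub_two C huv hua hub (hne a b ha hb hf1)
    (fun h => ha (h ▸ hB.symm)) (fun h => hb (h ▸ hB.symm)) hvc hvd (hne c d hc hd hf2))

lemma star_iso (hconn : G.Connected) {v : V} (hv : TwoNbrs G v)
    (honly : ∀ w, TwoNbrs G w → w = v) :
    ∃ n : ℕ, 2 ≤ n ∧ Nonempty (G ≃g completeBipartiteGraph (Fin 1) (Fin n)) := by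
  classical
  have hall : ∀ x, x = v ∨ G.Adj v x := by
    refine forall_of_closed hconn (v := v) (Or.inl rfl) ?_
    rintro x y (rfl | hx) hxy
    · exact Or.inr hxy
    · exact Or.inl (eq_of_not_twoNbrs (fun h => hx.ne' (honly x h)) hxy hx.symm)
  have hadj : ∀ x, x ≠ v → G.Adj v x := fun x hx => (hall x).resolve_left hx
  have hnadj : ∀ x y, x ≠ v → y ≠ v → ¬ G.Adj x y := fun x y hx hy hxy =>
    hy (eq_of_not_twoNbrs (fun h => hx (honly x h)) hxy (hadj x hx).symm)
  obtain ⟨a, b, hab, ha, hb⟩ := hv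
  refine ⟨Fintype.card {x // ¬ x = v}, ?_, ⟨?_⟩⟩
  · exact Fintype.one_lt_card_iff.mpr ⟨⟨a, ha.ne'⟩, ⟨b, hb.ne'⟩, by simpa using hab⟩
  · let F : {x // x = v} ⊕ {x // ¬ x = v} ≃ Fin 1 ⊕ Fin (Fintype.card {x // ¬ x = v}) :=
      Equiv.sumCongr (Equiv.ofUnique _ _) (Fintype.equivFin _)
    let e : V ≃ Fin 1 ⊕ Fin (Fintype.card {x // ¬ x = v}) :=
      (Equiv.sumCompl (fun x => x = v)).symm.trans F
    refine ⟨e, ?_⟩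
    have hl : ∀ x, x = v → ∃ i, e x = Sum.inl i := by
      intro x hx
      exact ⟨_, congrArg F (Equiv.sumCompl_symm_apply_of_pos (p := fun x => x = v) hx)⟩
    have hr : ∀ x, x ≠ v → ∃ i, e x = Sum.inr i := by
      intro x hx
      exact ⟨_, congrArg F (Equiv.sumCompl_symm_apply_of_neg (p := fun x => x = v) hx)⟩
    intro x y
    by_cases hx : x = v <;> by_cases hy : y = v
    · obtain ⟨i, hi⟩ := hl x hx
      obtain ⟨j, hj⟩ := hl y hy
      rw [hi, hj]
      simp [hx, hy]
    · obtain ⟨i, hi⟩ := hl x hx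
      obtain ⟨j, hj⟩ := hr y hy
      rw [hi, hj]
      simpa [hx] using hadj y hy
    · obtain ⟨i, hi⟩ := hr x hx
      obtain ⟨j, hj⟩ := hl y hy
      rw [hi, hj]
      simpa [hy] using (hadj x hx).symm
    · obtain ⟨i, hi⟩ := hr x hx
      obtain ⟨j, hj⟩ := hr y hy
      rw [hi, hj]
      simpa using hnadj x y hx hy

/-- In a double star with centers `v`, `w`, two leaves `a`, `b` at `v` and a leaf `c` at `w` would
allow both centers to be erased. -/
lemma double_star_unique_leaf (hsn : ¬ sudokuNumber G 3 ≤ Fintype.card V - 2) {v w a b c : V}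
    (hvw : G.Adj v w) (honly : ∀ x, TwoNbrs G x → x = v ∨ x = w)
    (hedge : ∀ x y, G.Adj x y → x = v ∨ x = w ∨ y = v ∨ y = w)
    (ha : G.Adj v a) (haw : a ≠ w) (hb : G.Adj v b) (hbw : b ≠ w)
    (hc : G.Adj w c) (hcv : c ≠ v) : a = b := by
  classical
  by_contra hab
  -- A leaf at `v` is not adjacent to `w`.
  have hleaf : ∀ x, G.Adj v x → x ≠ w → ¬ G.Adj w x := fun x hx hxw h =>
    hvw.ne (eq_of_not_twoNbrs (fun ht => (honly x ht).elim hx.ne' hxw) hx.symm h.symm)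
  have hcb : c ≠ b := fun h => hleaf b hb hbw (h ▸ hc)
  let f : V → Fin 3 := fun x => if x = v then 2 else if x = w then 1 else if x = b then 1 else 0
  have hfv : ∀ y, G.Adj v y → f v ≠ f y := by
    intro y hy
    have : y ≠ v := hy.ne'
    simp only [f, this, if_true, if_false]
    split_ifs <;> decide
  have hfw : ∀ y, G.Adj w y → f w ≠ f y := by
    intro y hy
    by_cases hyv : y = v
    · rw [hyv]
      exact (hfv w hvw).symm
    · have h1 : y ≠ w := hy.ne'
      have h2 : y ≠ b := fun h => hleaf b hb hbw (h ▸ hy)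
      simp [f, hyv, h1, h2, hvw.ne']
  let C : G.Coloring (Fin 3) := Coloring.mk f (by
    intro x y hxy
    rcases hedge x y hxy with rfl | rfl | rfl | rfl
    · exact hfv y hxy
    · exact hfw y hxy
    · exact (hfv x hxy.symm).symm
    · exact (hfw x hxy.symm).symm)
  refine hsn (sudokuNumber_le_sub_two C hvw.ne ha hb ?_ haw hbw hc hvw.symm ?_)
  · change f a ≠ f b
    simp [f, ha.ne', haw, hab, hb.ne']
  · change f c ≠ f v
    simp [f, hcv, hc.ne', hcb]

lemma path_iso (hconn : G.Connected) (hsn : ¬ sudokuNumber G 3 ≤ Fintype.card V - 2) {v w : V}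
    (hvw : v ≠ w) (hv : TwoNbrs G v) (hw : TwoNbrs G w)
    (honly : ∀ x, TwoNbrs G x → x = v ∨ x = w) : Nonempty (G ≃g pathGraph 4) := by
  classical
  have hnot : ∀ x, x ≠ v → x ≠ w → ¬ TwoNbrs G x := fun x h1 h2 h => (honly x h).elim h1 h2
  have hadj : G.Adj v w := by
    by_contra hn
    have : ∀ x, x = v ∨ G.Adj v x := by
      refine forall_of_closed hconn (v := v) (Or.inl rfl) ?_
      rintro x y (rfl | hx) hxy
      · exact Or.inr hxy
      · exact Or.inl (eq_of_not_twoNbrs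
          (hnot x hx.ne' (fun h => hn (h ▸ hx))) hxy hx.symm)
    exact (this w).elim hvw.symm hn
  have hall : ∀ x, G.Adj v x ∨ G.Adj w x := by
    refine forall_of_closed hconn (v := v) (Or.inr hadj.symm) ?_
    intro x y hx hxy
    by_cases hxv : x = v
    · exact Or.inl (hxv ▸ hxy)
    by_cases hxw : x = w
    · exact Or.inr (hxw ▸ hxy)
    have hn := hnot x hxv hxw
    rcases hx with hx | hx
    · exact Or.inr (eq_of_not_twoNbrs hn hxy hx.symm ▸ hadj.symm)
    · exact Or.inl (eq_of_not_twoNbrs hn hxy hx.symm ▸ hadj)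
  have hedge : ∀ x y, G.Adj x y → x = v ∨ x = w ∨ y = v ∨ y = w := by
    intro x y hxy
    by_cases hxv : x = v
    · exact Or.inl hxv
    by_cases hxw : x = w
    · exact Or.inr (Or.inl hxw)
    have hn := hnot x hxv hxw
    rcases hall x with hx | hx
    · exact Or.inr (Or.inr (Or.inl (eq_of_not_twoNbrs hn hxy hx.symm)))
    · exact Or.inr (Or.inr (Or.inr (eq_of_not_twoNbrs hn hxy hx.symm)))
  obtain ⟨a, ha, haw⟩ : ∃ a, G.Adj v a ∧ a ≠ w := by
    obtain ⟨a, b, hab, ha, hb⟩ := hv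
    by_cases h : a = w
    · exact ⟨b, hb, fun h' => hab (h.trans h'.symm)⟩
    · exact ⟨a, ha, h⟩
  obtain ⟨c, hc, hcv⟩ : ∃ c, G.Adj w c ∧ c ≠ v := by
    obtain ⟨a, b, hab, ha, hb⟩ := hw
    by_cases h : a = v
    · exact ⟨b, hb, fun h' => hab (h.trans h'.symm)⟩
    · exact ⟨a, ha, h⟩
  have huv : ∀ x, G.Adj v x → x ≠ w → x = a := fun x hx hxw =>
    double_star_unique_leaf hsn hadj honly hedge hx hxw ha haw hc hcv
  have huw : ∀ x, G.Adj w x → x ≠ v → x = c := fun x hx hxv =>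
    double_star_unique_leaf hsn hadj.symm (fun x h => (honly x h).symm)
      (fun x y h => by have := hedge x y h; tauto) hx hxv hc hcv ha haw
  have hna : ¬ TwoNbrs G a := hnot a ha.ne' haw
  have hnc : ¬ TwoNbrs G c := hnot c hcv hc.ne'
  have haw' : ¬ G.Adj a w := fun h => hvw (eq_of_not_twoNbrs hna ha.symm h)
  have hcv' : ¬ G.Adj c v := fun h => hvw (eq_of_not_twoNbrs hnc h hc.symm)
  have hac' : ¬ G.Adj a c := fun h => hcv (eq_of_not_twoNbrs hna h ha.symm)
  have hac : a ≠ c := fun h => haw' (h ▸ hc.symm)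
  have hbij : Function.Bijective (![a, v, w, c] : Fin 4 → V) := by
    constructor
    · intro i j hij
      fin_cases i <;> fin_cases j <;>
        simp [ha.ne, ha.ne', hc.ne, hc.ne', hac, hac.symm, haw, haw.symm, hcv, hcv.symm,
          hvw, hvw.symm] at hij ⊢
    · intro x
      by_cases hxv : x = v
      · exact ⟨1, hxv.symm⟩
      by_cases hxw : x = w
      · exact ⟨2, hxw.symm⟩
      rcases hall x with hx | hx
      · exact ⟨0, (huv x hx hxw).symm⟩
      · exact ⟨3, (huw x hx hxv).symm⟩
  refine ⟨Iso.symm ⟨Equiv.ofBijective _ hbij, ?_⟩⟩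
  intro i j
  have haw'' : ¬ G.Adj w a := fun h => haw' h.symm
  have hcv'' : ¬ G.Adj v c := fun h => hcv' h.symm
  have hac'' : ¬ G.Adj c a := fun h => hac' h.symm
  fin_cases i <;> fin_cases j <;>
    simp [pathGraph_adj, ha, hc, hadj, ha.symm, hc.symm, hadj.symm, haw', hcv', hac',
      haw'', hcv'', hac'']

lemma star_sudoku (hbip : G.Colorable 2) {n : ℕ} (hn : 2 ≤ n)
    (e : G ≃g completeBipartiteGraph (Fin 1) (Fin n)) :
    sudokuNumber G 3 = Fintype.card V - 1 := by
  classical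
  have hadj : ∀ x y, G.Adj x y ↔ (completeBipartiteGraph (Fin 1) (Fin n)).Adj (e x) (e y) :=
    fun x y => e.map_rel_iff.symm
  let i : Fin n := ⟨0, by omega⟩
  let j : Fin n := ⟨1, by omega⟩
  have hij : i ≠ j := by simp [i, j]
  apply le_antisymm
  · let f : Fin 1 ⊕ Fin n → Fin 3 := Sum.elim (fun _ => 2) (fun k => if k = i then 1 else 0)
    let C : G.Coloring (Fin 3) := Coloring.mk (fun x => f (e x)) (by
      intro x y hxy
      rw [hadj] at hxy
      rcases h1 : e x with k | k <;> rcases h2 : e y with l | l <;>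
        simp [h1, h2] at hxy <;> simp only [f, Sum.elim_inl, Sum.elim_inr] <;>
        split_ifs <;> decide)
    refine sudokuNumber_le_sub_one C (u := e.symm (Sum.inl 0)) (a := e.symm (Sum.inr i))
      (b := e.symm (Sum.inr j)) ?_ ?_ ?_
    · simp [hadj]
    · simp [hadj]
    · change f (e _) ≠ f (e _)
      simp [f, hij.symm]
  · obtain ⟨S, hS, C0, h⟩ := exists_sudoku hbip
    rw [← hS]
    have hsub : Finset.univ.erase (e.symm (Sum.inl 0)) ⊆ S := by
      intro x hx
      by_contra hxS
      obtain ⟨a, b, hab, ha, hb⟩ := exists_nbrs_of_not_mem h hxS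
      rw [hadj] at ha hb
      rcases h1 : e x with k | k
      · rw [Subsingleton.elim k 0] at h1
        exact (Finset.ne_of_mem_erase hx) (by rw [← h1]; simp)
      · rcases h2 : e a with l | l <;> simp [h1, h2] at ha
        rcases h3 : e b with m | m <;> simp [h1, h3] at hb
        apply hab
        apply e.injective
        rw [h2, h3, Subsingleton.elim l m]
    have := Finset.card_le_card hsub
    rwa [Finset.card_erase_of_mem (Finset.mem_univ _), Finset.card_univ] at this

/-- The inner vertices of a properly 3-colored `P₄` can always be recolored with the ends fixed. -/
lemma path_recolor : ∀ a b c d : Fin 3, a ≠ b → b ≠ c → c ≠ d →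
    ∃ b' c', (b' ≠ b ∨ c' ≠ c) ∧ a ≠ b' ∧ b' ≠ c' ∧ c' ≠ d := by
  decide

lemma path_sudoku (hbip : G.Colorable 2) (e : G ≃g pathGraph 4) :
    sudokuNumber G 3 = Fintype.card V - 1 := by
  classical
  have hadj : ∀ x y, G.Adj x y ↔ (pathGraph 4).Adj (e x) (e y) :=
    fun x y => e.map_rel_iff.symm
  have hcard : Fintype.card V = 4 := by simpa using Fintype.card_congr e.toEquiv
  let mk : ∀ a b c d : Fin 3, a ≠ b → b ≠ c → c ≠ d → G.Coloring (Fin 3) :=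
    fun a b c d h1 h2 h3 => Coloring.mk (fun x => (![a, b, c, d] : Fin 4 → Fin 3) (e x)) (by
      intro x y hxy
      rw [hadj] at hxy
      generalize e x = i at hxy ⊢
      generalize e y = j at hxy ⊢
      fin_cases i <;> fin_cases j <;> simp [pathGraph_adj] at hxy <;>
        simp [h1, h2, h3, h1.symm, h2.symm, h3.symm])
  have hmk : ∀ a b c d h1 h2 h3 x, mk a b c d h1 h2 h3 x =
      (![a, b, c, d] : Fin 4 → Fin 3) (e x) := fun _ _ _ _ _ _ _ _ => rfl
  apply le_antisymm
  · refine sudokuNumber_le_sub_one (mk 0 2 1 0 (by decide) (by decide) (by decide))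
      (u := e.symm 1) (a := e.symm 0) (b := e.symm 2) ?_ ?_ ?_
    · simp [hadj, pathGraph_adj]
    · simp [hadj, pathGraph_adj]
    · simp [hmk]
  · obtain ⟨S, hS, C0, h⟩ := exists_sudoku hbip
    rw [← hS]
    by_contra hlt
    have hend : ∀ x, x ∉ S → e x = 1 ∨ e x = 2 := by
      intro x hx
      obtain ⟨a, b, hab, ha, hb⟩ := exists_nbrs_of_not_mem h hx
      rw [hadj] at ha hb
      have hab' : e a ≠ e b := fun h => hab (e.injective h)
      generalize e x = i at ha hb ⊢
      generalize e a = j at ha hab'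
      generalize e b = k at hb hab'
      rw [pathGraph_adj] at ha hb
      omega
    obtain ⟨u, hu, v, hv, huv⟩ : ∃ u, u ∉ S ∧ ∃ v, v ∉ S ∧ u ≠ v := by
      have hc : 1 < Sᶜ.card := by rw [Finset.card_compl]; omega
      obtain ⟨u, hu, v, hv, huv⟩ := Finset.one_lt_card.mp hc
      exact ⟨u, by simpa using hu, v, by simpa using hv, huv⟩
    have hSe : ∀ s ∈ S, e s = 0 ∨ e s = 3 := by
      intro s hs
      have h1 : e s ≠ e u := fun h => hu (e.injective h ▸ hs)
      have h2 : e s ≠ e v := fun h => hv (e.injective h ▸ hs)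
      have h3 : e u ≠ e v := fun h => huv (e.injective h)
      have h4 := hend u hu
      have h5 := hend v hv
      omega
    obtain ⟨C, hC, huniq⟩ := h
    obtain ⟨b', c', hne, h1, h2, h3⟩ := path_recolor (C (e.symm 0)) (C (e.symm 1))
      (C (e.symm 2)) (C (e.symm 3)) (C.valid (by simp [hadj, pathGraph_adj]))
      (C.valid (by simp [hadj, pathGraph_adj])) (C.valid (by simp [hadj, pathGraph_adj]))
    have hD := huniq (mk _ b' c' _ h1 h2 h3) (by
      intro s hs
      rw [← hC s hs, hmk _ _ _ _ h1 h2 h3]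
      rcases hSe s hs with h | h
      · have : s = e.symm 0 := by rw [← h]; simp
        rw [h, this]; rfl
      · have : s = e.symm 3 := by rw [← h]; simp
        rw [h, this]; rfl)
    have hb : b' = C (e.symm 1) := by rw [← hD, hmk _ _ _ _ h1 h2 h3]; simp
    have hc : c' = C (e.symm 2) := by rw [← hD, hmk _ _ _ _ h1 h2 h3]; simp
    exact hne.elim (fun h => h hb) (fun h => h hc)

end SudokuThree

open SudokuThree in
/-- For a finite connected bipartite graph `G`: `sn(G,3) = n(G) - 1` iff `G` is a star
`K_{1,n}` with `n ≥ 2` or the path `P₄`. -/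
theorem sudokuNumber_three_eq_card_sub_one_iff {V : Type*} [Fintype V] (G : SimpleGraph V)
    (hconn : G.Connected) (hbip : G.Colorable 2) :
    sudokuNumber G 3 = Fintype.card V - 1 ↔
      (∃ n : ℕ, 2 ≤ n ∧ Nonempty (G ≃g completeBipartiteGraph (Fin 1) (Fin n))) ∨
      Nonempty (G ≃g pathGraph 4) := by
  classical
  constructor
  · intro h
    obtain ⟨S, hS, C0, hsud⟩ := exists_sudoku hbip
    have hpos : 0 < Fintype.card V := Fintype.card_pos_iff.mpr hconn.nonempty
    obtain ⟨v, hv⟩ : ∃ v, v ∉ S := by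
      by_contra hall
      push Not at hall
      have := Finset.card_eq_iff_eq_univ S |>.mpr (Finset.eq_univ_of_forall hall)
      omega
    have hv2 := exists_nbrs_of_not_mem hsud hv
    -- Two vertices are needed for `n - 1 > n - 2` in truncated subtraction.
    have hsn : ¬ sudokuNumber G 3 ≤ Fintype.card V - 2 := by
      obtain ⟨a, b, hab, -⟩ := hv2
      have := Fintype.one_lt_card_iff.mpr ⟨a, b, hab⟩
      omega
    obtain ⟨B⟩ := hbip
    by_cases hex : ∃ w, TwoNbrs G w ∧ w ≠ v
    · obtain ⟨w, hw2, hwv⟩ := hex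
      refine Or.inr (path_iso hconn hsn hwv.symm hv2 hw2 fun x hx => ?_)
      have hB : B w ≠ B v := fun hB => hwv (eq_of_same_side B hsn hB hw2 hv2)
      have hside : B x = B v ∨ B x = B w := by omega
      exact hside.imp (fun h => eq_of_same_side B hsn h hx hv2)
        (fun h => eq_of_same_side B hsn h hx hw2)
    · push Not at hex
      exact Or.inl (star_iso hconn hv2 hex)
  · rintro (⟨n, hn, ⟨e⟩⟩ | ⟨⟨e⟩⟩)
    · exact star_sudoku hbip hn e
    · exact path_sudoku hbip e
end

section
/- Let G be a finite connected bipartite simple graph of order n(G). Then sn(G,3) = n(G) − 2 if and only if G is isomorphic to one of the following graphs: a bistar B_{m,n} with (m,n) ≠ (1,1); the path P₅; the path P₆; the cycle C₄; the graph obtained from C₄ by attaching exactly one pendant vertex to one vertex of C₄; the graph obtained from the path P₄ by attaching l > 1 pendant vertices to one end vertex of P₄; or the graph obtained from the path P₅ by attaching one pendant vertex to the central vertex of P₅. -/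
/-!
`n - sn(G, 3)` is the largest size of a set `T` of vertices whose colours, in some proper
3-coloring `c`, are determined by the colours off `T`. Such a set is called freed (`Rigid G c T`).
The theorem thus asks when the largest freed set has exactly two elements.

*Freeing vertices.* If every vertex of `T` can in turn be recovered from two differently coloured
neighbours that are fixed or already recovered, then `T` is freed (`Rigid.insert`,
`sn_add_two_le`, `sn_add_three_le`). In the other direction, a freed vertex has at least two
neighbours (`Rigid.nonLeaf`), and small configurations that could be recolored are excluded by
`Rigid.not_adj` and `Rigid.not_path`. These facts give the value `n - 2` for each listed graph.

*At most two non-pendant vertices on each side.* Suppose `u`, `v`, `w` on one side of the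
bipartition have degree at least two, and choose two neighbours of each. The three pairs are the
edges of a graph on the other side. If this graph is 2-colorable, color the other side accordingly
with two colours and the side of `u` with the third: then `u`, `v`, `w` are freed. Otherwise the
pairs form a triangle. If some vertex on the side of `u` has degree at least three, then it and two
of the three vertices, with suitable neighbour pairs, form no triangle. If none has, color the
triangle with three colours; every vertex on the side of `u` has at most two neighbours and hence a
free colour, and `u`, `v`, `w` are freed again. This is `sn_add_three_le_of_side`.

*Classification.* Let the largest freed set have two elements. The non-pendant vertices induce a
connected bipartite graph with at most two vertices on each side, and there are at least two of
them, so they induce `K₂`, `P₃`, `P₄` or `C₄`. Every other vertex is pendant at one of them, and a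
coloring of the non-pendant vertices extends to the pendant ones with almost arbitrary colours
(`exists_coloring`). Exhibiting a coloring that frees three vertices whenever there are too many
pendant vertices leaves the bistars for `K₂`; `P₅`, `P₄` with pendant vertices at one end, and `P₅`
with a central pendant vertex for `P₃`; `P₆` for `P₄`; and `C₄` with at most one pendant vertex for
`C₄`.
-/

open SimpleGraph

/-- The cycle `C₄` with exactly one pendant vertex attached to one of its vertices. -/
def c4Pendant : SimpleGraph (Fin 5) :=
  SimpleGraph.fromRel (fun a b =>
    (a = 0 ∧ b = 1) ∨ (a = 1 ∧ b = 2) ∨ (a = 2 ∧ b = 3) ∨ (a = 3 ∧ b = 0) ∨ (a = 0 ∧ b = 4))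

/-- The path `P₄` with `l` pendant vertices attached to one end vertex. -/
def p4Pendants (l : ℕ) : SimpleGraph (Fin 4 ⊕ Fin l) :=
  SimpleGraph.fromRel (fun a b =>
    (∃ i j : Fin 4, a = Sum.inl i ∧ b = Sum.inl j ∧ (pathGraph 4).Adj i j) ∨
    (∃ i : Fin l, a = Sum.inl 3 ∧ b = Sum.inr i))

/-- The path `P₅` (`0-1-2-3-4`) with one pendant vertex attached to its central vertex `2`. -/
def p5CentralPendant : SimpleGraph (Fin 6) :=
  SimpleGraph.fromRel (fun a b =>
    (a = 0 ∧ b = 1) ∨ (a = 1 ∧ b = 2) ∨ (a = 2 ∧ b = 3) ∨ (a = 3 ∧ b = 4) ∨ (a = 2 ∧ b = 5))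

/-- A vertex with at least two neighbours, i.e. neither isolated nor pendant. -/
def NonLeaf {V : Type*} (G : SimpleGraph V) (v : V) : Prop :=
  ∃ x y, x ≠ y ∧ G.Adj v x ∧ G.Adj v y

/-- The colours of `c` off `T` determine those on `T`: `c` is the only proper 3-coloring agreeing
with `c` outside `T`. Thus `c` restricted to the complement of `T` is a 3-Sudoku coloring. -/
def Rigid {V : Type*} (G : SimpleGraph V) (c : G.Coloring (Fin 3)) (T : Finset V) : Prop :=
  ∀ d : G.Coloring (Fin 3), (∀ v, v ∉ T → d v = c v) → ∀ v, d v = c v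

section Basic

variable {V : Type*} {G : SimpleGraph V}

theorem Rigid.sn_le [Fintype V] {c : G.Coloring (Fin 3)} {T : Finset V} (h : Rigid G c T) :
    sudokuNumber G 3 + T.card ≤ Fintype.card V := by
  classical
  have h1 : sudokuNumber G 3 ≤ Tᶜ.card := by
    apply Nat.sInf_le
    refine ⟨Tᶜ, rfl, c, c, fun v _ => rfl, fun d hd => ?_⟩
    exact DFunLike.ext _ _ (h d fun v hv => hd v (by simpa using hv))
  have h2 := Finset.card_compl_add_card T
  omega

/-- The Sudoku number is attained: `n - sn(G, 3)` is the size of some freed set. -/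
theorem exists_rigid_eq [Fintype V] (hcol : G.Colorable 3) :
    ∃ (c : G.Coloring (Fin 3)) (T : Finset V), Rigid G c T ∧
      sudokuNumber G 3 + T.card = Fintype.card V := by
  classical
  have hne : {m | ∃ S : Finset V, S.card = m ∧ ∃ C0 : V → Fin 3,
      ∃! C : G.Coloring (Fin 3), ∀ v ∈ S, C v = C0 v}.Nonempty := by
    refine ⟨_, Finset.univ, rfl, hcol.some, hcol.some, fun v _ => rfl, fun d hd => ?_⟩
    exact DFunLike.ext _ _ fun v => hd v (Finset.mem_univ v)
  obtain ⟨S, hS, C0, c, hc, huniq⟩ := Nat.sInf_mem hne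
  refine ⟨c, Sᶜ, fun d hd v => ?_, ?_⟩
  · rw [huniq d fun w hw => (hd w (by simpa using hw)).trans (hc w hw)]
  · have := Finset.card_compl_add_card S
    unfold sudokuNumber
    omega

theorem Rigid.mono {c : G.Coloring (Fin 3)} {T T' : Finset V} (h : Rigid G c T) (hs : T' ⊆ T) :
    Rigid G c T' :=
  fun d hd => h d fun v hv => hd v fun h' => hv (hs h')

theorem rigid_empty (c : G.Coloring (Fin 3)) : Rigid G c ∅ :=
  fun d hd v => hd v (by simp)

/-- A vertex that sees two different colours outside the free set may itself be freed. -/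
theorem Rigid.insert [DecidableEq V] {c : G.Coloring (Fin 3)} {T : Finset V} (h : Rigid G c T)
    {v x y : V} (hx : G.Adj v x) (hy : G.Adj v y) (hxT : x ∉ T) (hyT : y ∉ T)
    (hxy : c x ≠ c y) : Rigid G c (insert v T) := by
  intro d hd
  apply h
  intro w hw
  by_cases hwv : w = v
  · subst hwv
    have h1 := hd x (by simp [hx.ne', hxT])
    have h2 := hd y (by simp [hy.ne', hyT])
    have h3 := d.valid hx
    have h4 := d.valid hy
    have h5 := c.valid hx
    have h6 := c.valid hy
    omega
  · exact hd w (by simp [hwv, hw])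

theorem sn_add_two_le [Fintype V] (c : G.Coloring (Fin 3)) {t₁ t₂ x₁ y₁ x₂ y₂ : V}
    (h12 : t₁ ≠ t₂)
    (hx₁ : G.Adj t₁ x₁) (hy₁ : G.Adj t₁ y₁) (hx₂ : G.Adj t₂ x₂) (hy₂ : G.Adj t₂ y₂)
    (n₁ : x₁ ≠ t₂) (n₂ : y₁ ≠ t₂)
    (c₁ : c x₁ ≠ c y₁) (c₂ : c x₂ ≠ c y₂) :
    sudokuNumber G 3 + 2 ≤ Fintype.card V := by
  classical
  have := (((rigid_empty c).insert hx₂ hy₂ (by simp) (by simp) c₂).insert hx₁ hy₁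
    (by simp [n₁]) (by simp [n₂]) c₁).sn_le
  simpa [h12] using this

/-- Three vertices that can be recovered one after the other, each from two differently coloured
neighbours that are fixed or already recovered, can be freed simultaneously. -/
theorem sn_add_three_le [Fintype V] (c : G.Coloring (Fin 3)) {t₁ t₂ t₃ x₁ y₁ x₂ y₂ x₃ y₃ : V}
    (h12 : t₁ ≠ t₂) (h13 : t₁ ≠ t₃) (h23 : t₂ ≠ t₃)
    (hx₁ : G.Adj t₁ x₁) (hy₁ : G.Adj t₁ y₁) (hx₂ : G.Adj t₂ x₂) (hy₂ : G.Adj t₂ y₂)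
    (hx₃ : G.Adj t₃ x₃) (hy₃ : G.Adj t₃ y₃)
    (n₁ : x₁ ≠ t₂) (n₂ : x₁ ≠ t₃) (n₃ : y₁ ≠ t₂) (n₄ : y₁ ≠ t₃) (n₅ : x₂ ≠ t₃) (n₆ : y₂ ≠ t₃)
    (c₁ : c x₁ ≠ c y₁) (c₂ : c x₂ ≠ c y₂) (c₃ : c x₃ ≠ c y₃) :
    sudokuNumber G 3 + 3 ≤ Fintype.card V := by
  classical
  have := ((((rigid_empty c).insert hx₃ hy₃ (by simp) (by simp) c₃).insert hx₂ hy₂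
    (by simp [n₅]) (by simp [n₆]) c₂).insert hx₁ hy₁
    (by simp [n₁, n₂]) (by simp [n₃, n₄]) c₁).sn_le
  simpa [h12, h13, h23] using this

/-- Freed vertices have two neighbours: otherwise a further colour is available for them. -/
theorem Rigid.nonLeaf {c : G.Coloring (Fin 3)} {T : Finset V} (h : Rigid G c T) {v : V}
    (hv : v ∈ T) : NonLeaf G v := by
  classical
  by_contra hn
  obtain ⟨q, hq, hqc⟩ : ∃ q : Fin 3, (∀ x, G.Adj v x → c x ≠ q) ∧ q ≠ c v := by
    by_cases hx : ∃ x, G.Adj v x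
    · obtain ⟨x, hx⟩ := hx
      have hu : ∀ y, G.Adj v y → y = x := fun y hy => by
        by_contra hyx; exact hn ⟨y, x, hyx, hy, hx⟩
      obtain ⟨q, hq⟩ := (by decide : ∀ a b : Fin 3, ∃ q, a ≠ q ∧ q ≠ b) (c x) (c v)
      exact ⟨q, fun y hy => hu y hy ▸ hq.1, hq.2⟩
    · exact ⟨c v + 1, fun x h' => (hx ⟨x, h'⟩).elim, by omega⟩
  have := h (Coloring.mk (Function.update c v q) (by
    intro a b hab
    have := c.valid hab
    have := hab.ne
    have := hq a
    have := hq b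
    have := hab.symm
    simp only [Function.update_apply]
    grind)) (by
    intro w hw
    have : w ≠ v := by rintro rfl; exact hw hv
    change Function.update c v q w = _
    simp [this]) v
  change Function.update c v q v = _ at this
  simp at this
  exact hqc this

/-- Two vertices cannot both be freed if each has at most one neighbour besides the other. -/
theorem Rigid.not_adj {c : G.Coloring (Fin 3)} {T : Finset V} (h : Rigid G c T) {u v a b : V}
    (hu : u ∈ T) (hv : v ∈ T) (huv : u ≠ v)
    (hNu : ∀ x, G.Adj u x → x = v ∨ x = a) (hNv : ∀ x, G.Adj v x → x = u ∨ x = b) : False := by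
  classical
  obtain ⟨p, q, h1, h2, h3, h4⟩ := (by decide : ∀ a b u v : Fin 3, ∃ p q : Fin 3, p ≠ a ∧ q ≠ b ∧
    p ≠ q ∧ (p ≠ u ∨ q ≠ v)) (c a) (c b) (c u) (c v)
  have key := h (Coloring.mk (fun x => if x = u then p else if x = v then q else c x) (by
    intro x y hab
    have := c.valid hab
    have := hab.ne
    have := hNu x
    have := hNu y
    have := hNv x
    have := hNv y
    have := hab.symm
    grind)) (by
    intro w hw
    change (if w = u then p else if w = v then q else c w) = _
    grind)
  have k1 := key u
  have k2 := key v
  change (if u = u then p else if u = v then q else c u) = _ at k1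
  change (if v = u then p else if v = v then q else c v) = _ at k2
  grind

/-- Three vertices forming a path with non-adjacent ends cannot all be freed if each has at most one
neighbour off the path. -/
theorem Rigid.not_path {c : G.Coloring (Fin 3)} {T : Finset V} (h : Rigid G c T)
    {u v w a b d : V} (hu : u ∈ T) (hv : v ∈ T) (hw : w ∈ T)
    (huv : u ≠ v) (huw : u ≠ w) (hvw : v ≠ w)
    (ha : a ≠ w)
    (hNu : ∀ x, G.Adj u x → x = v ∨ x = a) (hNv : ∀ x, G.Adj v x → x = u ∨ x = w ∨ x = b)
    (hNw : ∀ x, G.Adj w x → x = v ∨ x = d) : False := by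
  classical
  -- `v` can move to a colour other than `c v` and `c b`; each end then still has a free colour.
  obtain ⟨p, q, r, h1, h2, h3, h4, h5, h6⟩ : ∃ p q r : Fin 3, p ≠ c a ∧ q ≠ c b ∧ r ≠ c d ∧
      p ≠ q ∧ q ≠ r ∧ (p ≠ c u ∨ q ≠ c v ∨ r ≠ c w) := by
    obtain ⟨q, hq⟩ := (by decide : ∀ a b : Fin 3, ∃ q, q ≠ a ∧ q ≠ b) (c b) (c v)
    obtain ⟨p, hp⟩ := (by decide : ∀ a b : Fin 3, ∃ q, q ≠ a ∧ q ≠ b) (c a) q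
    obtain ⟨r, hr⟩ := (by decide : ∀ a b : Fin 3, ∃ q, q ≠ a ∧ q ≠ b) (c d) q
    exact ⟨p, q, r, hp.1, hq.1, hr.1, hp.2, hr.2.symm, Or.inr (Or.inl hq.2)⟩
  have key := h (Coloring.mk
    (fun x => if x = u then p else if x = v then q else if x = w then r else c x) (by
    intro x y hab
    have := c.valid hab
    have := hab.ne
    have := hNu x
    have := hNu y
    have := hNv x
    have := hNv y
    have := hNw x
    have := hNw y
    have := hab.symm
    grind)) (by
    intro w' hw'
    change (if w' = u then p else if w' = v then q else if w' = w then r else c w') = _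
    grind)
  have k1 := key u
  have k2 := key v
  have k3 := key w
  change (if u = u then p else if u = v then q else if u = w then r else c u) = _ at k1
  change (if v = u then p else if v = v then q else if v = w then r else c v) = _ at k2
  change (if w = u then p else if w = v then q else if w = w then r else c w) = _ at k3
  grind

theorem sn_eq_of [Fintype V] (hcol : G.Colorable 3)
    (h2 : sudokuNumber G 3 + 2 ≤ Fintype.card V)
    (h3 : ∀ (c : G.Coloring (Fin 3)) (T : Finset V), Rigid G c T → T.card ≤ 2) :
    sudokuNumber G 3 = Fintype.card V - 2 := by
  obtain ⟨c, T, h, hT⟩ := exists_rigid_eq hcol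
  have := h3 c T h
  omega

theorem sudokuNumber_le_of_iso {W : Type*} [Fintype V] [Fintype W] {H : SimpleGraph W}
    (e : G ≃g H) (hcol : H.Colorable 3) : sudokuNumber G 3 ≤ sudokuNumber H 3 := by
  classical
  obtain ⟨c, T, h, hT⟩ := exists_rigid_eq hcol
  have hr : Rigid G (c.comp e.toHom) (T.map e.symm.toEquiv.toEmbedding) := by
    intro d hd v
    have := h (d.comp e.symm.toHom) (by
      intro w hw
      have := hd (e.symm w) (by
        rw [Finset.mem_map_equiv]
        change e (e.symm w) ∉ T
        simpa using hw)
      simpa using this) (e v)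
    simpa using this
  have h1 := hr.sn_le
  have h2 := Fintype.card_congr e.toEquiv
  simp at h1
  omega

theorem sudokuNumber_congr {W : Type*} [Fintype V] [Fintype W] {H : SimpleGraph W}
    (e : G ≃g H) (hcol : H.Colorable 3) : sudokuNumber G 3 = sudokuNumber H 3 :=
  (sudokuNumber_le_of_iso e hcol).antisymm
    (sudokuNumber_le_of_iso e.symm (hcol.of_hom e.toHom))

end Basic

/-! ### The graphs of the list -/

section Graphs

theorem card_le_two_of_subset {V : Type*} [DecidableEq V] {T : Finset V} {a b : V}
    (h : ∀ x ∈ T, x = a ∨ x = b) : T.card ≤ 2 :=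
  (Finset.card_le_card (t := {a, b}) fun x hx => by simpa using h x hx).trans Finset.card_le_two

theorem sn_of_iso {V W : Type*} [Fintype V] [Fintype W] {G : SimpleGraph V} {H : SimpleGraph W}
    (e : G ≃g H) (hcol : G.Colorable 2) (h2 : sudokuNumber H 3 + 2 ≤ Fintype.card W)
    (h3 : ∀ (c : H.Coloring (Fin 3)) (T : Finset W), Rigid H c T → T.card ≤ 2) :
    sudokuNumber G 3 = Fintype.card V - 2 := by
  have hH : H.Colorable 3 := (hcol.of_hom e.symm.toHom).mono (by norm_num)
  rw [sudokuNumber_congr e hH, Fintype.card_congr e.toEquiv]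
  exact sn_eq_of hH h2 h3

/-- At most two vertices of a bistar are not pendant. -/
theorem bistar_card_le {m n : ℕ} (c : (bistar m n).Coloring (Fin 3))
    (T : Finset (Option (Fin m) ⊕ Option (Fin n))) (h : Rigid _ c T) : T.card ≤ 2 := by
  apply card_le_two_of_subset (a := Sum.inl none) (b := Sum.inr none)
  intro x hx
  obtain ⟨y, z, hyz, hy, hz⟩ := h.nonLeaf hx
  rcases x with (_ | x) | (_ | x) <;> simp_all [bistar]

theorem bistar_sn_le {m n : ℕ} (hm : 1 ≤ m) (hn : 1 ≤ n) (h : (m, n) ≠ (1, 1)) :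
    sudokuNumber (bistar m n) 3 + 2 ≤ Fintype.card (Option (Fin m) ⊕ Option (Fin n)) := by
  by_cases hm2 : 2 ≤ m
  · refine sn_add_two_le (Coloring.mk (Sum.elim (fun a => a.elim 0 fun i => if i.1 = 0 then 1 else 2)
      (fun b => b.elim 1 fun _ => 2)) ?_) (t₁ := Sum.inl none) (t₂ := Sum.inr none)
      (x₁ := Sum.inl (some ⟨0, hm⟩)) (y₁ := Sum.inl (some ⟨1, hm2⟩))
      (x₂ := Sum.inl none) (y₂ := Sum.inr (some ⟨0, hn⟩))
      ?_ ?_ ?_ ?_ ?_ ?_ ?_ ?_ ?_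
    · rintro ((_ | a) | (_ | a)) ((_ | b) | (_ | b)) <;> simp [bistar] <;> split_ifs <;> decide
    all_goals first
      | (simp [bistar]; done) | exact (by decide : (0 : Fin 3) ≠ 2)
      | exact (by decide : (1 : Fin 3) ≠ 2)
  · have hn2 : 2 ≤ n := by
      by_contra hn2
      exact h (by rw [Prod.mk.injEq]; omega)
    refine sn_add_two_le (Coloring.mk (Sum.elim (fun b => b.elim 1 fun _ => 2)
      (fun a => a.elim 0 fun i => if i.1 = 0 then 1 else 2)) ?_) (t₁ := Sum.inr none)
      (t₂ := Sum.inl none)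
      (x₁ := Sum.inr (some ⟨0, hn⟩)) (y₁ := Sum.inr (some ⟨1, hn2⟩))
      (x₂ := Sum.inr none) (y₂ := Sum.inl (some ⟨0, hm⟩))
      ?_ ?_ ?_ ?_ ?_ ?_ ?_ ?_ ?_
    · rintro ((_ | a) | (_ | a)) ((_ | b) | (_ | b)) <;> simp [bistar] <;> split_ifs <;> decide
    all_goals first
      | (simp [bistar]; done) | exact (by decide : (0 : Fin 3) ≠ 2)
      | exact (by decide : (1 : Fin 3) ≠ 2)

theorem pathGraph_five_sn_le : sudokuNumber (pathGraph 5) 3 + 2 ≤ Fintype.card (Fin 5) := by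
  refine sn_add_two_le (Coloring.mk ![0, 1, 2, 0, 1] ?_) (t₁ := 1) (t₂ := 3)
      (x₁ := 0) (y₁ := 2) (x₂ := 2) (y₂ := 4) ?_ ?_ ?_ ?_ ?_ ?_ ?_ ?_ ?_ <;>
    first | decide | (simp only [pathGraph_adj]; decide)

theorem pathGraph_six_sn_le : sudokuNumber (pathGraph 6) 3 + 2 ≤ Fintype.card (Fin 6) := by
  refine sn_add_two_le (Coloring.mk ![0, 1, 2, 0, 1, 0] ?_) (t₁ := 1) (t₂ := 3)
      (x₁ := 0) (y₁ := 2) (x₂ := 2) (y₂ := 4) ?_ ?_ ?_ ?_ ?_ ?_ ?_ ?_ ?_ <;>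
    first | decide | (simp only [pathGraph_adj]; decide)

theorem cycleGraph_four_sn_le : sudokuNumber (cycleGraph 4) 3 + 2 ≤ Fintype.card (Fin 4) := by
  refine sn_add_two_le (Coloring.mk ![2, 0, 2, 1] ?_) (t₁ := 0) (t₂ := 2)
      (x₁ := 1) (y₁ := 3) (x₂ := 1) (y₂ := 3) ?_ ?_ ?_ ?_ ?_ ?_ ?_ ?_ ?_ <;> decide

theorem c4Pendant_sn_le : sudokuNumber c4Pendant 3 + 2 ≤ Fintype.card (Fin 5) := by
  refine sn_add_two_le (Coloring.mk ![2, 0, 2, 1, 0] ?_) (t₁ := 0) (t₂ := 2)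
      (x₁ := 1) (y₁ := 3) (x₂ := 1) (y₂ := 3) ?_ ?_ ?_ ?_ ?_ ?_ ?_ ?_ ?_ <;>
    first | decide | (simp only [c4Pendant, fromRel_adj]; decide)

theorem p5CentralPendant_sn_le : sudokuNumber p5CentralPendant 3 + 2 ≤ Fintype.card (Fin 6) := by
  refine sn_add_two_le (Coloring.mk ![0, 1, 2, 0, 1, 0] ?_) (t₁ := 1) (t₂ := 3)
      (x₁ := 0) (y₁ := 2) (x₂ := 2) (y₂ := 4) ?_ ?_ ?_ ?_ ?_ ?_ ?_ ?_ ?_ <;>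
    first | decide | (simp only [p5CentralPendant, fromRel_adj]; decide)

@[simp]
theorem p4Pendants_inl_inl {l : ℕ} (i j : Fin 4) :
    (p4Pendants l).Adj (Sum.inl i) (Sum.inl j) ↔ (pathGraph 4).Adj i j := by
  simp only [p4Pendants, fromRel_adj]
  constructor
  · rintro ⟨-, (⟨i, j, h1, h2, h⟩ | ⟨i, -, h⟩) | (⟨i, j, h1, h2, h⟩ | ⟨i, -, h⟩)⟩ <;> simp_all
    exact h.symm
  · intro h
    exact ⟨by simpa using h.ne, Or.inl (Or.inl ⟨i, j, rfl, rfl, h⟩)⟩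

@[simp]
theorem p4Pendants_inl_inr {l : ℕ} (i : Fin 4) (j : Fin l) :
    (p4Pendants l).Adj (Sum.inl i) (Sum.inr j) ↔ i = 3 := by
  simp [p4Pendants]

@[simp]
theorem p4Pendants_inr_inl {l : ℕ} (i : Fin 4) (j : Fin l) :
    (p4Pendants l).Adj (Sum.inr j) (Sum.inl i) ↔ i = 3 := by
  simp [p4Pendants]

@[simp]
theorem p4Pendants_inr_inr {l : ℕ} (i j : Fin l) :
    ¬ (p4Pendants l).Adj (Sum.inr i) (Sum.inr j) := by
  simp [p4Pendants]

theorem p4Pendants_sn_le {l : ℕ} (hl : 1 < l) :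
    sudokuNumber (p4Pendants l) 3 + 2 ≤ Fintype.card (Fin 4 ⊕ Fin l) := by
  refine sn_add_two_le (Coloring.mk (Sum.elim ![0, 1, 2, 0] fun _ => 1) ?_)
      (t₁ := Sum.inl 1) (t₂ := Sum.inl 3)
      (x₁ := Sum.inl 0) (y₁ := Sum.inl 2) (x₂ := Sum.inl 2) (y₂ := Sum.inr ⟨0, by omega⟩)
      ?_ ?_ ?_ ?_ ?_ ?_ ?_ ?_ ?_
  · rintro (a | a) (b | b) <;> simp [pathGraph_adj]
    · revert a b; decide
    · rintro rfl; decide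
    · rintro rfl; decide
  all_goals first
    | (simp [pathGraph_adj]; done) | exact (by decide : (0 : Fin 3) ≠ 2)
    | exact (by decide : (2 : Fin 3) ≠ 1)

theorem pathGraph_five_card_le (c : (pathGraph 5).Coloring (Fin 3)) (T : Finset (Fin 5))
    (h : Rigid _ c T) : T.card ≤ 2 := by
  have hN : ∀ x ∈ T, x ≠ 0 ∧ x ≠ 4 := fun x hx => by
    have := h.nonLeaf hx
    simp only [NonLeaf, pathGraph_adj] at this
    clear hx
    revert x; decide
  have h12 : ¬ (1 ∈ T ∧ 2 ∈ T) := fun hx =>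
    h.not_adj (a := 0) (b := 3) hx.1 hx.2 (by decide) (by simp only [pathGraph_adj]; decide)
      (by simp only [pathGraph_adj]; decide)
  have h23 : ¬ (2 ∈ T ∧ 3 ∈ T) := fun hx =>
    h.not_adj (a := 1) (b := 4) hx.1 hx.2 (by decide) (by simp only [pathGraph_adj]; decide)
      (by simp only [pathGraph_adj]; decide)
  clear h
  revert T
  decide

theorem pathGraph_six_card_le (c : (pathGraph 6).Coloring (Fin 3)) (T : Finset (Fin 6))
    (h : Rigid _ c T) : T.card ≤ 2 := by
  have hN : ∀ x ∈ T, x ≠ 0 ∧ x ≠ 5 := fun x hx => by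
    have := h.nonLeaf hx
    simp only [NonLeaf, pathGraph_adj] at this
    clear hx
    revert x; decide
  have h12 : ¬ (1 ∈ T ∧ 2 ∈ T) := fun hx =>
    h.not_adj (a := 0) (b := 3) hx.1 hx.2 (by decide) (by simp only [pathGraph_adj]; decide)
      (by simp only [pathGraph_adj]; decide)
  have h34 : ¬ (3 ∈ T ∧ 4 ∈ T) := fun hx =>
    h.not_adj (a := 2) (b := 5) hx.1 hx.2 (by decide) (by simp only [pathGraph_adj]; decide)
      (by simp only [pathGraph_adj]; decide)
  clear h
  revert T
  decide

theorem cycleGraph_four_card_le (c : (cycleGraph 4).Coloring (Fin 3)) (T : Finset (Fin 4))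
    (h : Rigid _ c T) : T.card ≤ 2 := by
  have h01 : ¬ (0 ∈ T ∧ 1 ∈ T) := fun hx =>
    h.not_adj (a := 3) (b := 2) hx.1 hx.2 (by decide) (by decide) (by decide)
  have h23 : ¬ (2 ∈ T ∧ 3 ∈ T) := fun hx =>
    h.not_adj (a := 1) (b := 0) hx.1 hx.2 (by decide) (by decide) (by decide)
  clear h
  revert T
  decide

set_option synthInstance.maxSize 2048 in
theorem c4Pendant_card_le (c : c4Pendant.Coloring (Fin 3)) (T : Finset (Fin 5))
    (h : Rigid _ c T) : T.card ≤ 2 := by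
  have hN : ∀ x ∈ T, x ≠ 4 := fun x hx => by
    have := h.nonLeaf hx
    simp only [NonLeaf, c4Pendant, fromRel_adj] at this
    clear hx
    revert x; decide
  have h12 : ¬ (1 ∈ T ∧ 2 ∈ T) := fun hx =>
    h.not_adj (a := 0) (b := 3) hx.1 hx.2 (by decide)
      (by simp only [c4Pendant, fromRel_adj]; decide)
      (by simp only [c4Pendant, fromRel_adj]; decide)
  have h23 : ¬ (2 ∈ T ∧ 3 ∈ T) := fun hx =>
    h.not_adj (a := 1) (b := 0) hx.1 hx.2 (by decide)
      (by simp only [c4Pendant, fromRel_adj]; decide)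
      (by simp only [c4Pendant, fromRel_adj]; decide)
  have h103 : ¬ (1 ∈ T ∧ 0 ∈ T ∧ 3 ∈ T) := fun hx =>
    h.not_path (a := 2) (b := 4) (d := 2) hx.1 hx.2.1 hx.2.2 (by decide) (by decide) (by decide)
      (by decide) (by simp only [c4Pendant, fromRel_adj]; decide)
      (by simp only [c4Pendant, fromRel_adj]; decide)
      (by simp only [c4Pendant, fromRel_adj]; decide)
  clear h
  revert T
  decide

set_option synthInstance.maxSize 2048 in
theorem p5CentralPendant_card_le (c : p5CentralPendant.Coloring (Fin 3)) (T : Finset (Fin 6))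
    (h : Rigid _ c T) : T.card ≤ 2 := by
  have hN : ∀ x ∈ T, x ≠ 0 ∧ x ≠ 4 ∧ x ≠ 5 := fun x hx => by
    have := h.nonLeaf hx
    simp only [NonLeaf, p5CentralPendant, fromRel_adj] at this
    clear hx
    revert x; decide
  have h123 : ¬ (1 ∈ T ∧ 2 ∈ T ∧ 3 ∈ T) := fun hx =>
    h.not_path (a := 0) (b := 5) (d := 4) hx.1 hx.2.1 hx.2.2 (by decide) (by decide) (by decide)
      (by decide) (by simp only [p5CentralPendant, fromRel_adj]; decide)
      (by simp only [p5CentralPendant, fromRel_adj]; decide)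
      (by simp only [p5CentralPendant, fromRel_adj]; decide)
  clear h
  revert T
  decide

theorem p4Pendants_card_le {l : ℕ} (c : (p4Pendants l).Coloring (Fin 3))
    (T : Finset (Fin 4 ⊕ Fin l)) (h : Rigid _ c T) : T.card ≤ 2 := by
  have hN : ∀ x ∈ T, x = Sum.inl 1 ∨ x = Sum.inl 2 ∨ x = Sum.inl 3 := fun x hx => by
    obtain ⟨y, z, hyz, hy, hz⟩ := h.nonLeaf hx
    rcases x with x | x
    · have h0 : x ≠ 0 := by
        rintro rfl
        rcases y with y | y <;> rcases z with z | z <;> simp [pathGraph_adj] at hy hz hyz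
        omega
      simp only [Sum.inl.injEq]
      clear hx hy hz
      revert x; decide
    · rcases y with y | y <;> rcases z with z | z <;> simp_all
  have h12 : ¬ (Sum.inl 1 ∈ T ∧ Sum.inl 2 ∈ T) := fun hx => by
    refine h.not_adj (a := Sum.inl 0) (b := Sum.inl 3) hx.1 hx.2 (by simp) ?_ ?_
    all_goals
      rintro (x | x)
      · simp only [p4Pendants_inl_inl, pathGraph_adj, Sum.inl.injEq]
        revert x; decide
      · simp
  by_cases h1 : Sum.inl 1 ∈ T
  · exact card_le_two_of_subset (a := Sum.inl 1) (b := Sum.inl 3) (by grind)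
  · exact card_le_two_of_subset (a := Sum.inl 2) (b := Sum.inl 3) (by grind)

end Graphs

/-! ### Three non-pendant vertices on one side -/

section Side

variable {V : Type*}

/-- Three pairs form a graph with three edges, which is 2-colorable unless it is a triangle. -/
theorem exists_two_coloring {x₁ y₁ x₂ y₂ x₃ y₃ : V} (h₁ : x₁ ≠ y₁) (h₂ : x₂ ≠ y₂) (h₃ : x₃ ≠ y₃) :
    (∃ β : V → Prop, (β x₁ ↔ ¬ β y₁) ∧ (β x₂ ↔ ¬ β y₂) ∧ (β x₃ ↔ ¬ β y₃)) ∨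
    ∃ x y z, x ≠ y ∧ y ≠ z ∧ x ≠ z ∧ s(x₁, y₁) = s(x, y) ∧ s(x₂, y₂) = s(y, z) ∧
      s(x₃, y₃) = s(x, z) := by
  by_contra! h
  obtain ⟨h, h'⟩ := h
  -- A colour class of a 2-coloring picks one end of each edge.
  have e₁ : y₁ = x₂ ∨ y₁ = x₃ ∨ y₂ = x₁ ∨ y₂ = x₃ ∨ y₃ = x₁ ∨ y₃ = x₂ := by
    by_contra! hne
    have := h fun v => v = x₁ ∨ v = x₂ ∨ v = x₃
    simp_all [eq_comm]
  have e₂ : y₁ = x₂ ∨ y₁ = y₃ ∨ y₂ = x₁ ∨ y₂ = y₃ ∨ x₃ = x₁ ∨ x₃ = x₂ := by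
    by_contra! hne
    have := h fun v => v = x₁ ∨ v = x₂ ∨ v = y₃
    simp_all [eq_comm]
  have e₃ : y₁ = y₂ ∨ y₁ = x₃ ∨ x₂ = x₁ ∨ x₂ = x₃ ∨ y₃ = x₁ ∨ y₃ = y₂ := by
    by_contra! hne
    have := h fun v => v = x₁ ∨ v = y₂ ∨ v = x₃
    simp_all [eq_comm]
  have e₄ : y₁ = y₂ ∨ y₁ = y₃ ∨ x₂ = x₁ ∨ x₂ = y₃ ∨ x₃ = x₁ ∨ x₃ = y₂ := by
    by_contra! hne
    have := h fun v => v = x₁ ∨ v = y₂ ∨ v = y₃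
    simp_all [eq_comm]
  have f₁ := h' x₁ y₁ x₂
  have f₂ := h' x₁ y₁ y₂
  have f₃ := h' y₁ x₁ x₂
  have f₄ := h' y₁ x₁ y₂
  clear h h'
  simp only [Sym2.eq_iff, ne_eq] at *
  grind (splits := 30)

variable [Fintype V] {G : SimpleGraph V}

/-- If a 2-coloring `β` separates the neighbour pairs of `u`, `v`, `w`, then colouring the opposite
side by `β` and the side of `u` constantly frees the three vertices. -/
theorem sn_add_three_le_of_two_coloring (s : G.Coloring (Fin 2)) {u v w x₁ y₁ x₂ y₂ x₃ y₃ : V}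
    (huv : u ≠ v) (huw : u ≠ w) (hvw : v ≠ w) (suv : s u = s v) (suw : s u = s w)
    (hx₁ : G.Adj u x₁) (hy₁ : G.Adj u y₁) (hx₂ : G.Adj v x₂) (hy₂ : G.Adj v y₂)
    (hx₃ : G.Adj w x₃) (hy₃ : G.Adj w y₃)
    (h : ∃ β : V → Prop, (β x₁ ↔ ¬ β y₁) ∧ (β x₂ ↔ ¬ β y₂) ∧ (β x₃ ↔ ¬ β y₃)) :
    sudokuNumber G 3 + 3 ≤ Fintype.card V := by
  classical
  obtain ⟨β, hβ₁, hβ₂, hβ₃⟩ := h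
  have key : ∀ a b, G.Adj a b → ((s a = s u) ↔ ¬ (s b = s u)) := fun a b hab => by
    have := s.valid hab
    omega
  let c : G.Coloring (Fin 3) := Coloring.mk
    (fun a => if s a = s u then 2 else if β a then 1 else 0) (by
      intro a b hab
      have := key a b hab
      grind)
  have hc : ∀ a, c a = if s a = s u then 2 else if β a then 1 else 0 := fun a => rfl
  have := key _ _ hx₁
  have := key _ _ hx₂
  have := key _ _ hx₃
  have := key _ _ hy₁
  have := key _ _ hy₂
  have := key _ _ hy₃
  refine sn_add_three_le c huv huw hvw hx₁ hy₁ hx₂ hy₂ hx₃ hy₃ ?_ ?_ ?_ ?_ ?_ ?_ ?_ ?_ ?_ <;>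
    grind

/-- Three neighbours of `a` give two neighbour pairs with a common vertex, and at most one of these
pairs completes `{x₂, y₂}` and `{x₃, y₃}` to a triangle. -/
theorem sn_add_three_le_of_degree_three (s : G.Coloring (Fin 2)) {a v w p q r x₂ y₂ x₃ y₃ : V}
    (hav : a ≠ v) (haw : a ≠ w) (hvw : v ≠ w) (sav : s a = s v) (saw : s a = s w)
    (hp : G.Adj a p) (hq : G.Adj a q) (hr : G.Adj a r) (hpq : p ≠ q) (hpr : p ≠ r) (hqr : q ≠ r)
    (hx₂ : G.Adj v x₂) (hy₂ : G.Adj v y₂) (hx₃ : G.Adj w x₃) (hy₃ : G.Adj w y₃)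
    (h₂ : x₂ ≠ y₂) (h₃ : x₃ ≠ y₃) :
    sudokuNumber G 3 + 3 ≤ Fintype.card V := by
  obtain h | ⟨x, y, z, hxy, hyz, hxz, e₁, e₂, e₃⟩ := exists_two_coloring hpq h₂ h₃
  · exact sn_add_three_le_of_two_coloring s hav haw hvw sav saw hp hq hx₂ hy₂ hx₃ hy₃ h
  obtain h | ⟨x', y', z', hxy', hyz', hxz', e₁', e₂', e₃'⟩ := exists_two_coloring hpr h₂ h₃
  · exact sn_add_three_le_of_two_coloring s hav haw hvw sav saw hp hr hx₂ hy₂ hx₃ hy₃ h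
  exfalso
  simp only [Sym2.eq_iff] at *
  grind

/-- Three non-pendant vertices on one side can always be freed by a suitable coloring. -/
theorem sn_add_three_le_of_side (s : G.Coloring (Fin 2)) {u v w : V}
    (huv : u ≠ v) (huw : u ≠ w) (hvw : v ≠ w) (suv : s u = s v) (suw : s u = s w)
    (hu : NonLeaf G u) (hv : NonLeaf G v) (hw : NonLeaf G w) :
    sudokuNumber G 3 + 3 ≤ Fintype.card V := by
  classical
  obtain ⟨x₁, y₁, h₁, hx₁, hy₁⟩ := hu
  obtain ⟨x₂, y₂, h₂, hx₂, hy₂⟩ := hv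
  obtain ⟨x₃, y₃, h₃, hx₃, hy₃⟩ := hw
  obtain h | ⟨x, y, z, hxy, hyz, hxz, e₁, e₂, e₃⟩ := exists_two_coloring h₁ h₂ h₃
  · exact sn_add_three_le_of_two_coloring s huv huw hvw suv suw hx₁ hy₁ hx₂ hy₂ hx₃ hy₃ h
  by_cases ha : ∃ a p q r, s a = s u ∧ G.Adj a p ∧ G.Adj a q ∧ G.Adj a r ∧ p ≠ q ∧ p ≠ r ∧ q ≠ r
  · obtain ⟨a, p, q, r, sa, hp, hq, hr, hpq, hpr, hqr⟩ := ha
    by_cases hau : a = u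
    · subst hau
      exact sn_add_three_le_of_degree_three s huv huw hvw suv suw hp hq hr hpq hpr hqr
        hx₂ hy₂ hx₃ hy₃ h₂ h₃
    by_cases hav : a = v
    · subst hav
      exact sn_add_three_le_of_degree_three s huv.symm hvw huw suv.symm (suv ▸ suw)
        hp hq hr hpq hpr hqr hx₁ hy₁ hx₃ hy₃ h₁ h₃
    · exact sn_add_three_le_of_degree_three s hau hav huv sa (sa.trans suv)
        hp hq hr hpq hpr hqr hx₁ hy₁ hx₂ hy₂ h₁ h₂
  -- All vertices on the side of `u` have degree at most two, so any colours on the other side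
  -- leave a colour for them; use three different colours on the triangle.
  let D : V → Fin 3 := fun a => if a = y then 1 else if a = z then 2 else 0
  have hfree : ∀ a, ∃ q : Fin 3, s a = s u → ∀ b, G.Adj a b → q ≠ D b := by
    intro a
    by_cases hN : ∃ p q, G.Adj a p ∧ G.Adj a q ∧ p ≠ q
    · obtain ⟨p, q, hp, hq, hpq⟩ := hN
      obtain ⟨k, hk⟩ := (by decide : ∀ a b : Fin 3, ∃ q, q ≠ a ∧ q ≠ b) (D p) (D q)
      refine ⟨k, fun sa b hb => ?_⟩
      by_cases hbp : b = p
      · exact hbp ▸ hk.1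
      by_cases hbq : b = q
      · exact hbq ▸ hk.2
      exact (ha ⟨a, p, q, b, sa, hp, hq, hb, hpq, Ne.symm hbp, Ne.symm hbq⟩).elim
    · by_cases hN' : ∃ p, G.Adj a p
      · obtain ⟨p, hp⟩ := hN'
        obtain ⟨k, hk⟩ := (by decide : ∀ a : Fin 3, ∃ q, q ≠ a) (D p)
        refine ⟨k, fun _ b hb => ?_⟩
        by_cases hbp : b = p
        · exact hbp ▸ hk
        · exact (hN ⟨b, p, hb, hp, hbp⟩).elim
      · exact ⟨0, fun _ b hb => (hN' ⟨b, hb⟩).elim⟩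
  choose F hF using hfree
  have key : ∀ a b, G.Adj a b → ((s a = s u) ↔ ¬ (s b = s u)) := fun a b hab => by
    have := s.valid hab
    omega
  let c : G.Coloring (Fin 3) := Coloring.mk (fun a => if s a = s u then F a else D a) (by
      intro a b hab
      have := key a b hab
      have := hF a
      have := hF b
      have := hab.symm
      grind)
  have hc : ∀ a, c a = if s a = s u then F a else D a := fun a => rfl
  have hD : ∀ a, D a = if a = y then 1 else if a = z then 2 else 0 := fun a => rfl
  have := key _ _ hx₁
  have := key _ _ hx₂
  have := key _ _ hx₃
  have := key _ _ hy₁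
  have := key _ _ hy₂
  have := key _ _ hy₃
  have dx : D x = 0 := by simp [hD, hxy, hxz]
  have dy : D y = 1 := by simp [hD]
  have dz : D z = 2 := by simp [hD, hyz.symm]
  simp only [Sym2.eq_iff] at e₁ e₂ e₃
  clear hD
  refine sn_add_three_le c huv huw hvw hx₁ hy₁ hx₂ hy₂ hx₃ hy₃ ?_ ?_ ?_ ?_ ?_ ?_ ?_ ?_ ?_ <;>
    clear_value c D <;> clear hF ha <;> grind

end Side

/-! ### Graphs with at most two non-pendant vertices on each side -/

section Structure

variable {V : Type*} {G : SimpleGraph V}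

theorem eq_of_not_nonLeaf {l x y : V} (h : ¬ NonLeaf G l) (hx : G.Adj x l) (hy : G.Adj y l) :
    x = y := by
  by_contra hxy
  exact h ⟨x, y, hxy, hx.symm, hy.symm⟩

theorem forall_of_closed (hconn : G.Connected) {W : V → Prop} {a : V} (ha : W a)
    (hW : ∀ x y, W x → G.Adj x y → W y) (x : V) : W x := by
  obtain ⟨p⟩ := hconn.preconnected a x
  induction p with
  | nil => exact ha
  | cons h _ ih => exact ih (hW _ _ ha h)

/-- Every pendant vertex is attached to a non-pendant one, unless `G` has no non-pendant vertex. -/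
theorem exists_nonLeaf_adj (hconn : G.Connected) {t : V} (ht : NonLeaf G t) (l : V)
    (hl : ¬ NonLeaf G l) : ∃ p, NonLeaf G p ∧ G.Adj p l := by
  have := forall_of_closed hconn (W := fun x => NonLeaf G x ∨ ∃ p, NonLeaf G p ∧ G.Adj p x)
    (Or.inl ht) (by
      intro x y hx hxy
      by_cases hN : NonLeaf G x
      · exact Or.inr ⟨x, hN, hxy⟩
      · obtain ⟨p, hp, hpx⟩ := hx.resolve_left hN
        exact Or.inl (eq_of_not_nonLeaf hN hpx hxy.symm ▸ hp)) l
  exact this.resolve_left hl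

/-- The non-pendant vertices of a connected graph induce a connected subgraph. -/
theorem forall_nonLeaf_of_closed (hconn : G.Connected) {M : V → Prop} {a : V} (ha : M a)
    (hM : ∀ x y, M x → NonLeaf G y → G.Adj x y → M y) (y : V) (hy : NonLeaf G y) : M y := by
  have := forall_of_closed hconn (W := fun x => M x ∨ (¬ NonLeaf G x ∧ ∃ m, M m ∧ G.Adj m x))
    (Or.inl ha) (by
      rintro x y (hx | ⟨hx, m, hm, hmx⟩) hxy
      · by_cases hN : NonLeaf G y
        · exact Or.inl (hM x y hx hN hxy)
        · exact Or.inr ⟨hN, x, hx, hxy⟩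
      · exact Or.inl (eq_of_not_nonLeaf hx hmx hxy.symm ▸ hm)) y
  exact this.resolve_right fun h => h.1 hy

/-- A coloring of the non-pendant vertices extends to `G`, with the colours of the pendant vertices
prescribed wherever the prescription differs from the colour of the neighbour. -/
theorem exists_coloring (hlf : ∀ l, ¬ NonLeaf G l → ∃ p, NonLeaf G p ∧ G.Adj p l) (D : V → Fin 3)
    (hD : ∀ a b, NonLeaf G a → NonLeaf G b → G.Adj a b → D a ≠ D b) :
    ∃ c : G.Coloring (Fin 3), (∀ a, NonLeaf G a → c a = D a) ∧
      ∀ a l, G.Adj a l → ¬ NonLeaf G l → D l ≠ D a → c l = D l := by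
  classical
  choose! p hp hpl using hlf
  have hun : ∀ l x, ¬ NonLeaf G l → G.Adj x l → x = p l := fun l x hl hx =>
    eq_of_not_nonLeaf hl hx (hpl l hl)
  have hadd : ∀ q : Fin 3, q + 1 ≠ q := by decide
  refine ⟨Coloring.mk (fun x => if NonLeaf G x then D x else if D x ≠ D (p x) then D x
    else D (p x) + 1) ?_, ?_, ?_⟩
  · intro a b hab
    have := hD a b
    have := hun a b
    have := hun b a
    have := hab.symm
    have := hp a
    have := hp b
    have := hadd (D a)
    have := hadd (D b)
    grind
  · intro a ha
    exact if_pos ha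
  · intro a l hal hl hne
    change (if NonLeaf G l then D l else if D l ≠ D (p l) then D l else D (p l) + 1) = D l
    rw [if_neg hl, if_pos (hun l a hl hal ▸ hne)]

theorem nonempty_iso_of_bijective {W : Type*} {H : SimpleGraph W} (f : W → V)
    (hf : Function.Bijective f) (h : ∀ a b, G.Adj (f a) (f b) ↔ H.Adj a b) :
    Nonempty (G ≃g H) :=
  ⟨RelIso.symm ⟨Equiv.ofBijective f hf, fun {a b} => h a b⟩⟩

theorem exists_enum [Finite V] (P : V → Prop) :
    ∃ (n : ℕ) (f : Fin n → V), f.Injective ∧ ∀ x, P x ↔ ∃ i, f i = x := by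
  let e := (Finite.equivFin {x // P x}).symm
  exact ⟨_, fun i => (e i).1, Subtype.val_injective.comp e.injective, fun x =>
    ⟨fun hx => ⟨e.symm ⟨x, hx⟩, by simp⟩, by rintro ⟨i, rfl⟩; exact (e i).2⟩⟩

/-- If exactly two vertices are not pendant, then they are the centers of a bistar, and it is not
`B_{1,1}` because both of them are freed. -/
theorem bistar_of_nonLeaf [Fintype V]
    (hlf : ∀ l, ¬ NonLeaf G l → ∃ p, NonLeaf G p ∧ G.Adj p l) {u v : V}
    (hN : ∀ x, NonLeaf G x ↔ x = u ∨ x = v) (huv : G.Adj u v) {c : G.Coloring (Fin 3)}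
    {T : Finset V} (hT : Rigid G c T) (huT : u ∈ T) (hvT : v ∈ T) :
    ∃ m n : ℕ, 1 ≤ m ∧ 1 ≤ n ∧ (m, n) ≠ (1, 1) ∧ Nonempty (G ≃g bistar m n) := by
  classical
  have hun : ∀ l x y, ¬ NonLeaf G l → G.Adj x l → G.Adj y l → x = y :=
    fun l x y => eq_of_not_nonLeaf
  obtain ⟨a, ha, hav⟩ : ∃ a, G.Adj u a ∧ a ≠ v := by
    obtain ⟨x, y, hxy, hx, hy⟩ := (hN u).2 (Or.inl rfl)
    by_cases x = v <;> grind
  obtain ⟨b, hb, hbu⟩ : ∃ b, G.Adj v b ∧ b ≠ u := by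
    obtain ⟨x, y, hxy, hx, hy⟩ := (hN v).2 (Or.inr rfl)
    by_cases x = u <;> grind
  obtain ⟨m, f₁, i₁, s₁⟩ := exists_enum fun x => G.Adj u x ∧ x ≠ v
  obtain ⟨n, f₂, i₂, s₂⟩ := exists_enum fun x => G.Adj v x ∧ x ≠ u
  have leaf₁ : ∀ x, G.Adj u x → x ≠ v → ¬ NonLeaf G x := fun x hx hxv => by
    have := hx.ne
    grind
  have leaf₂ : ∀ x, G.Adj v x → x ≠ u → ¬ NonLeaf G x := fun x hx hxv => by
    have := hx.ne
    grind
  have hsym : ∀ x y, G.Adj x y → G.Adj y x := fun x y h => h.symm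
  have hirr : ∀ x, ¬ G.Adj x x := fun x => G.irrefl
  obtain ⟨a', ha'⟩ := (s₁ a).1 ⟨ha, hav⟩
  obtain ⟨b', hb'⟩ := (s₂ b).1 ⟨hb, hbu⟩
  refine ⟨m, n, Fin.pos a', Fin.pos b', fun hmn => ?_, ?_⟩
  · obtain ⟨rfl, rfl⟩ := Prod.mk.inj hmn
    refine hT.not_adj huT hvT huv.ne (a := f₁ 0) (b := f₂ 0) (fun x hx => ?_) (fun x hx => ?_)
    · by_cases hxv : x = v
      · exact Or.inl hxv
      · obtain ⟨i, rfl⟩ := (s₁ x).1 ⟨hx, hxv⟩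
        exact Or.inr (congrArg f₁ (Subsingleton.elim i 0))
    · by_cases hxu : x = u
      · exact Or.inl hxu
      · obtain ⟨i, rfl⟩ := (s₂ x).1 ⟨hx, hxu⟩
        exact Or.inr (congrArg f₂ (Subsingleton.elim i 0))
  · have huv' := huv.ne
    have p₁ : ∀ i, G.Adj u (f₁ i) ∧ f₁ i ≠ v ∧ ¬ NonLeaf G (f₁ i) := fun i => by
      obtain ⟨h, h'⟩ := (s₁ _).2 ⟨i, rfl⟩
      exact ⟨h, h', leaf₁ _ h h'⟩
    have p₂ : ∀ i, G.Adj v (f₂ i) ∧ f₂ i ≠ u ∧ ¬ NonLeaf G (f₂ i) := fun i => by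
      obtain ⟨h, h'⟩ := (s₂ _).2 ⟨i, rfl⟩
      exact ⟨h, h', leaf₂ _ h h'⟩
    replace i₁ : ∀ i j, f₁ i = f₁ j → i = j := fun i j => @i₁ i j
    replace i₂ : ∀ i j, f₂ i = f₂ j → i = j := fun i j => @i₂ i j
    refine nonempty_iso_of_bijective (Sum.elim (fun o => o.elim u f₁) (fun o => o.elim v f₂))
      ⟨?_, ?_⟩ ?_
    · rintro ((_ | i) | (_ | i)) ((_ | j) | (_ | j)) hij <;> simp at hij ⊢ <;> grind
    · intro x
      by_cases hx : NonLeaf G x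
      · rcases (hN x).1 hx with rfl | rfl
        · exact ⟨Sum.inl none, rfl⟩
        · exact ⟨Sum.inr none, rfl⟩
      · obtain ⟨p, hp, hpx⟩ := hlf x hx
        rcases (hN p).1 hp with rfl | rfl
        · obtain ⟨i, hi⟩ := (s₁ x).1 ⟨hpx, by grind⟩
          exact ⟨Sum.inl (some i), hi⟩
        · obtain ⟨i, hi⟩ := (s₂ x).1 ⟨hpx, by grind⟩
          exact ⟨Sum.inr (some i), hi⟩
    · rintro ((_ | i) | (_ | i)) ((_ | j) | (_ | j)) <;> simp [bistar] <;> grind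

end Structure

/-! ### The non-pendant vertices form a path with three vertices -/

section Path

variable {V : Type*} [Fintype V] {G : SimpleGraph V}

/-- The ends `u`, `w` of the path cannot both carry two pendant vertices: recover `u` and `w` from
their pendant vertices, then `v` from `u` and `w`. -/
theorem path_three_ends (hlt : Fintype.card V < sudokuNumber G 3 + 3)
    (hlf : ∀ l, ¬ NonLeaf G l → ∃ p, NonLeaf G p ∧ G.Adj p l) {u v w : V}
    (hN : ∀ x, NonLeaf G x ↔ x = u ∨ x = v ∨ x = w) (huv : G.Adj u v) (hvw : G.Adj v w)
    (huw : ¬ G.Adj u w) (huw' : u ≠ w) {l₁ l₂ l₃ l₄ : V}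
    (h₁ : G.Adj u l₁) (h₂ : G.Adj u l₂) (h₃ : G.Adj w l₃) (h₄ : G.Adj w l₄)
    (n₁ : ¬ NonLeaf G l₁) (n₂ : ¬ NonLeaf G l₂) (n₃ : ¬ NonLeaf G l₃) (n₄ : ¬ NonLeaf G l₄)
    (h₁₂ : l₁ ≠ l₂) (h₃₄ : l₃ ≠ l₄) : False := by
  classical
  have hun : ∀ l x y, ¬ NonLeaf G l → G.Adj x l → G.Adj y l → x = y :=
    fun l x y => eq_of_not_nonLeaf
  have := huv.ne
  have := hvw.ne
  have hirr : ∀ x, ¬ G.Adj x x := fun x => G.irrefl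
  obtain ⟨D, du, dv, dw, d₁, d₂, d₃, d₄⟩ : ∃ D : V → Fin 3, D u = 0 ∧ D v = 1 ∧ D w = 2 ∧
      D l₁ = 1 ∧ D l₂ = 2 ∧ D l₃ = 0 ∧ D l₄ = 1 :=
    ⟨fun x => if x = u ∨ x = l₃ then 0 else if x = v ∨ x = l₁ ∨ x = l₄ then 1 else 2, by grind⟩
  obtain ⟨c, hc, hc'⟩ := exists_coloring hlf D (by grind)
  have := sn_add_three_le c (t₁ := u) (t₂ := w) (t₃ := v) huw' (by grind) (by grind)
    h₁ h₂ h₃ h₄ huv.symm hvw (by grind) (by grind) (by grind) (by grind) (by grind) (by grind)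
    (by grind) (by grind) (by grind)
  omega

/-- If the middle vertex carries a pendant vertex, no end of the path carries two: recover `w` from
its pendant vertices, then `v` from `w` and `l`, then `u` from `v` and `k`. -/
theorem path_three_end_middle (hlt : Fintype.card V < sudokuNumber G 3 + 3)
    (hlf : ∀ l, ¬ NonLeaf G l → ∃ p, NonLeaf G p ∧ G.Adj p l) {u v w : V}
    (hN : ∀ x, NonLeaf G x ↔ x = u ∨ x = v ∨ x = w) (huv : G.Adj u v) (hvw : G.Adj v w)
    (huw : ¬ G.Adj u w) (huw' : u ≠ w) {k l m₁ m₂ : V}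
    (hk : G.Adj u k) (hl : G.Adj v l) (h₁ : G.Adj w m₁) (h₂ : G.Adj w m₂)
    (nk : ¬ NonLeaf G k) (nl : ¬ NonLeaf G l) (n₁ : ¬ NonLeaf G m₁) (n₂ : ¬ NonLeaf G m₂)
    (h₁₂ : m₁ ≠ m₂) : False := by
  classical
  have hun : ∀ l x y, ¬ NonLeaf G l → G.Adj x l → G.Adj y l → x = y :=
    fun l x y => eq_of_not_nonLeaf
  have := huv.ne
  have := hvw.ne
  have hirr : ∀ x, ¬ G.Adj x x := fun x => G.irrefl
  obtain ⟨D, du, dv, dw, d₁, d₂, dk, dl⟩ : ∃ D : V → Fin 3, D u = 0 ∧ D v = 1 ∧ D w = 2 ∧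
      D m₁ = 0 ∧ D m₂ = 1 ∧ D k = 2 ∧ D l = 0 :=
    ⟨fun x => if x = u ∨ x = m₁ ∨ x = l then 0 else if x = v ∨ x = m₂ then 1 else 2, by grind⟩
  obtain ⟨c, hc, hc'⟩ := exists_coloring hlf D (by grind)
  have := sn_add_three_le c (t₁ := w) (t₂ := v) (t₃ := u) (by grind) (by grind) (by grind)
    h₁ h₂ hvw hl huv hk (by grind) (by grind) (by grind) (by grind) (by grind) (by grind)
    (by grind) (by grind) (by grind)
  omega

/-- The middle vertex does not carry two pendant vertices: recover `v` from them, then both ends. -/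
theorem path_three_middle (hlt : Fintype.card V < sudokuNumber G 3 + 3)
    (hlf : ∀ l, ¬ NonLeaf G l → ∃ p, NonLeaf G p ∧ G.Adj p l) {u v w : V}
    (hN : ∀ x, NonLeaf G x ↔ x = u ∨ x = v ∨ x = w) (huv : G.Adj u v) (hvw : G.Adj v w)
    (huw : ¬ G.Adj u w) (huw' : u ≠ w) {k l m₁ m₂ : V}
    (hk : G.Adj u k) (hl : G.Adj w l) (h₁ : G.Adj v m₁) (h₂ : G.Adj v m₂)
    (nk : ¬ NonLeaf G k) (nl : ¬ NonLeaf G l) (n₁ : ¬ NonLeaf G m₁) (n₂ : ¬ NonLeaf G m₂)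
    (h₁₂ : m₁ ≠ m₂) : False := by
  classical
  have hun : ∀ l x y, ¬ NonLeaf G l → G.Adj x l → G.Adj y l → x = y :=
    fun l x y => eq_of_not_nonLeaf
  have := huv.ne
  have := hvw.ne
  have hirr : ∀ x, ¬ G.Adj x x := fun x => G.irrefl
  obtain ⟨D, du, dv, dw, d₁, d₂, dk, dl⟩ : ∃ D : V → Fin 3, D u = 0 ∧ D v = 1 ∧ D w = 2 ∧
      D m₁ = 0 ∧ D m₂ = 2 ∧ D k = 2 ∧ D l = 0 :=
    ⟨fun x => if x = u ∨ x = m₁ ∨ x = l then 0 else if x = v then 1 else 2, by grind⟩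
  obtain ⟨c, hc, hc'⟩ := exists_coloring hlf D (by grind)
  have := sn_add_three_le c (t₁ := v) (t₂ := u) (t₃ := w) (by grind) (by grind) (by grind)
    h₁ h₂ huv hk hvw.symm hl (by grind) (by grind) (by grind) (by grind) (by grind) (by grind)
    (by grind) (by grind) (by grind)
  omega

/-- If an end of the path carries two pendant vertices, then the pendant vertices other than `a` are
all at this end. -/
theorem path_three_p4Pendants (hlt : Fintype.card V < sudokuNumber G 3 + 3)
    (hlf : ∀ l, ¬ NonLeaf G l → ∃ p, NonLeaf G p ∧ G.Adj p l) {u v w : V}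
    (hN : ∀ x, NonLeaf G x ↔ x = u ∨ x = v ∨ x = w) (huv : G.Adj u v) (hvw : G.Adj v w)
    (huw : ¬ G.Adj u w) (huw' : u ≠ w) {a m₁ m₂ : V}
    (ha : G.Adj u a) (h₁ : G.Adj w m₁) (h₂ : G.Adj w m₂)
    (na : ¬ NonLeaf G a) (n₁ : ¬ NonLeaf G m₁) (n₂ : ¬ NonLeaf G m₂) (h₁₂ : m₁ ≠ m₂) :
    ∃ l : ℕ, 1 < l ∧ Nonempty (G ≃g p4Pendants l) := by
  classical
  have hun : ∀ l x y, ¬ NonLeaf G l → G.Adj x l → G.Adj y l → x = y :=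
    fun l x y => eq_of_not_nonLeaf
  have hirr : ∀ x, ¬ G.Adj x x := fun x => G.irrefl
  have hsym : ∀ x y, G.Adj x y → G.Adj y x := fun x y h => h.symm
  have hua : ∀ x, ¬ NonLeaf G x → G.Adj u x → x = a := fun x nx hx => by
    by_contra hxa
    exact path_three_ends hlt hlf hN huv hvw huw huw' hx ha h₁ h₂ nx na n₁ n₂ hxa h₁₂
  have hv : ∀ x, ¬ NonLeaf G x → ¬ G.Adj v x := fun x nx hx =>
    path_three_end_middle hlt hlf hN huv hvw huw huw' ha hx h₁ h₂ na nx n₁ n₂ h₁₂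
  obtain ⟨l, f, hf, hf'⟩ := exists_enum fun x => G.Adj w x ∧ ¬ NonLeaf G x
  have hfw : ∀ i, G.Adj w (f i) ∧ ¬ NonLeaf G (f i) := fun i => (hf' _).2 ⟨i, rfl⟩
  have hf : ∀ i j, f i = f j → i = j := fun i j => @hf i j
  have huv' := huv.ne
  have hvw' := hvw.ne
  refine ⟨l, ?_, nonempty_iso_of_bijective (Sum.elim ![a, u, v, w] f) ⟨?_, ?_⟩ ?_⟩
  · obtain ⟨i, hi⟩ := (hf' m₁).1 ⟨h₁, n₁⟩
    obtain ⟨j, hj⟩ := (hf' m₂).1 ⟨h₂, n₂⟩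
    have := i.2
    have := j.2
    by_contra hl
    have : i = j := Fin.ext (by omega)
    grind
  · rintro (i | i) (j | j) hij
    · fin_cases i <;> fin_cases j <;> simp at hij ⊢ <;> grind
    · fin_cases i <;> simp at hij <;> grind
    · fin_cases j <;> simp at hij <;> grind
    · simp at hij
      rw [hf _ _ hij]
  · intro x
    by_cases hx : NonLeaf G x
    · rcases (hN x).1 hx with rfl | rfl | rfl
      exacts [⟨Sum.inl 1, rfl⟩, ⟨Sum.inl 2, rfl⟩, ⟨Sum.inl 3, rfl⟩]
    · obtain ⟨p, hp, hpx⟩ := hlf x hx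
      rcases (hN p).1 hp with rfl | rfl | rfl
      · exact ⟨Sum.inl 0, (hua x hx hpx).symm⟩
      · exact (hv x hx hpx).elim
      · obtain ⟨i, hi⟩ := (hf' x).1 ⟨hpx, hx⟩
        exact ⟨Sum.inr i, hi⟩
  · rintro (i | i) (j | j)
    · fin_cases i <;> fin_cases j <;> simp [pathGraph_adj] <;> grind
    · fin_cases i <;> simp <;> grind
    · fin_cases j <;> simp <;> grind
    · simp
      grind

/-- The shape of `G` when its non-pendant vertices form a path `u - v - w`. -/
theorem path_three (hlt : Fintype.card V < sudokuNumber G 3 + 3)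
    (hlf : ∀ l, ¬ NonLeaf G l → ∃ p, NonLeaf G p ∧ G.Adj p l) {u v w : V}
    (hN : ∀ x, NonLeaf G x ↔ x = u ∨ x = v ∨ x = w) (huv : G.Adj u v) (hvw : G.Adj v w)
    (huw : ¬ G.Adj u w) (huw' : u ≠ w) :
    Nonempty (G ≃g pathGraph 5) ∨ (∃ l : ℕ, 1 < l ∧ Nonempty (G ≃g p4Pendants l)) ∨
      Nonempty (G ≃g p5CentralPendant) := by
  classical
  have hun : ∀ l x y, ¬ NonLeaf G l → G.Adj x l → G.Adj y l → x = y :=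
    fun l x y => eq_of_not_nonLeaf
  have hirr : ∀ x, ¬ G.Adj x x := fun x => G.irrefl
  have hsym : ∀ x y, G.Adj x y → G.Adj y x := fun x y h => h.symm
  have huv' := huv.ne
  have hvw' := hvw.ne
  obtain ⟨a, ha, na⟩ : ∃ a, G.Adj u a ∧ ¬ NonLeaf G a := by
    obtain ⟨x, y, hxy, hx, hy⟩ := (hN u).2 (by simp)
    by_cases x = v <;> grind
  obtain ⟨b, hb, nb⟩ : ∃ b, G.Adj w b ∧ ¬ NonLeaf G b := by
    obtain ⟨x, y, hxy, hx, hy⟩ := (hN w).2 (by simp)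
    by_cases x = v <;> grind
  by_cases hu2 : ∃ x, G.Adj u x ∧ ¬ NonLeaf G x ∧ x ≠ a
  · obtain ⟨x, hx, nx, hxa⟩ := hu2
    exact Or.inr (Or.inl (path_three_p4Pendants hlt hlf (u := w) (v := v) (w := u) (by grind)
      hvw.symm huv.symm (fun h => huw h.symm) huw'.symm hb hx ha nb nx na hxa))
  by_cases hw2 : ∃ x, G.Adj w x ∧ ¬ NonLeaf G x ∧ x ≠ b
  · obtain ⟨x, hx, nx, hxb⟩ := hw2
    exact Or.inr (Or.inl (path_three_p4Pendants hlt hlf hN huv hvw huw huw' ha hx hb na nx nb hxb))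
  have hua : ∀ x, ¬ NonLeaf G x → G.Adj u x → x = a := by grind
  have hwb : ∀ x, ¬ NonLeaf G x → G.Adj w x → x = b := by grind
  clear hu2 hw2
  by_cases hv : ∃ m, G.Adj v m ∧ ¬ NonLeaf G m
  · obtain ⟨m, hm, nm⟩ := hv
    have hvm : ∀ x, ¬ NonLeaf G x → G.Adj v x → x = m := fun x nx hx => by
      by_contra hxm
      exact path_three_middle hlt hlf hN huv hvw huw huw' ha hb hx hm na nb nx nm hxm
    refine Or.inr (Or.inr (nonempty_iso_of_bijective ![a, u, v, w, b, m] ⟨?_, ?_⟩ ?_))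
    · intro i j hij
      fin_cases i <;> fin_cases j <;> simp at hij ⊢ <;> grind
    · intro x
      by_cases hx : NonLeaf G x
      · rcases (hN x).1 hx with rfl | rfl | rfl
        exacts [⟨1, rfl⟩, ⟨2, rfl⟩, ⟨3, rfl⟩]
      · obtain ⟨p, hp, hpx⟩ := hlf x hx
        rcases (hN p).1 hp with rfl | rfl | rfl
        exacts [⟨0, (hua x hx hpx).symm⟩, ⟨5, (hvm x hx hpx).symm⟩, ⟨4, (hwb x hx hpx).symm⟩]
    · intro i j
      fin_cases i <;> fin_cases j <;> simp [p5CentralPendant] <;> grind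
  · have hvm : ∀ x, ¬ NonLeaf G x → ¬ G.Adj v x := by grind
    refine Or.inl (nonempty_iso_of_bijective ![a, u, v, w, b] ⟨?_, ?_⟩ ?_)
    · intro i j hij
      fin_cases i <;> fin_cases j <;> simp at hij ⊢ <;> grind
    · intro x
      by_cases hx : NonLeaf G x
      · rcases (hN x).1 hx with rfl | rfl | rfl
        exacts [⟨1, rfl⟩, ⟨2, rfl⟩, ⟨3, rfl⟩]
      · obtain ⟨p, hp, hpx⟩ := hlf x hx
        rcases (hN p).1 hp with rfl | rfl | rfl
        exacts [⟨0, (hua x hx hpx).symm⟩, (hvm x hx hpx).elim, ⟨4, (hwb x hx hpx).symm⟩]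
    · intro i j
      fin_cases i <;> fin_cases j <;> simp [pathGraph_adj] <;> grind

end Path

/-! ### The non-pendant vertices form a path or a cycle with four vertices -/

section Four

variable {V : Type*} [Fintype V] {G : SimpleGraph V}

/-- An end of the path does not carry two pendant vertices: recover `t` from them, then `u` from `t`
and `v`; independently `w` from `v` and `k`. -/
theorem path_four_end (hlt : Fintype.card V < sudokuNumber G 3 + 3)
    (hlf : ∀ l, ¬ NonLeaf G l → ∃ p, NonLeaf G p ∧ G.Adj p l) {t u v w : V}
    (hN : ∀ x, NonLeaf G x ↔ x = t ∨ x = u ∨ x = v ∨ x = w)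
    (htu : G.Adj t u) (huv : G.Adj u v) (hvw : G.Adj v w)
    (htv : ¬ G.Adj t v) (huw : ¬ G.Adj u w) (htw : ¬ G.Adj t w)
    (htv' : t ≠ v) (huw' : u ≠ w) (htw' : t ≠ w) {l₁ l₂ k : V}
    (h₁ : G.Adj t l₁) (h₂ : G.Adj t l₂) (hk : G.Adj w k)
    (n₁ : ¬ NonLeaf G l₁) (n₂ : ¬ NonLeaf G l₂) (nk : ¬ NonLeaf G k) (h₁₂ : l₁ ≠ l₂) : False := by
  classical
  have hun : ∀ l x y, ¬ NonLeaf G l → G.Adj x l → G.Adj y l → x = y :=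
    fun l x y => eq_of_not_nonLeaf
  have := htu.ne
  have := huv.ne
  have := hvw.ne
  have hirr : ∀ x, ¬ G.Adj x x := fun x => G.irrefl
  have hsym : ∀ x y, G.Adj x y → G.Adj y x := fun x y h => h.symm
  obtain ⟨D, dt, du, dv, dw, d₁, d₂, dk⟩ : ∃ D : V → Fin 3, D t = 0 ∧ D u = 1 ∧ D v = 2 ∧
      D w = 0 ∧ D l₁ = 1 ∧ D l₂ = 2 ∧ D k = 1 :=
    ⟨fun x => if x = t ∨ x = w then 0 else if x = u ∨ x = l₁ ∨ x = k then 1 else 2, by grind⟩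
  obtain ⟨c, hc, hc'⟩ := exists_coloring hlf D (by grind)
  have := sn_add_three_le c (t₁ := t) (t₂ := u) (t₃ := w) (by grind) (by grind) (by grind)
    h₁ h₂ htu.symm huv hvw.symm hk (by grind) (by grind) (by grind) (by grind) (by grind)
    (by grind) (by grind) (by grind) (by grind)
  omega

/-- The inner vertices carry no pendant vertex: recover `u` from `v` and `m`, then `t` from `u` and
`k`; independently `w` from `v` and `j`. -/
theorem path_four_middle (hlt : Fintype.card V < sudokuNumber G 3 + 3)
    (hlf : ∀ l, ¬ NonLeaf G l → ∃ p, NonLeaf G p ∧ G.Adj p l) {t u v w : V}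
    (hN : ∀ x, NonLeaf G x ↔ x = t ∨ x = u ∨ x = v ∨ x = w)
    (htu : G.Adj t u) (huv : G.Adj u v) (hvw : G.Adj v w)
    (htv : ¬ G.Adj t v) (huw : ¬ G.Adj u w) (htw : ¬ G.Adj t w)
    (htv' : t ≠ v) (huw' : u ≠ w) (htw' : t ≠ w) {k m j : V}
    (hk : G.Adj t k) (hm : G.Adj u m) (hj : G.Adj w j)
    (nk : ¬ NonLeaf G k) (nm : ¬ NonLeaf G m) (nj : ¬ NonLeaf G j) : False := by
  classical
  have hun : ∀ l x y, ¬ NonLeaf G l → G.Adj x l → G.Adj y l → x = y :=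
    fun l x y => eq_of_not_nonLeaf
  have := htu.ne
  have := huv.ne
  have := hvw.ne
  have hirr : ∀ x, ¬ G.Adj x x := fun x => G.irrefl
  have hsym : ∀ x y, G.Adj x y → G.Adj y x := fun x y h => h.symm
  obtain ⟨D, dt, du, dv, dw, dk, dm, dj⟩ : ∃ D : V → Fin 3, D t = 0 ∧ D u = 1 ∧ D v = 2 ∧
      D w = 0 ∧ D k = 2 ∧ D m = 0 ∧ D j = 1 :=
    ⟨fun x => if x = t ∨ x = w ∨ x = m then 0 else if x = u ∨ x = j then 1 else 2, by grind⟩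
  obtain ⟨c, hc, hc'⟩ := exists_coloring hlf D (by grind)
  have := sn_add_three_le c (t₁ := u) (t₂ := t) (t₃ := w) (by grind) (by grind) (by grind)
    hm huv htu hk hvw.symm hj (by grind) (by grind) (by grind) (by grind) (by grind)
    (by grind) (by grind) (by grind) (by grind)
  omega

/-- If the non-pendant vertices form a `P₄`, then `G` is `P₆`. -/
theorem path_four (hlt : Fintype.card V < sudokuNumber G 3 + 3)
    (hlf : ∀ l, ¬ NonLeaf G l → ∃ p, NonLeaf G p ∧ G.Adj p l) {t u v w : V}
    (hN : ∀ x, NonLeaf G x ↔ x = t ∨ x = u ∨ x = v ∨ x = w)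
    (htu : G.Adj t u) (huv : G.Adj u v) (hvw : G.Adj v w)
    (htv : ¬ G.Adj t v) (huw : ¬ G.Adj u w) (htw : ¬ G.Adj t w)
    (htv' : t ≠ v) (huw' : u ≠ w) (htw' : t ≠ w) : Nonempty (G ≃g pathGraph 6) := by
  classical
  have hun : ∀ l x y, ¬ NonLeaf G l → G.Adj x l → G.Adj y l → x = y :=
    fun l x y => eq_of_not_nonLeaf
  have htu' := htu.ne
  have huv' := huv.ne
  have hvw' := hvw.ne
  have hirr : ∀ x, ¬ G.Adj x x := fun x => G.irrefl
  have hsym : ∀ x y, G.Adj x y → G.Adj y x := fun x y h => h.symm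
  obtain ⟨k, hk, nk⟩ : ∃ k, G.Adj t k ∧ ¬ NonLeaf G k := by
    obtain ⟨x, y, hxy, hx, hy⟩ := (hN t).2 (by simp)
    by_cases x = u <;> grind
  obtain ⟨j, hj, nj⟩ : ∃ j, G.Adj w j ∧ ¬ NonLeaf G j := by
    obtain ⟨x, y, hxy, hx, hy⟩ := (hN w).2 (by simp)
    by_cases x = v <;> grind
  have hN' : ∀ x, NonLeaf G x ↔ x = w ∨ x = v ∨ x = u ∨ x = t := by grind
  have hvt := fun h => htv (hsym _ _ h)
  have hwu := fun h => huw (hsym _ _ h)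
  have hwt := fun h => htw (hsym _ _ h)
  have ht : ∀ x, ¬ NonLeaf G x → G.Adj t x → x = k := fun x nx hx => by
    by_contra hxk
    exact path_four_end hlt hlf hN htu huv hvw htv huw htw htv' huw' htw' hx hk hj nx nk nj hxk
  have hw : ∀ x, ¬ NonLeaf G x → G.Adj w x → x = j := fun x nx hx => by
    by_contra hxj
    exact path_four_end hlt hlf hN' hvw.symm huv.symm htu.symm hwu hvt hwt huw'.symm htv'.symm
      htw'.symm hx hj hk nx nj nk hxj
  have hu : ∀ x, ¬ NonLeaf G x → ¬ G.Adj u x := fun x nx hx =>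
    path_four_middle hlt hlf hN htu huv hvw htv huw htw htv' huw' htw' hk hx hj nk nx nj
  have hv : ∀ x, ¬ NonLeaf G x → ¬ G.Adj v x := fun x nx hx =>
    path_four_middle hlt hlf hN' hvw.symm huv.symm htu.symm hwu hvt hwt huw'.symm htv'.symm
      htw'.symm hj hx hk nj nx nk
  refine nonempty_iso_of_bijective ![k, t, u, v, w, j] ⟨?_, ?_⟩ ?_
  · intro i j hij
    fin_cases i <;> fin_cases j <;> simp at hij ⊢ <;> grind
  · intro x
    by_cases hx : NonLeaf G x
    · rcases (hN x).1 hx with rfl | rfl | rfl | rfl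
      exacts [⟨1, rfl⟩, ⟨2, rfl⟩, ⟨3, rfl⟩, ⟨4, rfl⟩]
    · obtain ⟨p, hp, hpx⟩ := hlf x hx
      rcases (hN p).1 hp with rfl | rfl | rfl | rfl
      exacts [⟨0, (ht x hx hpx).symm⟩, (hu x hx hpx).elim, (hv x hx hpx).elim,
        ⟨5, (hw x hx hpx).symm⟩]
  · intro i j
    fin_cases i <;> fin_cases j <;> simp [pathGraph_adj] <;> grind

/-- No vertex of the cycle carries two pendant vertices: recover `t` from them, then `u` and `w` from
`t` and `v`. -/
theorem cycle_four_pendants (hlt : Fintype.card V < sudokuNumber G 3 + 3)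
    (hlf : ∀ l, ¬ NonLeaf G l → ∃ p, NonLeaf G p ∧ G.Adj p l) {t u v w : V}
    (hN : ∀ x, NonLeaf G x ↔ x = t ∨ x = u ∨ x = v ∨ x = w)
    (htu : G.Adj t u) (huv : G.Adj u v) (hvw : G.Adj v w) (hwt : G.Adj w t)
    (htv : ¬ G.Adj t v) (huw : ¬ G.Adj u w) (htv' : t ≠ v) (huw' : u ≠ w) {l₁ l₂ : V}
    (h₁ : G.Adj t l₁) (h₂ : G.Adj t l₂)
    (n₁ : ¬ NonLeaf G l₁) (n₂ : ¬ NonLeaf G l₂) (h₁₂ : l₁ ≠ l₂) : False := by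
  classical
  have hun : ∀ l x y, ¬ NonLeaf G l → G.Adj x l → G.Adj y l → x = y :=
    fun l x y => eq_of_not_nonLeaf
  have := htu.ne
  have := huv.ne
  have := hvw.ne
  have := hwt.ne
  have hirr : ∀ x, ¬ G.Adj x x := fun x => G.irrefl
  have hsym : ∀ x y, G.Adj x y → G.Adj y x := fun x y h => h.symm
  obtain ⟨D, dt, du, dv, dw, d₁, d₂⟩ : ∃ D : V → Fin 3, D t = 0 ∧ D u = 1 ∧ D v = 2 ∧
      D w = 1 ∧ D l₁ = 1 ∧ D l₂ = 2 :=
    ⟨fun x => if x = t then 0 else if x = u ∨ x = w ∨ x = l₁ then 1 else 2, by grind⟩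
  obtain ⟨c, hc, hc'⟩ := exists_coloring hlf D (by grind)
  have := sn_add_three_le c (t₁ := t) (t₂ := u) (t₃ := w) (by grind) (by grind) (by grind)
    h₁ h₂ htu.symm huv hwt hvw.symm (by grind) (by grind) (by grind) (by grind) (by grind)
    (by grind) (by grind) (by grind) (by grind)
  omega

/-- Adjacent vertices of the cycle do not both carry pendant vertices: recover `t` from `w` and `l₁`,
then `u` from `t` and `l₂`, then `v` from `u` and `w`. -/
theorem cycle_four_adjacent (hlt : Fintype.card V < sudokuNumber G 3 + 3)
    (hlf : ∀ l, ¬ NonLeaf G l → ∃ p, NonLeaf G p ∧ G.Adj p l) {t u v w : V}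
    (hN : ∀ x, NonLeaf G x ↔ x = t ∨ x = u ∨ x = v ∨ x = w)
    (htu : G.Adj t u) (huv : G.Adj u v) (hvw : G.Adj v w) (hwt : G.Adj w t)
    (htv : ¬ G.Adj t v) (huw : ¬ G.Adj u w) (htv' : t ≠ v) (huw' : u ≠ w) {l₁ l₂ : V}
    (h₁ : G.Adj t l₁) (h₂ : G.Adj u l₂)
    (n₁ : ¬ NonLeaf G l₁) (n₂ : ¬ NonLeaf G l₂) : False := by
  classical
  have hun : ∀ l x y, ¬ NonLeaf G l → G.Adj x l → G.Adj y l → x = y :=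
    fun l x y => eq_of_not_nonLeaf
  have := htu.ne
  have := huv.ne
  have := hvw.ne
  have := hwt.ne
  have hirr : ∀ x, ¬ G.Adj x x := fun x => G.irrefl
  have hsym : ∀ x y, G.Adj x y → G.Adj y x := fun x y h => h.symm
  obtain ⟨D, dt, du, dv, dw, d₁, d₂⟩ : ∃ D : V → Fin 3, D t = 0 ∧ D u = 1 ∧ D v = 0 ∧
      D w = 2 ∧ D l₁ = 1 ∧ D l₂ = 2 :=
    ⟨fun x => if x = t ∨ x = v then 0 else if x = u ∨ x = l₁ then 1 else 2, by grind⟩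
  obtain ⟨c, hc, hc'⟩ := exists_coloring hlf D (by grind)
  have := sn_add_three_le c (t₁ := t) (t₂ := u) (t₃ := v) (by grind) (by grind) (by grind)
    h₁ hwt.symm h₂ htu.symm huv.symm hvw (by grind) (by grind) (by grind) (by grind) (by grind)
    (by grind) (by grind) (by grind) (by grind)
  omega

/-- Opposite vertices of the cycle do not both carry pendant vertices: recover `t` and `v` from `w`
and their pendant vertices, then `u` from `t` and `v`. -/
theorem cycle_four_opposite (hlt : Fintype.card V < sudokuNumber G 3 + 3)
    (hlf : ∀ l, ¬ NonLeaf G l → ∃ p, NonLeaf G p ∧ G.Adj p l) {t u v w : V}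
    (hN : ∀ x, NonLeaf G x ↔ x = t ∨ x = u ∨ x = v ∨ x = w)
    (htu : G.Adj t u) (huv : G.Adj u v) (hvw : G.Adj v w) (hwt : G.Adj w t)
    (htv : ¬ G.Adj t v) (huw : ¬ G.Adj u w) (htv' : t ≠ v) (huw' : u ≠ w) {l₁ l₂ : V}
    (h₁ : G.Adj t l₁) (h₂ : G.Adj v l₂)
    (n₁ : ¬ NonLeaf G l₁) (n₂ : ¬ NonLeaf G l₂) : False := by
  classical
  have hun : ∀ l x y, ¬ NonLeaf G l → G.Adj x l → G.Adj y l → x = y :=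
    fun l x y => eq_of_not_nonLeaf
  have := htu.ne
  have := huv.ne
  have := hvw.ne
  have := hwt.ne
  have hirr : ∀ x, ¬ G.Adj x x := fun x => G.irrefl
  have hsym : ∀ x y, G.Adj x y → G.Adj y x := fun x y h => h.symm
  obtain ⟨D, dt, du, dv, dw, d₁, d₂⟩ : ∃ D : V → Fin 3, D t = 0 ∧ D u = 1 ∧ D v = 2 ∧
      D w = 1 ∧ D l₁ = 2 ∧ D l₂ = 0 :=
    ⟨fun x => if x = t ∨ x = l₂ then 0 else if x = u ∨ x = w then 1 else 2, by grind⟩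
  obtain ⟨c, hc, hc'⟩ := exists_coloring hlf D (by grind)
  have := sn_add_three_le c (t₁ := t) (t₂ := v) (t₃ := u) (by grind) (by grind) (by grind)
    h₁ hwt.symm h₂ hvw htu.symm huv (by grind) (by grind) (by grind) (by grind) (by grind)
    (by grind) (by grind) (by grind) (by grind)
  omega

theorem cycle_four_c4Pendant (hlt : Fintype.card V < sudokuNumber G 3 + 3)
    (hlf : ∀ l, ¬ NonLeaf G l → ∃ p, NonLeaf G p ∧ G.Adj p l) {t u v w : V}
    (hN : ∀ x, NonLeaf G x ↔ x = t ∨ x = u ∨ x = v ∨ x = w)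
    (htu : G.Adj t u) (huv : G.Adj u v) (hvw : G.Adj v w) (hwt : G.Adj w t)
    (htv : ¬ G.Adj t v) (huw : ¬ G.Adj u w) (htv' : t ≠ v) (huw' : u ≠ w) {l : V}
    (hl : G.Adj t l) (nl : ¬ NonLeaf G l) : Nonempty (G ≃g c4Pendant) := by
  classical
  have hun : ∀ l x y, ¬ NonLeaf G l → G.Adj x l → G.Adj y l → x = y :=
    fun l x y => eq_of_not_nonLeaf
  have htu' := htu.ne
  have huv' := huv.ne
  have hvw' := hvw.ne
  have hwt' := hwt.ne
  have hirr : ∀ x, ¬ G.Adj x x := fun x => G.irrefl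
  have hsym : ∀ x y, G.Adj x y → G.Adj y x := fun x y h => h.symm
  have ht : ∀ x, ¬ NonLeaf G x → G.Adj t x → x = l := fun x nx hx => by
    by_contra hxl
    exact cycle_four_pendants hlt hlf hN htu huv hvw hwt htv huw htv' huw' hx hl nx nl hxl
  have hu : ∀ x, ¬ NonLeaf G x → ¬ G.Adj u x := fun x nx hx =>
    cycle_four_adjacent hlt hlf hN htu huv hvw hwt htv huw htv' huw' hl hx nl nx
  have hv : ∀ x, ¬ NonLeaf G x → ¬ G.Adj v x := fun x nx hx =>
    cycle_four_opposite hlt hlf hN htu huv hvw hwt htv huw htv' huw' hl hx nl nx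
  have hw : ∀ x, ¬ NonLeaf G x → ¬ G.Adj w x := fun x nx hx =>
    cycle_four_adjacent hlt hlf (t := t) (u := w) (v := v) (w := u) (by grind) hwt.symm hvw.symm
      huv.symm htu.symm htv (fun h => huw h.symm) htv' huw'.symm hl hx nl nx
  refine nonempty_iso_of_bijective ![t, u, v, w, l] ⟨?_, ?_⟩ ?_
  · intro i j hij
    fin_cases i <;> fin_cases j <;> simp at hij ⊢ <;> grind
  · intro x
    by_cases hx : NonLeaf G x
    · rcases (hN x).1 hx with rfl | rfl | rfl | rfl
      exacts [⟨0, rfl⟩, ⟨1, rfl⟩, ⟨2, rfl⟩, ⟨3, rfl⟩]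
    · obtain ⟨p, hp, hpx⟩ := hlf x hx
      rcases (hN p).1 hp with rfl | rfl | rfl | rfl
      exacts [⟨4, (ht x hx hpx).symm⟩, (hu x hx hpx).elim, (hv x hx hpx).elim,
        (hw x hx hpx).elim]
  · intro i j
    fin_cases i <;> fin_cases j <;> simp [c4Pendant] <;> grind

/-- If the non-pendant vertices form a `C₄`, then there is at most one pendant vertex. -/
theorem cycle_four (hlt : Fintype.card V < sudokuNumber G 3 + 3)
    (hlf : ∀ l, ¬ NonLeaf G l → ∃ p, NonLeaf G p ∧ G.Adj p l) {t u v w : V}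
    (hN : ∀ x, NonLeaf G x ↔ x = t ∨ x = u ∨ x = v ∨ x = w)
    (htu : G.Adj t u) (huv : G.Adj u v) (hvw : G.Adj v w) (hwt : G.Adj w t)
    (htv : ¬ G.Adj t v) (huw : ¬ G.Adj u w) (htv' : t ≠ v) (huw' : u ≠ w) :
    Nonempty (G ≃g cycleGraph 4) ∨ Nonempty (G ≃g c4Pendant) := by
  classical
  have hirr : ∀ x, ¬ G.Adj x x := fun x => G.irrefl
  have hsym : ∀ x y, G.Adj x y → G.Adj y x := fun x y h => h.symm
  by_cases h : ∃ l, ¬ NonLeaf G l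
  · right
    obtain ⟨l, nl⟩ := h
    obtain ⟨p, hp, hpl⟩ := hlf l nl
    rcases (hN p).1 hp with rfl | rfl | rfl | rfl
    · exact cycle_four_c4Pendant hlt hlf hN htu huv hvw hwt htv huw htv' huw' hpl nl
    · exact cycle_four_c4Pendant hlt hlf (by grind) huv hvw hwt htu huw (fun h => htv h.symm)
        huw' htv'.symm hpl nl
    · exact cycle_four_c4Pendant hlt hlf (by grind) hvw hwt htu huv (fun h => htv h.symm)
        (fun h => huw h.symm) htv'.symm huw'.symm hpl nl
    · exact cycle_four_c4Pendant hlt hlf (by grind) hwt htu huv hvw (fun h => huw h.symm)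
        htv huw'.symm htv' hpl nl
  · left
    have htu' := htu.ne
    have huv' := huv.ne
    have hvw' := hvw.ne
    have hwt' := hwt.ne
    refine nonempty_iso_of_bijective ![t, u, v, w] ⟨?_, ?_⟩ ?_
    · intro i j hij
      fin_cases i <;> fin_cases j <;> simp at hij ⊢ <;> grind
    · intro x
      rcases (hN x).1 (not_not.1 fun hx => h ⟨x, hx⟩) with rfl | rfl | rfl | rfl
      exacts [⟨0, rfl⟩, ⟨1, rfl⟩, ⟨2, rfl⟩, ⟨3, rfl⟩]
    · intro i j
      fin_cases i <;> fin_cases j <;> simp [cycleGraph_adj] <;> grind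

end Four

/-! ### The classification -/

section Classification

variable {V : Type*} [Fintype V] {G : SimpleGraph V}

/-- The shape of `G` when the non-pendant vertices contain a path `t - u - v - w`. -/
theorem of_path_four (hlt : Fintype.card V < sudokuNumber G 3 + 3)
    (hlf : ∀ l, ¬ NonLeaf G l → ∃ p, NonLeaf G p ∧ G.Adj p l) (s : G.Coloring (Fin 2))
    (hside : ∀ x y z, NonLeaf G x → NonLeaf G y → NonLeaf G z → x ≠ y → x ≠ z → y ≠ z →
      s x = s y → s x = s z → False) {t u v w : V}
    (ht : NonLeaf G t) (hu : NonLeaf G u) (hv : NonLeaf G v) (hw : NonLeaf G w)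
    (htu : G.Adj t u) (huv : G.Adj u v) (hvw : G.Adj v w) (htv : t ≠ v) (huw : u ≠ w) :
    Nonempty (G ≃g pathGraph 6) ∨ Nonempty (G ≃g cycleGraph 4) ∨ Nonempty (G ≃g c4Pendant) := by
  have s₁ := s.valid htu
  have s₂ := s.valid huv
  have s₃ := s.valid hvw
  have stv : s t = s v := by omega
  have suw : s u = s w := by omega
  have htw : t ≠ w := by
    rintro rfl
    omega
  have hN : ∀ x, NonLeaf G x ↔ x = t ∨ x = u ∨ x = v ∨ x = w := by
    refine fun x => ⟨fun hx => ?_, by rintro (rfl | rfl | rfl | rfl) <;> assumption⟩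
    by_contra! h
    by_cases sx : s x = s t
    · exact hside x t v hx ht hv h.1 h.2.2.1 htv sx (sx.trans stv)
    · have sx' : s x = s u := by omega
      exact hside x u w hx hu hw h.2.1 h.2.2.2 huw sx' (sx'.trans suw)
  have ntv : ¬ G.Adj t v := fun h => s.valid h stv
  have nuw : ¬ G.Adj u w := fun h => s.valid h suw
  by_cases atw : G.Adj t w
  · exact Or.inr (cycle_four hlt hlf hN htu huv hvw atw.symm ntv nuw htv huw)
  · exact Or.inl (path_four hlt hlf hN htu huv hvw ntv nuw atw htv huw htw)

/-- The shape of `G` when the non-pendant vertices contain a path `u - v - w`. -/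
theorem of_path_three (hconn : G.Connected) (hlt : Fintype.card V < sudokuNumber G 3 + 3)
    (hlf : ∀ l, ¬ NonLeaf G l → ∃ p, NonLeaf G p ∧ G.Adj p l) (s : G.Coloring (Fin 2))
    (hside : ∀ x y z, NonLeaf G x → NonLeaf G y → NonLeaf G z → x ≠ y → x ≠ z → y ≠ z →
      s x = s y → s x = s z → False) {u v w : V}
    (hu : NonLeaf G u) (hv : NonLeaf G v) (hw : NonLeaf G w)
    (huv : G.Adj u v) (hvw : G.Adj v w) (huw : u ≠ w) :
    Nonempty (G ≃g pathGraph 5) ∨ Nonempty (G ≃g pathGraph 6) ∨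
      Nonempty (G ≃g cycleGraph 4) ∨ Nonempty (G ≃g c4Pendant) ∨
      (∃ l : ℕ, 1 < l ∧ Nonempty (G ≃g p4Pendants l)) ∨ Nonempty (G ≃g p5CentralPendant) := by
  have s₂ := s.valid huv
  have s₃ := s.valid hvw
  have suw : s u = s w := by omega
  have nuw : ¬ G.Adj u w := fun h => s.valid h suw
  by_cases h : ∀ x, NonLeaf G x → x = u ∨ x = v ∨ x = w
  · rcases path_three hlt hlf (u := u) (v := v) (w := w)
      (fun x => ⟨h x, by rintro (rfl | rfl | rfl) <;> assumption⟩) huv hvw nuw huw with e | e | e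
    · exact Or.inl e
    · exact Or.inr (Or.inr (Or.inr (Or.inr (Or.inl e))))
    · exact Or.inr (Or.inr (Or.inr (Or.inr (Or.inr e))))
  · obtain ⟨t, ht, hne, htuw⟩ : ∃ t, NonLeaf G t ∧ ¬ (t = u ∨ t = v ∨ t = w) ∧
        (G.Adj t u ∨ G.Adj t w) := by
      by_contra! hn
      refine h (forall_nonLeaf_of_closed hconn (Or.inl rfl) fun x y hx hy hxy => ?_)
      by_contra hyM
      have := hn y hy (by push Not at hyM; exact hyM)
      rcases hx with rfl | rfl | rfl
      · exact this.1 hxy.symm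
      · have s₁ := s.valid hxy
        exact hside y u w hy hu hw (fun e => hyM (Or.inl e)) (fun e => hyM (Or.inr (Or.inr e)))
          huw (by omega) (by omega)
      · exact this.2 hxy.symm
    push Not at hne
    have : Nonempty (G ≃g pathGraph 6) ∨ Nonempty (G ≃g cycleGraph 4) ∨
        Nonempty (G ≃g c4Pendant) := by
      rcases htuw with htu | htw
      · exact of_path_four hlt hlf s hside ht hu hv hw htu huv hvw hne.2.1 huw
      · exact of_path_four hlt hlf s hside ht hw hv hu htw hvw.symm huv.symm hne.2.1 huw.symm
    rcases this with e | e | e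
    · exact Or.inr (Or.inl e)
    · exact Or.inr (Or.inr (Or.inl e))
    · exact Or.inr (Or.inr (Or.inr (Or.inl e)))

/-- The classification from the freed set `T` of an optimal partial coloring. -/
theorem classification (hconn : G.Connected) (hlt : Fintype.card V < sudokuNumber G 3 + 3)
    (s : G.Coloring (Fin 2)) {c : G.Coloring (Fin 3)} {T : Finset V} (hT : Rigid G c T)
    (hT2 : T.card = 2) :
    (∃ m n : ℕ, 1 ≤ m ∧ 1 ≤ n ∧ (m, n) ≠ (1, 1) ∧ Nonempty (G ≃g bistar m n)) ∨
      Nonempty (G ≃g pathGraph 5) ∨ Nonempty (G ≃g pathGraph 6) ∨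
      Nonempty (G ≃g cycleGraph 4) ∨ Nonempty (G ≃g c4Pendant) ∨
      (∃ l : ℕ, 1 < l ∧ Nonempty (G ≃g p4Pendants l)) ∨ Nonempty (G ≃g p5CentralPendant) := by
  classical
  have hside : ∀ x y z, NonLeaf G x → NonLeaf G y → NonLeaf G z → x ≠ y → x ≠ z → y ≠ z →
      s x = s y → s x = s z → False := fun x y z hx hy hz hxy hxz hyz h₁ h₂ => by
    have := sn_add_three_le_of_side s hxy hxz hyz h₁ h₂ hx hy hz
    omega
  obtain ⟨u, t, hut, rfl⟩ := Finset.card_eq_two.1 hT2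
  have hu : NonLeaf G u := hT.nonLeaf (by simp)
  have ht : NonLeaf G t := hT.nonLeaf (by simp)
  have hlf := exists_nonLeaf_adj hconn hu
  obtain ⟨v, hv, huv⟩ : ∃ v, NonLeaf G v ∧ G.Adj u v := by
    by_contra! hn
    exact hut (forall_nonLeaf_of_closed hconn (M := fun x => x = u) rfl
      (fun x y hx hy hxy => (hn y hy (hx ▸ hxy)).elim) t ht).symm
  by_cases h : ∀ x, NonLeaf G x → x = u ∨ x = v
  · left
    have htv : t = v := (h t ht).resolve_left hut.symm
    exact bistar_of_nonLeaf hlf (u := u) (v := v)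
      (fun x => ⟨h x, by rintro (rfl | rfl) <;> assumption⟩) huv hT (by simp) (by simp [htv])
  · right
    obtain ⟨w, hw, hne, hwuv⟩ : ∃ w, NonLeaf G w ∧ ¬ (w = u ∨ w = v) ∧
        (G.Adj u w ∨ G.Adj v w) := by
      by_contra! hn
      refine h (forall_nonLeaf_of_closed hconn (Or.inl rfl) fun x y hx hy hxy => ?_)
      by_contra hyM
      have := hn y hy (by push Not at hyM; exact hyM)
      rcases hx with rfl | rfl
      · exact this.1 hxy
      · exact this.2 hxy
    push Not at hne
    rcases hwuv with huw | hvw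
    · exact of_path_three hconn hlt hlf s hside hv hu hw huv.symm huw hne.2.symm
    · exact of_path_three hconn hlt hlf s hside hu hv hw huv hvw hne.1.symm

end Classification

/-- For a finite connected bipartite graph `G`: `sn(G,3) = n(G) - 2` iff `G` is a bistar
`B_{m,n}` with `(m,n) ≠ (1,1)`, the path `P₅` or `P₆`, the cycle `C₄`, `C₄` with one pendant
vertex, `P₄` with `l > 1` pendant vertices at one end, or `P₅` with a pendant vertex at its
central vertex. -/
theorem sudokuNumber_three_eq_card_sub_two_iff {V : Type*} [Fintype V] (G : SimpleGraph V)
    (hconn : G.Connected) (hbip : G.Colorable 2) :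
    sudokuNumber G 3 = Fintype.card V - 2 ↔
      (∃ m n : ℕ, 1 ≤ m ∧ 1 ≤ n ∧ (m, n) ≠ (1, 1) ∧ Nonempty (G ≃g bistar m n)) ∨
      Nonempty (G ≃g pathGraph 5) ∨
      Nonempty (G ≃g pathGraph 6) ∨
      Nonempty (G ≃g cycleGraph 4) ∨
      Nonempty (G ≃g c4Pendant) ∨
      (∃ l : ℕ, 1 < l ∧ Nonempty (G ≃g p4Pendants l)) ∨
      Nonempty (G ≃g p5CentralPendant) := by
  constructor
  · intro h
    obtain ⟨c, T, hT, hcard⟩ := exists_rigid_eq (hbip.mono (by norm_num : 2 ≤ 3))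
    have hpos : 0 < Fintype.card V := Fintype.card_pos_iff.2 hconn.nonempty
    obtain ⟨t, ht⟩ : T.Nonempty := Finset.card_pos.1 (by omega)
    -- A vertex with two neighbours gives `3 ≤ n`, so the subtraction `n - 2` does not truncate.
    obtain ⟨x, y, hxy, hx, hy⟩ := hT.nonLeaf ht
    have h3 : 2 < Fintype.card V := Fintype.two_lt_card_iff.2 ⟨t, x, y, hx.ne, hy.ne, hxy⟩
    exact classification hconn (by omega) hbip.some hT (by omega)
  · rintro (⟨m, n, hm, hn, hmn, ⟨e⟩⟩ | ⟨⟨e⟩⟩ | ⟨⟨e⟩⟩ | ⟨⟨e⟩⟩ | ⟨⟨e⟩⟩ | ⟨l, hl, ⟨e⟩⟩ | ⟨⟨e⟩⟩)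
    · exact sn_of_iso e hbip (bistar_sn_le hm hn hmn) bistar_card_le
    · exact sn_of_iso e hbip pathGraph_five_sn_le pathGraph_five_card_le
    · exact sn_of_iso e hbip pathGraph_six_sn_le pathGraph_six_card_le
    · exact sn_of_iso e hbip cycleGraph_four_sn_le cycleGraph_four_card_le
    · exact sn_of_iso e hbip c4Pendant_sn_le c4Pendant_card_le
    · exact sn_of_iso e hbip (p4Pendants_sn_le hl) p4Pendants_card_le
    · exact sn_of_iso e hbip p5CentralPendant_sn_le p5CentralPendant_card_le
end
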